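/- Let G be a graph and x, y two distinct vertices of G. Suppose G + xy is 2-connected, every vertex of G other than x and y has degree at least 4 in G, and G - x is triangle-free. Then G contains three (x,y)-paths P1, P2, P3 with ||P1|| > ||P2|| > ||P3|| ≥ 2 such that either (||P1||-||P2||, ||P2||-||P3||) = (2,2), or {||P1||-||P2||, ||P2||-||P3||} = {1,2}. -/

import Mathlib

open SimpleGraph

/-- `G` is `k`-connected: more than `k` vertices, and deleting any set of fewer than
`k` vertices leaves a connected graph. -/
def KConnected {V : Type*} (G : SimpleGraph V) (k : ℕ) : Prop :=
  k < Nat.card V ∧ ∀ S : Set V, S.Finite → S.ncard < k → (G.induce Sᶜ).Connected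

/-- `G + xy`: the graph `G` with the edge `xy` added (equal to `G` if already present). -/
def AddEdge {V : Type*} (G : SimpleGraph V) (x y : V) : SimpleGraph V :=
  G ⊔ SimpleGraph.fromEdgeSet {s(x, y)}

/-- `G` has a cycle of length `n`. -/
def HasCycleLength {V : Type*} (G : SimpleGraph V) (n : ℕ) : Prop :=
  ∃ (v : V) (c : G.Walk v v), c.IsCycle ∧ c.length = n

/-- `G` contains `k` cycles of consecutive lengths. -/
def HasConsecCycles {V : Type*} (G : SimpleGraph V) (k : ℕ) : Prop :=
  ∃ m : ℕ, ∀ i < k, HasCycleLength G (m + i)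
/-- Three path lengths `a > b > c ≥ 2` are *good* if they form an arithmetic progression
with common difference 2, or the two differences are `{1, 2}` in some order. -/
def GoodTriple (a b c : ℕ) : Prop :=
  2 ≤ c ∧ c < b ∧ b < a ∧
    ((a = b + 2 ∧ b = c + 2) ∨ (a = b + 1 ∧ b = c + 2) ∨ (a = b + 2 ∧ b = c + 1))

namespace GoodPaths

variable {V : Type*}

/-- There is a path of length `n` from `a` to `b` in `G` with all vertices in `S`. -/
def PathIn (G : SimpleGraph V) (S : Set V) (a b : V) (n : ℕ) : Prop :=
  ∃ p : G.Walk a b, p.IsPath ∧ p.length = n ∧ ∀ v ∈ p.support, v ∈ S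

/-- The only possible neighbours of `A` outside `A` lie in `T`. -/
def NbrSub (G : SimpleGraph V) (A T : Set V) : Prop :=
  ∀ a ∈ A, ∀ b, G.Adj a b → b ∈ A ∨ b ∈ T

/-- The vertices reachable from `v` inside `U`. -/
def comp (G : SimpleGraph V) (U : Set V) (v : V) : Set V :=
  {w | ∃ n, PathIn G U v w n}

section Paths

variable {G H : SimpleGraph V} {S T U W A D : Set V} {a b c v w x y : V} {m n : ℕ}

lemma PathIn.nil (h : a ∈ S) : PathIn G S a a 0 :=
  ⟨.nil, by simp, by simp, by simpa using h⟩

lemma PathIn.mono (h : PathIn G S a b n) (hST : S ⊆ T) : PathIn G T a b n := by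
  obtain ⟨p, hp, hl, hs⟩ := h
  exact ⟨p, hp, hl, fun v hv => hST (hs v hv)⟩

lemma PathIn.symm (h : PathIn G S a b n) : PathIn G S b a n := by
  obtain ⟨p, hp, hl, hs⟩ := h
  exact ⟨p.reverse, hp.reverse, by simpa using hl, fun v hv => hs v (by simpa using hv)⟩

lemma PathIn.left_mem (h : PathIn G S a b n) : a ∈ S := by
  obtain ⟨p, -, -, hs⟩ := h
  exact hs a p.start_mem_support

lemma PathIn.right_mem (h : PathIn G S a b n) : b ∈ S := h.symm.left_mem

lemma PathIn.cons (hp : PathIn G S b c n) (h : G.Adj a b) (ha : a ∉ S) :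
    PathIn G (insert a S) a c (n + 1) := by
  obtain ⟨p, hp, hl, hs⟩ := hp
  refine ⟨.cons h p, ?_, by simp [hl], ?_⟩
  · rw [SimpleGraph.Walk.cons_isPath_iff]
    exact ⟨hp, fun hm => ha (hs a hm)⟩
  · intro v hv
    rw [SimpleGraph.Walk.support_cons, List.mem_cons] at hv
    rcases hv with rfl | hv
    · exact Set.mem_insert _ _
    · exact Set.mem_insert_of_mem _ (hs v hv)

lemma PathIn.uncons (h : PathIn G S a c n) (hac : a ≠ c) :
    ∃ b m, n = m + 1 ∧ G.Adj a b ∧ PathIn G (S \ {a}) b c m := by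
  obtain ⟨p, hp, hl, hs⟩ := h
  cases p with
  | nil => exact absurd rfl hac
  | cons hadj q =>
    rw [SimpleGraph.Walk.cons_isPath_iff] at hp
    refine ⟨_, q.length, by simpa using hl.symm, hadj, q, hp.1, rfl, fun v hv => ⟨?_, ?_⟩⟩
    · exact hs v (by simp [hv])
    · rintro rfl
      exact hp.2 hv

lemma PathIn.induct {motive : Set V → V → ℕ → Prop} (hnil : ∀ S, c ∈ S → motive S c 0)
    (hcons : ∀ S a b m, a ≠ c → a ∈ S → G.Adj a b → PathIn G (S \ {a}) b c m →
      motive (S \ {a}) b m → motive S a (m + 1)) :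
    ∀ n S a, PathIn G S a c n → motive S a n := by
  intro n
  induction n with
  | zero =>
    rintro S a ⟨p, hp, hl, hs⟩
    cases p with
    | nil => exact hnil S (hs _ (by simp))
    | cons hadj q => simp at hl
  | succ n ih =>
    intro S a h
    have hac : a ≠ c := by
      rintro rfl
      obtain ⟨p, hp, hl, hs⟩ := h
      rw [SimpleGraph.Walk.isPath_iff_nil] at hp
      simp [SimpleGraph.Walk.length_eq_zero_iff.2 hp] at hl
    obtain ⟨b, m, hm, hadj, hp⟩ := h.uncons hac
    obtain rfl : n = m := by omega
    exact hcons S a b n hac h.left_mem hadj hp (ih _ _ hp)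

lemma PathIn.append (h₁ : PathIn G S a b m) (h₂ : PathIn G T b c n)
    (hd : ∀ v ∈ S, v ∈ T → v = b) : PathIn G (S ∪ T) a c (m + n) := by
  revert hd
  refine PathIn.induct (c := b) (G := G)
    (motive := fun S a m => (∀ v ∈ S, v ∈ T → v = b) → PathIn G (S ∪ T) a c (m + n)) ?_ ?_ m S a h₁
  · intro S _ _
    rw [zero_add]
    exact h₂.mono Set.subset_union_right
  · intro S a b' m hab haS hadj _ ih hd
    have := (ih fun v hv hT => hd v hv.1 hT).cons hadj (a := a) (by
      rintro (h | h)
      · exact h.2 rfl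
      · exact hab (hd a haS h))
    rw [add_right_comm]
    refine this.mono ?_
    rintro v (rfl | h | h)
    · exact Or.inl haS
    · exact Or.inl h.1
    · exact Or.inr h

lemma PathIn.transfer {C : Set V} (h : PathIn H S a b n) (ha : a ∈ C)
    (hstep : ∀ u ∈ C, ∀ v ∈ S, H.Adj u v → v ∈ C ∧ G.Adj u v) : PathIn G (S ∩ C) a b n := by
  revert ha hstep
  refine PathIn.induct (c := b) (G := H) (motive := fun S a n => a ∈ C →
    (∀ u ∈ C, ∀ v ∈ S, H.Adj u v → v ∈ C ∧ G.Adj u v) → PathIn G (S ∩ C) a b n) ?_ ?_ n S a h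
  · intro S hb ha _
    exact .nil ⟨hb, ha⟩
  · intro S a b' m hab haS hadj hp ih ha hstep
    have hb' := hstep a ha b' hp.left_mem.1 hadj
    refine ((ih hb'.1 fun u hu v hv => hstep u hu v hv.1).cons hb'.2 (fun h => h.1.2 rfl)).mono ?_
    rintro v (rfl | h)
    · exact ⟨haS, ha⟩
    · exact ⟨h.1.1, h.2⟩

/-- A walk starting in a set closed under adjacency inside `S` ends in that set. -/
lemma PathIn.mem_of_closed (h : PathIn G S a b n) (ha : a ∈ A)
    (hA : ∀ u ∈ A, ∀ v ∈ S, G.Adj u v → v ∈ A) : b ∈ A :=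
  (h.transfer (G := G) ha fun u hu v hv huv => ⟨hA u hu v hv huv, huv⟩).right_mem.2

/-- Stop a path the first time it meets `W`. -/
lemma PathIn.first_hit (h : PathIn G S a b n) (hb : b ∈ W) :
    ∃ w ∈ W, ∃ m, PathIn G (S \ (W \ {w})) a w m := by
  refine PathIn.induct (c := b) (G := G)
    (motive := fun S a _ => ∃ w ∈ W, ∃ m, PathIn G (S \ (W \ {w})) a w m) ?_ ?_ n S a h
  · intro S hS
    exact ⟨b, hb, 0, .nil ⟨hS, by simp⟩⟩
  · intro S a b' m hab haS hadj hp ih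
    by_cases haW : a ∈ W
    · exact ⟨a, haW, 0, .nil ⟨haS, by simp⟩⟩
    · obtain ⟨w, hw, m', hp'⟩ := ih
      refine ⟨w, hw, m' + 1, (hp'.cons hadj (fun h => h.1.2 rfl)).mono ?_⟩
      rintro v (rfl | h)
      · exact ⟨haS, fun h => haW h.1⟩
      · exact ⟨h.1.1, h.2⟩

/-- Stop a path just before it enters `D`. -/
lemma PathIn.enter (h : PathIn G S a b n) (ha : a ∉ D) (hb : b ∈ D) (hD : NbrSub G D T) :
    ∃ t ∈ T, ∃ m, PathIn G (S \ D) a t m := by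
  revert ha
  refine PathIn.induct (c := b) (G := G)
    (motive := fun S a _ => a ∉ D → ∃ t ∈ T, ∃ m, PathIn G (S \ D) a t m) ?_ ?_ n S a h
  · intro S _ h
    exact absurd hb h
  · intro S a b' m hab haS hadj hp ih ha
    by_cases hb' : b' ∈ D
    · rcases hD b' hb' a hadj.symm with h | h
      · exact absurd h ha
      · exact ⟨a, h, 0, .nil ⟨haS, ha⟩⟩
    · obtain ⟨t, ht, m', hp'⟩ := ih hb'
      refine ⟨t, ht, m' + 1, (hp'.cons hadj (fun h => h.1.2 rfl)).mono ?_⟩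
      rintro v (rfl | h)
      · exact ⟨haS, ha⟩
      · exact ⟨h.1.1, h.2⟩

/-- Restrict a path to its own support, at every vertex of which it can be split. -/
lemma PathIn.exact_support (h : PathIn G S a b n) :
    ∃ S₀ ⊆ S, PathIn G S₀ a b n ∧ ∀ v ∈ S₀, ∃ S₁ S₂ m₁ m₂, S₁ ⊆ S₀ ∧ S₂ ⊆ S₀ ∧
      PathIn G S₁ a v m₁ ∧ PathIn G S₂ v b m₂ ∧ ∀ w ∈ S₁, w ∈ S₂ → w = v := by
  refine PathIn.induct (c := b) (G := G)
    (motive := fun S a n => ∃ S₀ ⊆ S, PathIn G S₀ a b n ∧ ∀ v ∈ S₀, ∃ S₁ S₂ m₁ m₂,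
      S₁ ⊆ S₀ ∧ S₂ ⊆ S₀ ∧ PathIn G S₁ a v m₁ ∧ PathIn G S₂ v b m₂ ∧
        ∀ w ∈ S₁, w ∈ S₂ → w = v) ?_ ?_ n S a h
  · intro S hS
    refine ⟨{b}, by simpa using hS, .nil rfl, ?_⟩
    rintro v rfl
    exact ⟨{v}, {v}, 0, 0, subset_rfl, subset_rfl, .nil rfl, .nil rfl, fun w hw _ => hw⟩
  · rintro S a b' m hab haS hadj - ⟨S₀, hS₀, hp, hsplit⟩
    have ha : a ∉ S₀ := fun h => (hS₀ h).2 rfl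
    refine ⟨insert a S₀, ?_, hp.cons hadj ha, ?_⟩
    · rintro v (rfl | h)
      · exact haS
      · exact (hS₀ h).1
    · rintro v (rfl | hv)
      · exact ⟨{v}, insert v S₀, 0, m + 1, by simp, subset_rfl, .nil rfl, hp.cons hadj ha,
          fun w hw _ => hw⟩
      · obtain ⟨S₁, S₂, m₁, m₂, h₁, h₂, p₁, p₂, hd⟩ := hsplit v hv
        refine ⟨insert a S₁, S₂, m₁ + 1, m₂, Set.insert_subset_insert h₁,
          h₂.trans (Set.subset_insert _ _), p₁.cons hadj fun h => ha (h₁ h), p₂, ?_⟩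
        rintro w (rfl | hw) hw₂
        · exact absurd (h₂ hw₂) ha
        · exact hd w hw hw₂

lemma comp_subset : comp G U v ⊆ U := fun _ ⟨_, h⟩ => h.right_mem

lemma mem_comp_self (h : v ∈ U) : v ∈ comp G U v := ⟨0, .nil h⟩

lemma mem_comp_of_adj (hw : w ∈ comp G U v) (h : G.Adj w a) (ha : a ∈ U) : a ∈ comp G U v := by
  obtain ⟨n, hn⟩ := hw
  obtain ⟨S₀, hS₀, hp, hsplit⟩ := hn.exact_support
  by_cases haS : a ∈ S₀
  · obtain ⟨S₁, -, m₁, -, h₁, -, p₁, -⟩ := hsplit a haS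
    exact ⟨m₁, p₁.mono (h₁.trans hS₀)⟩
  · exact ⟨n + 1, (hp.symm.cons h.symm haS).symm.mono (Set.insert_subset ha hS₀)⟩

lemma pathIn_comp (hw : w ∈ comp G U v) : ∃ n, PathIn G (comp G U v) v w n := by
  obtain ⟨n, hn⟩ := hw
  obtain ⟨S₀, hS₀, hp, hsplit⟩ := hn.exact_support
  refine ⟨n, hp.mono fun u hu => ?_⟩
  obtain ⟨S₁, -, m₁, -, h₁, -, p₁, -⟩ := hsplit u hu
  exact ⟨m₁, p₁.mono (h₁.trans hS₀)⟩

/-- A nonempty subset of a component closed under adjacency is the whole component. -/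
lemma comp_subset_of_closed (hA : A ⊆ comp G U v) (hne : A.Nonempty)
    (hcl : ∀ a ∈ A, ∀ b ∈ comp G U v, G.Adj a b → b ∈ A) : comp G U v ⊆ A := by
  obtain ⟨a, ha⟩ := hne
  obtain ⟨n, hn⟩ := pathIn_comp (hA ha)
  have hv : v ∈ A := hn.symm.mem_of_closed ha hcl
  intro w hw
  obtain ⟨m, hm⟩ := pathIn_comp hw
  exact hm.mem_of_closed hv hcl

end Paths

/-- Two lengths satisfying `L` differ by one or two. -/
def Good2 (L : ℕ → Prop) : Prop :=
  ∃ a b, L a ∧ L b ∧ (a = b + 1 ∨ a = b + 2)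

/-- Three lengths satisfying `L` have successive differences `(2, 2)`, `(1, 2)` or `(2, 1)`. -/
def Good3 (L : ℕ → Prop) : Prop :=
  ∃ a b c, L a ∧ L b ∧ L c ∧
    ((a = b + 2 ∧ b = c + 2) ∨ (a = b + 1 ∧ b = c + 2) ∨ (a = b + 2 ∧ b = c + 1))

def Good (k : ℕ) (L : ℕ → Prop) : Prop :=
  (k = 2 → Good2 L) ∧ (k = 3 → Good3 L)

lemma Good.shift {k c : ℕ} {L L' : ℕ → Prop} (h : Good k L') (hL : ∀ m, L' m → L (m + c)) :
    Good k L := by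
  refine ⟨fun hk => ?_, fun hk => ?_⟩
  · obtain ⟨a, b, ha, hb, hab⟩ := h.1 hk
    exact ⟨a + c, b + c, hL _ ha, hL _ hb, by omega⟩
  · obtain ⟨a, b, d, ha, hb, hd, hab⟩ := h.2 hk
    exact ⟨a + c, b + c, d + c, hL _ ha, hL _ hb, hL _ hd, by omega⟩

lemma Good.unshift {k c : ℕ} {L L' : ℕ → Prop} (h : Good k L')
    (hL : ∀ n, L' n → ∃ m, n = m + c ∧ L m) : Good k L := by
  refine ⟨fun hk => ?_, fun hk => ?_⟩
  · obtain ⟨a, b, ha, hb, hab⟩ := h.1 hk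
    obtain ⟨a, rfl, ha'⟩ := hL a ha
    obtain ⟨b, rfl, hb'⟩ := hL b hb
    exact ⟨a, b, ha', hb', by omega⟩
  · obtain ⟨a, b, d, ha, hb, hd, hab⟩ := h.2 hk
    obtain ⟨a, rfl, ha'⟩ := hL a ha
    obtain ⟨b, rfl, hb'⟩ := hL b hb
    obtain ⟨d, rfl, hd'⟩ := hL d hd
    exact ⟨a, b, d, ha', hb', hd', by omega⟩

/-- Two lengths, each of which can be extended in two ways, give three lengths. -/
lemma Good.two_to_three {c : ℕ} {L L' : ℕ → Prop} (h : Good 2 L')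
    (hL : ∀ m, L' m → L (m + c) ∧ L (m + c + 2)) : Good 3 L := by
  refine ⟨by omega, fun _ => ?_⟩
  obtain ⟨a, b, ha, hb, hab⟩ := h.1 rfl
  exact ⟨_, _, _, (hL a ha).2, (hL a ha).1, (hL b hb).1, by omega⟩

/-- Every triangle of `G` contains `r`. -/
def TF (G : SimpleGraph V) (r : V) : Prop :=
  ∀ a b c, a ≠ r → b ≠ r → c ≠ r → G.Adj a b → G.Adj b c → G.Adj a c → False

def TFon (G : SimpleGraph V) (S : Set V) : Prop :=
  ∀ a ∈ S, ∀ b ∈ S, ∀ c ∈ S, G.Adj a b → G.Adj b c → G.Adj a c → False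

lemma TF.tfon {G : SimpleGraph V} {r : V} {S : Set V} (h : TF G r) (hr : r ∉ S) : TFon G S :=
  fun a ha b hb c hc =>
    h a b c (ne_of_mem_of_not_mem ha hr) (ne_of_mem_of_not_mem hb hr) (ne_of_mem_of_not_mem hc hr)

/-- A graph with roots `x`, `y` and other vertices `I`, in which `z` may have small degree and
the sets contained in `E` may be separated by one vertex. -/
structure Rooted (k : ℕ) (E : Set V) (G : SimpleGraph V) (I : Set V) (x y z : V) : Prop where
  ne : x ≠ y
  x_notMem : x ∉ I
  y_notMem : y ∉ I
  adj_mem : ∀ {a b}, G.Adj a b → a ∈ I ∨ a = x ∨ a = y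
  not_adj : ¬ G.Adj x y
  cut : ∀ A ⊆ I, ¬ A ⊆ E → ∀ p, ¬ NbrSub G A {p}
  deg : ∀ v ∈ I, v ≠ z → k + 1 ≤ (G.neighborSet v).ncard
  nz : ¬ I ⊆ {z}
  tf : k = 3 → TF G x ∨ TF G y

/-- All rooted graphs with fewer than `N` non-root vertices have good path lengths. -/
def Solved (V : Type*) (k N : ℕ) : Prop :=
  ∀ (G : SimpleGraph V) (I : Set V) (x y z : V), Rooted k ∅ G I x y z → I.ncard < N →
    Good k (PathIn G Set.univ x y)

section Glue

variable {G H : SimpleGraph V} {I C P Q E A D S T : Set V} {a b v w x y z e p q : V} {k m n N : ℕ}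

lemma PathIn.mono_graph (h : PathIn H S a b n) (hle : ∀ u v, H.Adj u v → G.Adj u v) :
    PathIn G S a b n :=
  (h.transfer (G := G) (Set.mem_univ a) fun u _ v _ huv => ⟨Set.mem_univ v, hle u v huv⟩).mono
    Set.inter_subset_left

lemma Rooted.symm (h : Rooted k E G I x y z) : Rooted k E G I y x z where
  ne := h.ne.symm
  x_notMem := h.y_notMem
  y_notMem := h.x_notMem
  adj_mem hab := (h.adj_mem hab).imp_right Or.symm
  not_adj hyx := h.not_adj hyx.symm
  cut := h.cut
  deg := h.deg
  nz := h.nz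
  tf hk := (h.tf hk).symm

/-- The graph induced by `G` on `C` with `P` contracted to `x` and `Q` contracted to `y`. -/
def glue (G : SimpleGraph V) (C P Q : Set V) (x y : V) : SimpleGraph V :=
  SimpleGraph.fromRel fun a b =>
    b ∈ C ∧ (a ∈ C ∧ G.Adj a b ∨ (a = x ∧ ∃ p ∈ P, G.Adj p b) ∨ (a = y ∧ ∃ q ∈ Q, G.Adj q b))

/-- There is a path of length `m` inside `C` from a neighbour of `P` to a neighbour of `Q`. -/
def Conn (G : SimpleGraph V) (C P Q : Set V) (m : ℕ) : Prop :=
  ∃ p ∈ P, ∃ q ∈ Q, ∃ v w, G.Adj p v ∧ G.Adj w q ∧ PathIn G C v w m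

lemma glue_adj_iff (hx : x ∉ C) (hy : y ∉ C) (hb : b ∈ C) :
    (glue G C P Q x y).Adj a b ↔
      a ∈ C ∧ G.Adj a b ∨ (a = x ∧ ∃ p ∈ P, G.Adj p b) ∨ (a = y ∧ ∃ q ∈ Q, G.Adj q b) := by
  rw [glue, SimpleGraph.fromRel_adj]
  constructor
  · rintro ⟨-, h | ⟨ha, ⟨-, h⟩ | ⟨rfl, -⟩ | ⟨rfl, -⟩⟩⟩
    · exact h.2
    · exact Or.inl ⟨ha, h.symm⟩
    · exact absurd hb hx
    · exact absurd hb hy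
  · intro h
    refine ⟨?_, Or.inl ⟨hb, h⟩⟩
    rintro rfl
    rcases h with ⟨-, h⟩ | ⟨rfl, -⟩ | ⟨rfl, -⟩
    · exact h.ne rfl
    · exact hx hb
    · exact hy hb

lemma glue_adj_mem (h : (glue G C P Q x y).Adj a b) : a ∈ C ∨ b ∈ C := by
  rw [glue, SimpleGraph.fromRel_adj] at h
  rcases h with ⟨-, h | h⟩
  · exact Or.inr h.1
  · exact Or.inl h.1

lemma glue_adj_mem_left (h : (glue G C P Q x y).Adj a b) : a ∈ C ∨ a = x ∨ a = y := by
  rw [glue, SimpleGraph.fromRel_adj] at h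
  rcases h with ⟨-, ⟨-, h | h | h⟩ | h⟩
  · exact Or.inl h.1
  · exact Or.inr (Or.inl h.1)
  · exact Or.inr (Or.inr h.1)
  · exact Or.inl h.1

lemma conn_of_glue (hxy : x ≠ y) (hx : x ∉ C) (hy : y ∉ C)
    (h : PathIn (glue G C P Q x y) Set.univ x y n) : ∃ m, n = m + 2 ∧ Conn G C P Q m := by
  obtain ⟨v, l, rfl, hxv, h⟩ := h.uncons hxy
  have hv : v ∈ C := (glue_adj_mem hxv).resolve_left hx
  have hvy : y ≠ v := by rintro rfl; exact hy hv
  obtain ⟨w, m, rfl, hyw, h⟩ := h.symm.uncons hvy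
  have hw : w ∈ C := (glue_adj_mem hyw).resolve_left hy
  rw [glue_adj_iff hx hy hv] at hxv
  rw [glue_adj_iff hx hy hw] at hyw
  obtain ⟨p, hp, hpv⟩ : ∃ p ∈ P, G.Adj p v := by
    rcases hxv with h | h | h
    · exact absurd h.1 hx
    · exact h.2
    · exact absurd h.1 hxy
  obtain ⟨q, hq, hqw⟩ : ∃ q ∈ Q, G.Adj q w := by
    rcases hyw with h | h | h
    · exact absurd h.1 hy
    · exact absurd h.1.symm hxy
    · exact h.2
  refine ⟨m, rfl, p, hp, q, hq, v, w, hpv, hqw.symm, ?_⟩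
  refine (h.symm.transfer (G := G) (C := C) hv ?_).mono Set.inter_subset_right
  intro u hu u' hu' huu'
  rw [SimpleGraph.adj_comm, glue_adj_iff hx hy hu] at huu'
  rcases huu' with h | h | h
  · exact ⟨h.1, h.2.symm⟩
  · exact absurd h.1 hu'.1.2
  · exact absurd h.1 hu'.2

lemma glue_comm : glue G C P Q x y = glue G C Q P y x := by
  unfold glue
  congr 1
  ext a b
  exact and_congr_right fun _ => or_congr_right or_comm

lemma glue_tf (hx : x ∉ C) (hy : y ∉ C) (htf : TFon G (insert q C)) :
    TF (glue G C P {q} x y) x := by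
  intro a b c ha hb hc hab hbc hac
  have step : ∀ {a b}, a ≠ x → b ≠ x → (glue G C P {q} x y).Adj a b → b ∈ C →
      (a ∈ C ∧ G.Adj a b) ∨ (a = y ∧ G.Adj q b) := by
    intro a b ha _ hab hb
    rw [glue_adj_iff hx hy hb] at hab
    rcases hab with h | h | ⟨h, q', rfl, hq'⟩
    · exact Or.inl h
    · exact absurd h.1 ha
    · exact Or.inr ⟨h, hq'⟩
  by_cases hbC : b ∈ C
  · by_cases hcC : c ∈ C
    · rcases step ha hb hab hbC with ⟨haC, h⟩ | ⟨rfl, h⟩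
      · rcases step hb hc hbc hcC with ⟨-, h'⟩ | ⟨rfl, -⟩
        · rcases step ha hc hac hcC with ⟨-, h''⟩ | ⟨rfl, -⟩
          · exact htf a (by simp [haC]) b (by simp [hbC]) c (by simp [hcC]) h h' h''
          · exact hy haC
        · exact hy hbC
      · rcases step hb hc hbc hcC with ⟨-, h'⟩ | ⟨rfl, -⟩
        · rcases step ha hc hac hcC with ⟨haC, -⟩ | ⟨-, h''⟩
          · exact hy haC
          · exact htf q (by simp) b (by simp [hbC]) c (by simp [hcC]) h h' h''
        · exact hy hbC
    · have haC := (glue_adj_mem hac).resolve_right hcC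
      rcases step hc hb hbc.symm hbC with ⟨h, -⟩ | ⟨-, h⟩
      · exact hcC h
      rcases step hc ha hac.symm haC with ⟨h', -⟩ | ⟨-, h'⟩
      · exact hcC h'
      rcases step ha hb hab hbC with ⟨-, h''⟩ | ⟨rfl, -⟩
      · exact htf q (by simp) a (by simp [haC]) b (by simp [hbC]) h' h'' h
      · exact hy haC
  · have haC := (glue_adj_mem hab).resolve_right hbC
    have hcC := (glue_adj_mem hbc).resolve_left hbC
    rcases step hb ha hab.symm haC with ⟨h, -⟩ | ⟨-, h⟩
    · exact hbC h
    rcases step hb hc hbc hcC with ⟨h', -⟩ | ⟨-, h'⟩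
    · exact hbC h'
    rcases step ha hc hac hcC with ⟨-, h''⟩ | ⟨rfl, -⟩
    · exact htf q (by simp) a (by simp [haC]) c (by simp [hcC]) h h'' h'
    · exact hy haC

lemma Solved.conn (hs : Solved V k N) (hr : Rooted k ∅ (glue G C P Q x y) C x y e)
    (hN : C.ncard < N) : Good k (Conn G C P Q) :=
  (hs _ _ _ _ _ hr hN).unshift fun _ h => conn_of_glue hr.ne hr.x_notMem hr.y_notMem h

variable [Finite V]

lemma rooted_glue (hxy : x ≠ y) (hx : x ∉ C) (hy : y ∉ C)
    (hdeg : ∀ v ∈ C, v ≠ e → ∃ L : Set V, k + 1 ≤ (G.neighborSet v \ L).ncard ∧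
      (∀ b, G.Adj v b → b ∉ L → b ∈ C ∨ b ∈ P ∨ b ∈ Q) ∧
      (∀ p ∈ P, ∀ p' ∈ P, G.Adj v p → G.Adj v p' → p ∉ L → p' ∉ L → p = p') ∧
      ∀ q ∈ Q, ∀ q' ∈ Q, G.Adj v q → G.Adj v q' → q ∉ L → q' ∉ L → q = q')
    (hcut : ∀ A ⊆ C, ¬ A ⊆ E → ∀ r, (∀ a ∈ A, ∀ b ∈ C, G.Adj a b → b ∈ A ∨ b = r) →
      (∀ a ∈ A, ∀ p ∈ P, ¬ G.Adj a p) → (∀ a ∈ A, ∀ q ∈ Q, ¬ G.Adj a q) → False)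
    (hclP : ∀ A ⊆ C, ¬ A ⊆ E → (∀ a ∈ A, ∀ b ∈ C, G.Adj a b → b ∈ A) →
      (∀ a ∈ A, ∀ p ∈ P, ¬ G.Adj a p) → False)
    (hclQ : ∀ A ⊆ C, ¬ A ⊆ E → (∀ a ∈ A, ∀ b ∈ C, G.Adj a b → b ∈ A) →
      (∀ a ∈ A, ∀ q ∈ Q, ¬ G.Adj a q) → False)
    (hne : ¬ C ⊆ {e})
    (htf : k = 3 → (∃ q, Q = {q} ∧ TFon G (insert q C)) ∨ (∃ p, P = {p} ∧ TFon G (insert p C))) :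
    Rooted k E (glue G C P Q x y) C x y e where
  ne := hxy
  x_notMem := hx
  y_notMem := hy
  adj_mem := glue_adj_mem_left
  not_adj h := (glue_adj_mem h).elim hx hy
  nz := hne
  cut A hA hAE r hr := by
    have hC : ∀ a ∈ A, ∀ b ∈ C, G.Adj a b → b ∈ A ∨ b = r := fun a ha b hb hab =>
      hr a ha b ((glue_adj_iff hx hy hb).2 (Or.inl ⟨hA ha, hab⟩))
    have hP : ∀ a ∈ A, ∀ p ∈ P, G.Adj a p → x = r := fun a ha p hp hap =>
      (hr a ha x ((glue_adj_iff hx hy (hA ha)).2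
        (Or.inr (Or.inl ⟨rfl, p, hp, hap.symm⟩))).symm).resolve_left fun h => hx (hA h)
    have hQ : ∀ a ∈ A, ∀ q ∈ Q, G.Adj a q → y = r := fun a ha q hq haq =>
      (hr a ha y ((glue_adj_iff hx hy (hA ha)).2
        (Or.inr (Or.inr ⟨rfl, q, hq, haq.symm⟩))).symm).resolve_left fun h => hy (hA h)
    by_cases hrx : x = r
    · refine hclQ A hA hAE (fun a ha b hb hab => (hC a ha b hb hab).resolve_right ?_)
        fun a ha q hq haq => hxy (hrx.trans (hQ a ha q hq haq).symm)
      rintro rfl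
      exact hx (hrx ▸ hb)
    by_cases hry : y = r
    · refine hclP A hA hAE (fun a ha b hb hab => (hC a ha b hb hab).resolve_right ?_)
        fun a ha p hp hap => hrx (hP a ha p hp hap)
      rintro rfl
      exact hy (hry ▸ hb)
    exact hcut A hA hAE r hC (fun a ha p hp hap => hrx (hP a ha p hp hap))
      fun a ha q hq haq => hry (hQ a ha q hq haq)
  deg v hv hve := by
    classical
    obtain ⟨L, hk, hL, hLP, hLQ⟩ := hdeg v hv hve
    refine hk.trans ?_
    refine Set.ncard_le_ncard_of_injOn
      (fun b => if b ∈ C then b else if b ∈ P then x else y) ?_ ?_ (Set.toFinite _)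
    · rintro b ⟨hvb, hbL⟩
      rw [SimpleGraph.mem_neighborSet] at hvb ⊢
      rw [SimpleGraph.adj_comm, glue_adj_iff hx hy hv]
      by_cases hC : b ∈ C
      · simp only [hC, if_true]
        exact Or.inl ⟨trivial, hvb.symm⟩
      by_cases hP : b ∈ P
      · simp only [hC, hP, if_true, if_false]
        exact Or.inr (Or.inl ⟨trivial, b, hP, hvb.symm⟩)
      · simp only [hC, hP, if_false]
        exact Or.inr (Or.inr ⟨trivial, b, by have := hL b hvb hbL; tauto, hvb.symm⟩)
    · rintro b ⟨hvb, hbL⟩ b' ⟨hvb', hbL'⟩ h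
      rw [SimpleGraph.mem_neighborSet] at hvb hvb'
      have h1 := hL b hvb hbL
      have h2 := hL b' hvb' hbL'
      dsimp only at h
      by_cases hC : b ∈ C <;> by_cases hC' : b' ∈ C
      · simpa only [hC, hC', if_true] using h
      · exfalso
        simp only [hC, hC', if_true, if_false] at h
        split_ifs at h
        · exact hx (h ▸ hC)
        · exact hy (h ▸ hC)
      · exfalso
        simp only [hC, hC', if_true, if_false] at h
        split_ifs at h
        · exact hx (h ▸ hC')
        · exact hy (h ▸ hC')
      · simp only [hC, hC', if_false] at h
        split_ifs at h with hP hP' hP'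
        · exact hLP b hP b' hP' hvb hvb' hbL hbL'
        · exact absurd h hxy
        · exact absurd h.symm hxy
        · exact hLQ b (by tauto) b' (by tauto) hvb hvb' hbL hbL'
  tf hk := by
    rcases htf hk with ⟨q, hQ, h⟩ | ⟨p, hP, h⟩
    · subst hQ
      exact Or.inl (glue_tf hx hy h)
    · subst hP
      rw [glue_comm]
      exact Or.inr (glue_tf hy hx h)

/-- If the exceptional vertex is allowed to be pendant, it can be deleted. -/
lemma Solved.dangling (hs : Solved V k N) (hk : k = 2 ∨ k = 3) (hr : Rooted k {e} G I x y e)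
    (hN : I.ncard < N)
    (hbad : k = 2 → e ∈ I → ∀ v ∈ I, v ≠ e → I ⊆ {e, v} → G.Adj v x → G.Adj v y → G.Adj v e → False) :
    Good k (PathIn G Set.univ x y) := by
  by_cases hq : e ∈ I ∧ ∃ q, NbrSub G {e} {q}
  · obtain ⟨he, q, hq⟩ := hq
    let H : SimpleGraph V :=
      { Adj a b := G.Adj a b ∧ a ≠ e ∧ b ≠ e
        symm := ⟨fun a b h => ⟨h.1.symm, h.2.2, h.2.1⟩⟩
        loopless := ⟨fun a h => h.1.ne rfl⟩ }
    have hadj : ∀ a b, H.Adj a b ↔ G.Adj a b ∧ a ≠ e ∧ b ≠ e := fun a b => Iff.rfl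
    have heq : ∀ v, G.Adj v e → v = q := fun v hv =>
      (hq e rfl v hv.symm).resolve_left fun h => hv.ne h
    suffices Rooted k ∅ H (I \ {e}) x y q by
      have h := hs _ _ _ _ _ this ((Set.ncard_le_ncard Set.sdiff_subset).trans_lt hN)
      exact h.shift (c := 0) fun m hm => hm.mono_graph fun u v huv => huv.1
    refine ⟨hr.ne, fun h => hr.x_notMem h.1, fun h => hr.y_notMem h.1, ?_,
      fun h => hr.not_adj h.1, ?_, ?_, ?_, fun h => ?_⟩
    · intro a b hab
      exact (hr.adj_mem hab.1).imp_left fun h => ⟨h, hab.2.1⟩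
    · intro A hA hAE p hp
      have hAne : A.Nonempty := Set.nonempty_iff_ne_empty.2 fun h => hAE h.subset
      obtain ⟨a₀, ha₀⟩ := hAne
      by_cases hqA : q ∈ A
      · refine hr.cut (insert e A) ?_ (fun h => (hA ha₀).2 (h (Set.mem_insert_of_mem _ ha₀))) p ?_
        · rintro v (rfl | hv)
          · exact he
          · exact (hA hv).1
        · rintro a (rfl | ha) b hab
          · exact Or.inl (Or.inr (heq b hab.symm ▸ hqA))
          · by_cases hbe : b = e
            · exact Or.inl (Or.inl hbe)
            · exact (hp a ha b ⟨hab, (hA ha).2, hbe⟩).imp_left Or.inr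
      · refine hr.cut A (hA.trans Set.sdiff_subset) (fun h => (hA ha₀).2 (h ha₀)) p ?_
        intro a ha b hab
        refine hp a ha b ⟨hab, (hA ha).2, ?_⟩
        rintro rfl
        exact hqA (heq a hab ▸ ha)
    · intro v hv hvq
      convert hr.deg v hv.1 hv.2 using 2
      ext b
      rw [SimpleGraph.mem_neighborSet, SimpleGraph.mem_neighborSet, hadj]
      refine ⟨fun h => h.1, fun h => ⟨h, hv.2, ?_⟩⟩
      rintro rfl
      exact hvq (heq v h)
    · intro hI
      obtain ⟨v, hv, hve⟩ := Set.not_subset.1 hr.nz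
      obtain rfl : v = q := hI ⟨hv, hve⟩
      have hIv : I ⊆ {e, v} := by
        intro w hw
        by_cases hwe : w = e
        · exact Or.inl hwe
        · exact Or.inr (hI ⟨hw, hwe⟩)
      have hsub : G.neighborSet v ⊆ {x, y, e} := by
        intro b hb
        rw [SimpleGraph.mem_neighborSet] at hb
        rcases hr.adj_mem hb.symm with h | h | h
        · rcases hIv h with rfl | rfl
          · simp
          · exact absurd rfl hb.ne
        · simp [h]
        · simp [h]
      have hd := hr.deg v hv hve
      have h3 : ({x, y, e} : Set V).ncard ≤ 3 := by
        refine (Set.ncard_insert_le _ _).trans ?_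
        have := Set.ncard_insert_le y {e}
        rw [Set.ncard_singleton] at this
        omega
      have hle := Set.ncard_le_ncard hsub
      have heqs : G.neighborSet v = {x, y, e} := Set.eq_of_subset_of_ncard_le hsub (by omega)
      have hmem : ∀ w ∈ ({x, y, e} : Set V), G.Adj v w := fun w hw => by
        rw [← heqs] at hw
        exact hw
      exact hbad (by omega) he v hv hve hIv (hmem x (by simp)) (hmem y (by simp)) (hmem e (by simp))
    · exact (hr.tf h).imp (fun h a b c ha hb hc hab hbc hac => h a b c ha hb hc hab.1 hbc.1 hac.1)
        fun h a b c ha hb hc hab hbc hac => h a b c ha hb hc hab.1 hbc.1 hac.1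
  · refine hs _ _ _ _ e ⟨hr.ne, hr.x_notMem, hr.y_notMem, hr.adj_mem, hr.not_adj, ?_,
      hr.deg, hr.nz, hr.tf⟩ hN
    intro A hA hAE p hp
    by_cases hAe : A ⊆ {e}
    · have hAne : A ≠ ∅ := fun h => hAE h.subset
      obtain rfl : A = {e} := (Set.subset_singleton_iff_eq.1 hAe).resolve_left hAne
      exact hq ⟨hA rfl, p, hp⟩
    · exact hr.cut A hA hAe p hp

lemma Solved.conn_dangling (hs : Solved V k N) (hk : k = 2 ∨ k = 3)
    (hr : Rooted k {e} (glue G C P Q x y) C x y e) (hN : C.ncard < N)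
    (hbad : k = 2 → e ∈ C → ∀ v ∈ C, v ≠ e → C ⊆ {e, v} → G.Adj v e → (∃ p ∈ P, G.Adj v p) →
      (∃ q ∈ Q, G.Adj v q) → False) : Good k (Conn G C P Q) := by
  refine (hs.dangling hk hr hN ?_).unshift
    fun _ h => conn_of_glue hr.ne hr.x_notMem hr.y_notMem h
  intro hk he v hv hve hC hvx hvy hvve
  have hx := hr.x_notMem
  have hy := hr.y_notMem
  rw [SimpleGraph.adj_comm, glue_adj_iff hx hy hv] at hvx hvy hvve
  refine hbad hk he v hv hve hC ?_ ?_ ?_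
  · rcases hvve with h | ⟨rfl, -⟩ | ⟨rfl, -⟩
    · exact h.2.symm
    · exact absurd he hx
    · exact absurd he hy
  · rcases hvx with h | ⟨-, p, hp, h⟩ | h
    · exact absurd h.1 hx
    · exact ⟨p, hp, h.symm⟩
    · exact absurd h.1 hr.ne
  · rcases hvy with h | h | ⟨-, p, hp, h⟩
    · exact absurd h.1 hy
    · exact absurd h.1.symm hr.ne
    · exact ⟨p, hp, h.symm⟩

end Glue

/-- A minimal counterexample. -/
structure Crit (k : ℕ) (G : SimpleGraph V) (I : Set V) (x y z : V) : Prop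
    extends Rooted k ∅ G I x y z where
  hk : k = 2 ∨ k = 3
  ih : Solved V k I.ncard
  bad : ¬ Good k (PathIn G Set.univ x y)

section Critical

variable {G : SimpleGraph V} {I C P Q E E' A D S T U : Set V}
  {a b c d u v w x y z e p q r : V} {k m n N : ℕ}

lemma Rooted.mem_of_adj (h : Rooted k E G I x y z) (hab : G.Adj a b) : b ∈ I ∨ b = x ∨ b = y :=
  h.adj_mem hab.symm

lemma Rooted.ne_x (h : Rooted k E G I x y z) (ha : a ∈ I) : a ≠ x :=
  ne_of_mem_of_not_mem ha h.x_notMem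

lemma Rooted.ne_y (h : Rooted k E G I x y z) (ha : a ∈ I) : a ≠ y :=
  ne_of_mem_of_not_mem ha h.y_notMem

lemma Rooted.mem_of_adj_x (h : Rooted k E G I x y z) (ha : G.Adj x a) : a ∈ I := by
  rcases h.mem_of_adj ha with h' | rfl | rfl
  · exact h'
  · exact absurd rfl ha.ne
  · exact absurd ha h.not_adj

lemma Rooted.mem_of_adj_y (h : Rooted k E G I x y z) (ha : G.Adj y a) : a ∈ I :=
  h.symm.mem_of_adj_x ha

lemma Rooted.cut' (h : Rooted k ∅ G I x y z) (hA : A ⊆ I) (hne : A.Nonempty) (p : V) :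
    ¬ NbrSub G A {p} :=
  h.cut A hA (fun h => hne.ne_empty (Set.subset_empty_iff.1 h)) p

lemma Rooted.exists_ne (h : Rooted k E G I x y z) : ∃ v ∈ I, v ≠ z := Set.not_subset.1 h.nz

lemma nonempty_of_not_subset_empty (h : ¬ A ⊆ ∅) : A.Nonempty :=
  Set.nonempty_iff_ne_empty.2 fun h' => h h'.subset

lemma comp_diff_closed (hA : A ⊆ comp G U v \ {v}) (hne : A.Nonempty)
    (hcl : ∀ a ∈ A, ∀ b ∈ comp G U v \ {v}, G.Adj a b → b ∈ A) (hv : ∀ a ∈ A, ¬ G.Adj a v) :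
    False := by
  have hsub := comp_subset_of_closed (hA.trans Set.sdiff_subset) hne fun a ha b hb hab => by
    by_cases hbv : b = v
    · exact absurd (hbv ▸ hab) (hv a ha)
    · exact hcl a ha b ⟨hb, hbv⟩ hab
  obtain ⟨a, ha⟩ := hne
  obtain ⟨n, hn⟩ := (hA ha).1
  exact (hA (hsub (mem_comp_self hn.left_mem))).2 rfl

lemma Conn.path (h : Conn G C P Q m) (hP : ∀ p ∈ P, p ∉ C) (hQ : ∀ q ∈ Q, q ∉ C)
    (hPQ : ∀ p ∈ P, p ∉ Q) :
    ∃ p ∈ P, ∃ q ∈ Q, PathIn G (insert p (insert q C)) p q (m + 2) := by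
  obtain ⟨p, hp, q, hq, v, w, hpv, hwq, hvw⟩ := h
  refine ⟨p, hp, q, hq, ?_⟩
  have h1 := (hvw.symm.cons hwq.symm (hQ q hq)).symm
  refine h1.cons hpv ?_
  rintro (rfl | h)
  · exact hPQ p hp hq
  · exact hP p hp h

lemma Conn.path_pair (h : Conn G C {p} {q} m) (hp : p ∉ C) (hq : q ∉ C) (hpq : p ≠ q) :
    PathIn G (insert p (insert q C)) p q (m + 2) := by
  obtain ⟨p', rfl, q', rfl, h'⟩ := h.path (by simpa using hp) (by simpa using hq) (by simpa using hpq)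
  exact h'

lemma ncard_pair_le : ({p, q} : Set V).ncard ≤ 2 := by
  have := Set.ncard_insert_le p {q}
  rwa [Set.ncard_singleton] at this

lemma ncard_triple_le : ({p, q, r} : Set V).ncard ≤ 3 :=
  (Set.ncard_insert_le p {q, r}).trans (Nat.succ_le_succ ncard_pair_le)

variable [Finite V]

lemma exists_nbr_notMem (h : S.ncard < (G.neighborSet v).ncard) : ∃ d, G.Adj v d ∧ d ∉ S :=
  Set.exists_mem_notMem_of_ncard_lt_ncard h

lemma nbr_triple (hsub : ∀ b, G.Adj v b → b = p ∨ b = q ∨ b = r)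
    (h3 : 3 ≤ (G.neighborSet v).ncard) :
    G.Adj v p ∧ G.Adj v q ∧ G.Adj v r ∧ p ≠ q ∧ p ≠ r ∧ q ≠ r := by
  have heq : G.neighborSet v = {p, q, r} :=
    Set.eq_of_subset_of_ncard_le (fun b hb => hsub b hb) (ncard_triple_le.trans h3)
  have hmem : ∀ w ∈ ({p, q, r} : Set V), G.Adj v w := fun w hw => by
    rw [← heq] at hw
    exact hw
  refine ⟨hmem p (by simp), hmem q (by simp), hmem r (by simp), ?_, ?_, ?_⟩ <;> rintro rfl
  · rw [heq, Set.insert_eq_of_mem (by simp)] at h3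
    exact absurd (h3.trans ncard_pair_le) (by omega)
  · rw [heq, Set.insert_eq_of_mem (by simp)] at h3
    exact absurd (h3.trans ncard_pair_le) (by omega)
  · rw [heq, Set.pair_eq_singleton] at h3
    exact absurd (h3.trans ncard_pair_le) (by omega)

lemma Rooted.glue_pair (h : Rooted k E' G I x y z) (hC : C ⊆ I) (hp : p ∉ C) (hq : q ∉ C)
    (hpq : p ≠ q)
    (hdeg : ∀ v ∈ C, v ≠ e → ∃ L : Set V, k + 1 ≤ (G.neighborSet v \ L).ncard ∧
      ∀ b, G.Adj v b → b ∉ L → b ∈ C ∨ b = p ∨ b = q)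
    (hcut : ∀ A ⊆ C, ¬ A ⊆ E → ∀ r,
      (∀ a ∈ A, ∀ b, b ∈ C ∨ b = p ∨ b = q → G.Adj a b → b ∈ A ∨ b = r) → False)
    (hne : ¬ C ⊆ {e}) : Rooted k E (glue G C {p} {q} x y) C x y e := by
  refine rooted_glue h.ne (fun hx => h.x_notMem (hC hx)) (fun hy => h.y_notMem (hC hy))
    ?_ ?_ ?_ ?_ hne ?_
  · intro v hv hve
    obtain ⟨L, hL, hN⟩ := hdeg v hv hve
    refine ⟨L, hL, hN, ?_, ?_⟩
    · rintro _ rfl _ rfl _ _ _ _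
      rfl
    · rintro _ rfl _ rfl _ _ _ _
      rfl
  · intro A hA hAE r hr hP hQ
    refine hcut A hA hAE r ?_
    rintro a ha b (hb | rfl | rfl) hab
    · exact hr a ha b hb hab
    · exact absurd hab (hP a ha _ rfl)
    · exact absurd hab (hQ a ha _ rfl)
  · intro A hA hAE hcl hP
    refine hcut A hA hAE q ?_
    rintro a ha b (hb | rfl | rfl) hab
    · exact Or.inl (hcl a ha b hb hab)
    · exact absurd hab (hP a ha _ rfl)
    · exact Or.inr rfl
  · intro A hA hAE hcl hQ
    refine hcut A hA hAE p ?_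
    rintro a ha b (hb | rfl | rfl) hab
    · exact Or.inl (hcl a ha b hb hab)
    · exact Or.inr rfl
    · exact absurd hab (hQ a ha _ rfl)
  · have key : ∀ r, TF G r → r ∉ C → TFon G (insert q C) ∨ TFon G (insert p C) := by
      intro r hr hrC
      by_cases hqr : r = q
      · refine Or.inr (hr.tfon ?_)
        rintro (rfl | h)
        · exact hpq hqr
        · exact hrC h
      · refine Or.inl (hr.tfon ?_)
        rintro (rfl | h)
        · exact hqr rfl
        · exact hrC h
    intro hk
    have := (h.tf hk).elim (fun ht => key x ht fun hx => h.x_notMem (hC hx))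
      fun ht => key y ht fun hy => h.y_notMem (hC hy)
    exact this.imp (fun h => ⟨q, rfl, h⟩) fun h => ⟨p, rfl, h⟩

lemma Rooted.glue_of_nbrSub (h : Rooted k E G I x y z) (hD : D ⊆ I) (hp : p ∉ D) (hq : q ∉ D)
    (hpq : p ≠ q) (hN : NbrSub G D {p, q}) (hne : ¬ D ⊆ {z}) :
    Rooted k E (glue G D {p} {q} x y) D x y z := by
  refine h.glue_pair hD hp hq hpq ?_ ?_ hne
  · intro v hv hvz
    refine ⟨∅, by simpa using h.deg v (hD hv) hvz, fun b hb _ => hN v hv b hb⟩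
  · intro A hA hAE r hr
    exact h.cut A (hA.trans hD) hAE r fun a ha b hab => hr a ha b (hN a (hA ha) b hab) hab

omit [Finite V] in
lemma Crit.symm (h : Crit k G I x y z) : Crit k G I y x z where
  toRooted := h.toRooted.symm
  hk := h.hk
  ih := h.ih
  bad hg := h.bad (hg.shift (c := 0) fun _ hm => hm.symm)

omit [Finite V] in
lemma exists_paths_through_step (hS : PathIn G S x w m) (hT : PathIn G T u y n)
    (hd : ∀ p ∈ S, p ∉ T) (hvu : G.Adj v u) (hU : PathIn G U v w k)
    (hUS : ∀ p ∈ U, p ∈ S ∨ p ∈ T → p = w) :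
    ∃ S' T' m' n', PathIn G S' x v m' ∧ PathIn G T' v y n' ∧ ∀ p ∈ S', p ∈ T' → p = v := by
  have hw := hS.right_mem
  have hvT : v ∉ T := fun hv => hd v (hUS v hU.left_mem (Or.inr hv) ▸ hw) hv
  refine ⟨_, _, _, _, hS.append hU.symm fun p hp hpU => hUS p hpU (Or.inl hp), hT.cons hvu hvT, ?_⟩
  rintro p (hp | hp) (rfl | hpT)
  · rfl
  · exact absurd hpT (hd p hp)
  · rfl
  · exact absurd hpT (hd p (hUS p hp (Or.inr hpT) ▸ hw))

omit [Finite V] in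
/-- Every non-root vertex lies on a path between the roots. -/
lemma Rooted.exists_paths_through (h : Rooted k ∅ G I x y z) (hv : v ∈ I) :
    ∃ S T m n, PathIn G S x v m ∧ PathIn G T v y n ∧ ∀ p ∈ S, p ∈ T → p = v := by
  set W : Set V := {v | ∃ S T m n, PathIn G S x v m ∧ PathIn G T v y n ∧
    ∀ p ∈ S, p ∈ T → p = v} with hW
  have hxW : ∀ v, G.Adj x v → v ∈ W := by
    intro v hxv
    have hvI := h.mem_of_adj_x hxv
    have hy : y ∈ comp G (I ∪ {y}) v := by
      by_contra hy
      refine h.cut' (A := comp G (I ∪ {y}) v) ?_ ⟨v, mem_comp_self (Or.inl hvI)⟩ x ?_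
      · exact fun a ha => (comp_subset ha).resolve_right fun h' => hy (h' ▸ ha)
      · intro a ha b hab
        rcases h.mem_of_adj hab with h' | h' | h'
        · exact Or.inl (mem_comp_of_adj ha hab (Or.inl h'))
        · exact Or.inr h'
        · exact Or.inl (mem_comp_of_adj ha hab (Or.inr h'))
    obtain ⟨n, hn⟩ := hy
    refine ⟨{x, v}, I ∪ {y}, 1, n, (PathIn.nil (Set.mem_singleton v)).cons hxv hxv.ne, hn, ?_⟩
    rintro p (rfl | rfl) hp
    · exact absurd hp (by rintro (h' | h'); exacts [h.x_notMem h', h.ne h'])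
    · rfl
  have hstep : ∀ u ∈ I, u ∈ W → ∀ v ∈ I, G.Adj u v → v ∈ W := by
    rintro u huI ⟨S, T, m, n, hS, hT, hd⟩ v hvI huv
    obtain ⟨S₀, hS₀, hS', hsplitS⟩ := hS.exact_support
    obtain ⟨T₀, hT₀, hT', hsplitT⟩ := hT.exact_support
    have hvU : v ∈ (I ∪ {x, y}) \ {u} := ⟨Or.inl hvI, huv.ne'⟩
    obtain ⟨r, hr, l, hl⟩ : ∃ r ∈ (S₀ ∪ T₀) \ {u}, ∃ l, PathIn G ((I ∪ {x, y}) \ {u}) v r l := by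
      by_contra! hc
      have hcx : x ∉ comp G ((I ∪ {x, y}) \ {u}) v := fun ⟨l, hl⟩ =>
        hc x ⟨Or.inl hS'.left_mem, (h.ne_x huI).symm⟩ l hl
      have hcy : y ∉ comp G ((I ∪ {x, y}) \ {u}) v := fun ⟨l, hl⟩ =>
        hc y ⟨Or.inr hT'.right_mem, (h.ne_y huI).symm⟩ l hl
      refine h.cut' (A := comp G ((I ∪ {x, y}) \ {u}) v) ?_ ⟨v, mem_comp_self hvU⟩ u ?_
      · intro a ha
        rcases (comp_subset ha).1 with h' | rfl | rfl
        · exact h'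
        · exact absurd ha hcx
        · exact absurd ha hcy
      · intro a ha b hab
        by_cases hbu : b = u
        · exact Or.inr hbu
        · exact Or.inl (mem_comp_of_adj ha hab ⟨h.mem_of_adj hab, hbu⟩)
    obtain ⟨w, ⟨hw, hwu⟩, k, hk⟩ := hl.first_hit hr
    have hk' : ∀ p ∈ ((I ∪ {x, y}) \ {u}) \ (((S₀ ∪ T₀) \ {u}) \ {w}),
        p ∈ S₀ ∨ p ∈ T₀ → p = w := by
      intro p hp hp'
      by_contra hpw
      exact hp.2 ⟨⟨hp', hp.1.2⟩, hpw⟩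
    rcases hw with hw | hw
    · obtain ⟨S₁, S₂, m₁, m₂, h₁, -, p₁, p₂, hd'⟩ := hsplitS w hw
      refine exists_paths_through_step p₁ hT' ?_ huv.symm hk
        fun p hp hp' => hk' p hp (hp'.imp_left fun h' => h₁ h')
      intro p hp hpT
      obtain rfl := hd p (hS₀ (h₁ hp)) (hT₀ hpT)
      exact hwu (hd' p hp p₂.right_mem).symm
    · obtain ⟨T₁, T₂, m₁, m₂, -, h₂, p₁, p₂, hd'⟩ := hsplitT w hw
      obtain ⟨S', T', m', n', hS'', hT'', hd''⟩ :=
        exists_paths_through_step p₂.symm hS'.symm (by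
          intro p hp hpS
          obtain rfl := hd p (hS₀ hpS) (hT₀ (h₂ hp))
          exact hwu (hd' p p₁.left_mem hp).symm) huv.symm hk
          fun p hp hp' => hk' p hp (hp'.symm.imp_right fun h' => h₂ h')
      exact ⟨T', S', n', m', hT''.symm, hS''.symm, fun p hp hp' => hd'' p hp' hp⟩
  by_contra hvW
  refine h.cut' (A := I \ W) Set.sdiff_subset ⟨v, hv, hvW⟩ y ?_
  rintro a ⟨ha, haW⟩ b hab
  rcases h.mem_of_adj hab with h' | rfl | h'
  · exact Or.inl ⟨h', fun hbW => haW (hstep b h' hbW a ha hab.symm)⟩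
  · exact absurd (hxW a hab.symm) haW
  · exact Or.inr h'

/-- Two vertices do not cut off a set of non-root vertices. -/
lemma Crit.not_nbrSub_of_not_subset (h : Crit k G I x y z) (hD : D ⊆ I) (hDz : ¬ D ⊆ {z})
    (hDI : D ≠ I) : ¬ NbrSub G D {p, q} := by
  intro hN
  obtain ⟨v, hv, -⟩ := Set.not_subset.1 hDz
  have hNp : ∀ {r s}, NbrSub G D {r, s} → r ∉ D := by
    intro r s hN hr
    refine h.cut' hD ⟨v, hv⟩ s fun a ha b hab => ?_
    rcases hN a ha b hab with h' | rfl | h'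
    · exact Or.inl h'
    · exact Or.inl hr
    · exact Or.inr h'
  have hpD : p ∉ D := hNp hN
  have hqD : q ∉ D := hNp (Set.pair_comm p q ▸ hN)
  obtain ⟨S, T, m, n, hS, hT, hd⟩ := h.exists_paths_through (hD hv)
  obtain ⟨p₀, hp₀, m', hS'⟩ := hS.enter (fun h' => h.x_notMem (hD h')) hv hN
  obtain ⟨q₀, hq₀, n', hT'⟩ := hT.symm.enter (fun h' => h.y_notMem (hD h')) hv hN
  have hdisj : ∀ w ∈ S \ D, w ∉ T := fun w hw hw' => hw.2 (hd w hw.1 hw' ▸ hv)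
  have hpq₀ : p₀ ≠ q₀ := fun h' => hdisj p₀ hS'.right_mem (h' ▸ hT'.right_mem.1)
  have hN₀ : NbrSub G D {p₀, q₀} := fun a ha b hab => by
    rcases hN a ha b hab with h' | h' <;> grind
  have hp₀D : p₀ ∉ D := hS'.right_mem.2
  have hq₀D : q₀ ∉ D := hT'.right_mem.2
  have hg := h.ih.conn (h.glue_of_nbrSub hD hp₀D hq₀D hpq₀ hN₀ hDz)
    (Set.ncard_lt_ncard (hD.ssubset_of_ne hDI))
  refine h.bad (hg.shift (c := 2 + m' + n') fun l hl => ?_)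
  have h1 := hS'.append (hl.path_pair hp₀D hq₀D hpq₀) (by
    rintro w hw (rfl | rfl | h')
    · rfl
    · exact absurd hT'.right_mem.1 (hdisj w hw)
    · exact absurd h' hw.2)
  have h2 := h1.append hT'.symm (by
    rintro w (hw | rfl | rfl | hw) hwT
    · exact absurd hwT.1 (hdisj w hw)
    · exact absurd hwT.1 (hdisj w hS'.right_mem)
    · rfl
    · exact absurd hw hwT.2)
  rw [show l + (2 + m' + n') = m' + (l + 2) + n' by omega]
  exact h2.mono (Set.subset_univ _)

omit [Finite V] in
lemma Crit.exists_adj_x (h : Crit k G I x y z) : ∃ a, G.Adj x a := by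
  by_contra hx
  obtain ⟨v, hv, -⟩ := h.exists_ne
  refine h.cut' subset_rfl ⟨v, hv⟩ y fun a ha b hab => ?_
  rcases h.mem_of_adj hab with hb | rfl | hb
  · exact Or.inl hb
  · exact absurd ⟨a, hab.symm⟩ hx
  · exact Or.inr hb

omit [Finite V] in
lemma path2 (hab : G.Adj x a) (hay : G.Adj a y) (hxy : x ≠ y) : PathIn G {x, a, y} x y 2 :=
  ((PathIn.nil (Set.mem_singleton y)).cons hay hay.ne).cons hab (by
    rintro (rfl | h)
    · exact hab.ne rfl
    · exact hxy h)

omit [Finite V] in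
lemma path3 (hxa : G.Adj x a) (hab : G.Adj a b) (hby : G.Adj b y) (hxy : x ≠ y) (hxb : x ≠ b)
    (hay : a ≠ y) : PathIn G {x, a, b, y} x y 3 :=
  (path2 hab hby hay).cons hxa (by
    rintro (rfl | h | h)
    · exact hxa.ne rfl
    · exact hxb h
    · exact hxy h)

omit [Finite V] in
lemma good2_of_23 (h2 : PathIn G S x y 2) (h3 : PathIn G T x y 3) :
    Good2 (PathIn G Set.univ x y) :=
  ⟨3, 2, h3.mono (Set.subset_univ _), h2.mono (Set.subset_univ _), by omega⟩

lemma Crit.exists_adj_x_ne (h : Crit k G I x y z) (a : V) : ∃ v, G.Adj x v ∧ v ≠ a := by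
  by_contra! hx
  obtain ⟨a', ha'⟩ := h.exists_adj_x
  obtain rfl := hx a' ha'
  have haI := h.mem_of_adj_x ha'
  have hmem : ∀ v ∈ I \ {a'}, ∀ b, G.Adj v b → b ∈ I \ {a'} ∨ b = a' ∨ b = y := by
    intro v hv b hvb
    by_cases hba : b = a'
    · exact Or.inr (Or.inl hba)
    rcases h.mem_of_adj hvb with hb | rfl | hb
    · exact Or.inl ⟨hb, hba⟩
    · exact absurd (hx v hvb.symm) hv.2
    · exact Or.inr (Or.inr hb)
  by_cases hne : I \ {a'} ⊆ {z}
  · obtain ⟨v, hv, hvz⟩ := h.exists_ne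
    obtain rfl : v = a' := by
      by_contra hva
      exact hvz (hne ⟨hv, hva⟩)
    have hsub : ∀ b, G.Adj v b → b = x ∨ b = y ∨ b = z := by
      intro b hb
      rcases h.mem_of_adj hb with hb' | hb' | hb'
      · exact Or.inr (Or.inr (hne ⟨hb', hb.ne'⟩))
      · exact Or.inl hb'
      · exact Or.inr (Or.inl hb')
    have hd := h.deg v hv hvz
    have hk : k = 2 := by
      have : (G.neighborSet v).ncard ≤ 3 :=
        (Set.ncard_le_ncard (t := {x, y, z}) fun b hb => hsub b hb).trans ncard_triple_le
      have := h.hk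
      omega
    subst hk
    obtain ⟨h1, h2, h3, -, hxz, hyz⟩ := nbr_triple hsub hd
    have hzI : z ∈ I := by
      rcases h.mem_of_adj h3 with h' | h' | h'
      · exact h'
      · exact absurd h'.symm hxz
      · exact absurd h'.symm hyz
    have hzy : G.Adj z y := by
      by_contra hzy
      refine h.cut' (A := {z}) (by simpa using hzI) ⟨z, rfl⟩ v ?_
      rintro a rfl b hab
      rcases hmem a ⟨hzI, hvz.symm⟩ b hab with hb | hb | rfl
      · exact Or.inl (hne hb)
      · exact Or.inr hb
      · exact absurd hab hzy
    exact h.bad ⟨fun _ => good2_of_23 (path2 ha' h2 h.ne) (path3 ha' h3 hzy h.ne hxz h2.ne),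
      by omega⟩
  · have hr := h.glue_pair (C := I \ {a'}) (E := ∅) (p := a') (q := y) (e := z)
      Set.sdiff_subset (fun h => h.2 rfl) (fun h' => h.y_notMem h'.1) (h.ne_y haI)
      (fun v hv hvz => ⟨∅, by simpa using h.deg v hv.1 hvz, fun b hb _ => hmem v hv b hb⟩)
      (fun A hA hAE r hr => h.cut A (hA.trans Set.sdiff_subset) hAE r fun a ha b hab =>
        hr a ha b (hmem a (hA ha) b hab) hab) hne
    have hg := h.ih.conn hr (Set.ncard_lt_ncard (Set.sdiff_singleton_ssubset.2 haI))
    refine h.bad (hg.shift (c := 2 + 1) fun m hm => ?_)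
    rw [← add_assoc]
    refine ((hm.path_pair (fun h => h.2 rfl) (fun h' => h.y_notMem h'.1) (h.ne_y haI)).cons ha'
      ?_).mono (Set.subset_univ _)
    rintro (h' | h' | h')
    · exact ha'.ne h'
    · exact h.ne h'
    · exact h.x_notMem h'.1

lemma Crit.not_nbrSub_exc (h : Crit k G I x y z) (hz : z ∈ I) : ¬ NbrSub G {z} {x, p} := by
  intro hN
  have hzp : ∀ v ∈ I, G.Adj v z → v = p := by
    intro v hv hvz
    rcases hN z rfl v hvz.symm with h' | h' | h'
    · exact absurd h' hvz.ne
    · exact absurd h' (h.ne_x hv)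
    · exact h'
  by_cases hne : I \ {z} ⊆ {p}
  · obtain ⟨v, hv, hvz⟩ := h.exists_ne
    obtain rfl : v = p := hne ⟨hv, hvz⟩
    have hsub : ∀ b, G.Adj v b → b = x ∨ b = y ∨ b = z := by
      intro b hb
      rcases h.mem_of_adj hb with hb' | hb' | hb'
      · refine Or.inr (Or.inr ?_)
        by_contra hbz
        exact hb.ne (hne ⟨hb', hbz⟩).symm
      · exact Or.inl hb'
      · exact Or.inr (Or.inl hb')
    have hd := h.deg v hv hvz
    have hk : k = 2 := by
      have : (G.neighborSet v).ncard ≤ 3 :=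
        (Set.ncard_le_ncard (t := {x, y, z}) fun b hb => hsub b hb).trans ncard_triple_le
      have := h.hk
      omega
    subst hk
    obtain ⟨h1, h2, h3, -, -, -⟩ := nbr_triple hsub hd
    have hzx : G.Adj x z := by
      by_contra hzx
      refine h.cut' (A := {z}) (by simpa using hz) ⟨z, rfl⟩ v ?_
      rintro a rfl b hab
      rcases hN a rfl b hab with hb | rfl | hb
      · exact Or.inl hb
      · exact absurd hab.symm hzx
      · exact Or.inr hb
    exact h.bad ⟨fun _ => good2_of_23 (path2 h1.symm h2 h.ne)
      (path3 hzx h3.symm h2 h.ne h1.ne' (h.ne_y hz)), by omega⟩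
  · have hmem : ∀ v ∈ I \ {z}, v ≠ p → ∀ b, G.Adj v b → b ∈ I \ {z} ∨ b = x ∨ b = y := by
      intro v hv hvp b hvb
      refine (h.mem_of_adj hvb).imp_left fun hb => ⟨hb, ?_⟩
      rintro rfl
      exact hvp (hzp v hv.1 hvb)
    have hr : Rooted k ∅ (glue G (I \ {z}) {x} {y} x y) (I \ {z}) x y p := by
      refine h.glue_pair Set.sdiff_subset (fun h' => h.x_notMem h'.1) (fun h' => h.y_notMem h'.1)
        h.ne (fun v hv hvp => ⟨∅, by simpa using h.deg v hv.1 hv.2, fun b hb _ =>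
          hmem v hv hvp b hb⟩) ?_ hne
      intro A hA hAE r hr
      have hAI : A ⊆ I := hA.trans Set.sdiff_subset
      by_cases hpA : p ∈ A
      · have hpz : p ≠ z := (hA hpA).2
        by_cases hAz : insert z A = I
        · have hC : I \ {z} ⊆ A := by
            rintro v ⟨hv, hvz⟩
            rw [← hAz] at hv
            exact hv.resolve_left hvz
          by_cases hrx : r = x
          · obtain ⟨w, hw⟩ := h.symm.exists_adj_x
            have hwI := h.mem_of_adj_y hw
            by_cases hwz : w = z
            · subst hwz
              rcases hN w rfl y hw.symm with h' | h' | h'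
              · exact hw.ne h'
              · exact h.ne h'.symm
              · exact h.ne_y (hAI hpA) h'.symm
            · rcases hr w (hC ⟨hwI, hwz⟩) y (Or.inr (Or.inr rfl)) hw.symm with h' | h'
              · exact h.y_notMem (hAI h')
              · exact h.ne (hrx.symm.trans h'.symm)
          · obtain ⟨w, hw, hwz⟩ := h.exists_adj_x_ne z
            rcases hr w (hC ⟨h.mem_of_adj_x hw, hwz⟩) x (Or.inr (Or.inl rfl)) hw.symm with h' | h'
            · exact h.x_notMem (hAI h')
            · exact hrx h'.symm
        · refine h.not_nbrSub_of_not_subset (D := insert z A) (p := x) (q := r) ?_ ?_ hAz ?_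
          · rintro v (rfl | hv)
            · exact hz
            · exact hAI hv
          · exact fun h' => hpz (h' (Or.inr hpA))
          · rintro a (rfl | ha) b hab
            · rcases hN a rfl b hab with h' | h' | rfl
              · exact absurd h' hab.ne'
              · exact Or.inr (Or.inl h')
              · exact Or.inl (Or.inr hpA)
            · by_cases hbz : b = z
              · exact Or.inl (Or.inl hbz)
              rcases hr a ha b ((h.mem_of_adj hab).imp_left fun hb => ⟨hb, hbz⟩) hab with h' | h'
              · exact Or.inl (Or.inr h')
              · exact Or.inr (Or.inr h')
      · refine h.cut A hAI hAE r fun a ha b hab => ?_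
        exact hr a ha b (hmem a (hA ha) (fun h' => hpA (h' ▸ ha)) b hab) hab
    have hg := h.ih.conn hr (Set.ncard_lt_ncard (Set.sdiff_singleton_ssubset.2 hz))
    exact h.bad (hg.shift (c := 2) fun m hm => (hm.path_pair (fun h' => h.x_notMem h'.1)
      (fun h' => h.y_notMem h'.1) h.ne).mono (Set.subset_univ _))

/-- No set of non-root vertices is cut off by `x` and one further vertex. -/
lemma Crit.not_nbrSub (h : Crit k G I x y z) (hD : D ⊆ I) (hne : D.Nonempty) (hDI : D ≠ I) (p : V) :
    ¬ NbrSub G D {x, p} := by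
  by_cases hDz : D ⊆ {z}
  · obtain rfl := hne.subset_singleton_iff.1 hDz
    exact h.not_nbrSub_exc (hD rfl)
  · exact h.not_nbrSub_of_not_subset hD hDz hDI

lemma Crit.mem_comp_avoid (h : Crit k G I x y z) (hu : u ∈ I) (ha : a ∈ I) (hau : a ≠ u) :
    a ∈ comp G ((I ∪ {y}) \ {u}) y := by
  by_contra hc
  have hyu : y ∈ (I ∪ {y}) \ {u} := ⟨Or.inr rfl, (h.ne_y hu).symm⟩
  refine h.not_nbrSub (D := (I \ {u}) \ comp G ((I ∪ {y}) \ {u}) y) (fun v hv => hv.1.1)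
    ⟨a, ⟨ha, hau⟩, hc⟩ (fun h' => ?_) u ?_
  · rw [← h'] at hu
    exact hu.1.2 rfl
  · rintro v ⟨⟨hvI, hvu⟩, hv⟩ b hvb
    by_cases hbu : b = u
    · exact Or.inr (Or.inr hbu)
    by_cases hbc : b ∈ comp G ((I ∪ {y}) \ {u}) y
    · exact absurd (mem_comp_of_adj hbc hvb.symm ⟨Or.inl hvI, hvu⟩) hv
    rcases h.mem_of_adj hvb with h' | h' | rfl
    · exact Or.inl ⟨⟨h', hbu⟩, hbc⟩
    · exact Or.inr (Or.inl h')
    · exact absurd (mem_comp_self hyu) hbc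

end Critical

section FewCommonNeighbors

variable [Finite V] {G : SimpleGraph V} {I U : Set V} {v x y z : V} {k : ℕ}

lemma Crit.exists_two_common_nbrs (h : Crit k G I x y z) (htf : k = 3 → TF G x)
    (hd : ∀ a ∈ I, a ≠ z → G.Adj x a → G.Adj a y → ∃ d ∈ I, ¬ G.Adj x d ∧ G.Adj a d) :
    ∃ u ∈ I, ∃ a b, a ≠ b ∧ G.Adj x a ∧ G.Adj x b ∧ G.Adj u a ∧ G.Adj u b := by
  by_contra! h1
  have huniq : ∀ u ∈ I, ∀ a b, G.Adj x a → G.Adj x b → G.Adj u a → G.Adj u b → a = b := by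
    intro u hu a b ha hb hua hub
    by_contra hab
    exact h1 u hu a b hab ha hb hua hub
  have hzN : ∀ w, (∀ b, G.Adj z b → b = w ∨ G.Adj x b) → z ∈ I →
      ∃ p, NbrSub G {z} {w, p} := by
    intro w hw hz
    by_cases hp : ∃ p, G.Adj z p ∧ G.Adj x p
    · obtain ⟨p, hzp, hxp⟩ := hp
      refine ⟨p, ?_⟩
      rintro a rfl b hab
      exact Or.inr ((hw b hab).imp_right fun hb => huniq a hz b p hb hxp hab hzp)
    · refine ⟨w, ?_⟩
      rintro a rfl b hab
      exact Or.inr (Or.inl ((hw b hab).resolve_right fun hb => hp ⟨b, hab, hb⟩))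
  have hIz : ({z} : Set V) ≠ I := fun h' => h.nz h'.symm.subset
  obtain ⟨a₀, ha₀⟩ := h.exists_adj_x
  set U := (I ∪ {y}) \ G.neighborSet x with hU
  have hyU : y ∈ U := ⟨Or.inr rfl, h.not_adj⟩
  set C := comp G U y \ {y} with hC
  have hCI : C ⊆ I := fun v hv => (comp_subset hv.1).1.resolve_right hv.2
  have hCx : ∀ v ∈ C, ¬ G.Adj x v := fun v hv => (comp_subset hv.1).2
  have hxC : x ∉ C := fun h' => h.x_notMem (hCI h')
  have hyC : y ∉ C := fun h' => h'.2 rfl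
  have hCN : ∀ v ∈ C, ∀ b, G.Adj v b → b ∈ C ∨ G.Adj x b ∨ b = y := by
    intro v hv b hb
    by_cases hby : b = y
    · exact Or.inr (Or.inr hby)
    by_cases hxb : G.Adj x b
    · exact Or.inr (Or.inl hxb)
    rcases h.mem_of_adj hb with hb' | rfl | hb'
    · exact Or.inl ⟨mem_comp_of_adj hv.1 hb ⟨Or.inl hb', hxb⟩, hby⟩
    · exact absurd hb.symm (hCx v hv)
    · exact absurd hb' hby
  have hlt : ∀ D : Set V, D ⊆ I → (∀ v ∈ D, ¬ G.Adj x v) → D.ncard < I.ncard := fun D hD hDx =>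
    Set.ncard_lt_ncard (hD.ssubset_of_ne fun h' => hDx a₀ (h' ▸ h.mem_of_adj_x ha₀) ha₀)
  by_cases hCz : C ⊆ {z}
  · by_cases hCne : C.Nonempty
    · obtain hCz := hCne.subset_singleton_iff.1 hCz
      have hz : z ∈ C := hCz ▸ rfl
      obtain ⟨p, hp⟩ := hzN y (fun b hb => by
        rcases hCN z hz b hb with h' | h' | h'
        · rw [hCz] at h'
          exact absurd h' hb.ne'
        · exact Or.inr h'
        · exact Or.inl h') (hCI hz)
      exact h.symm.not_nbrSub (D := {z}) (by simpa using hCI hz) ⟨z, rfl⟩ hIz p hp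
    · have hyN : ∀ v, G.Adj y v → G.Adj x v := by
        intro v hv
        by_contra hxv
        exact hCne ⟨v, mem_comp_of_adj (mem_comp_self hyU) hv ⟨Or.inl (h.mem_of_adj_y hv), hxv⟩,
          hv.ne'⟩
      obtain ⟨a, hya, haz⟩ := h.symm.exists_adj_x_ne z
      have hxa := hyN a hya
      have haI := h.mem_of_adj_x hxa
      obtain ⟨d, hdI, hxd, had⟩ := hd a haI haz hxa hya.symm
      set A := comp G (I \ G.neighborSet x) d with hA
      have hAI : A ⊆ I := fun v hv => (comp_subset hv).1
      have hAx : ∀ v ∈ A, ¬ G.Adj x v := fun v hv => (comp_subset hv).2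
      have hdA : d ∈ A := mem_comp_self ⟨hdI, hxd⟩
      have hAN : ∀ v ∈ A, ∀ b, G.Adj v b → b ∈ A ∨ G.Adj x b := by
        intro v hv b hb
        by_cases hxb : G.Adj x b
        · exact Or.inr hxb
        rcases h.mem_of_adj hb with hb' | rfl | rfl
        · exact Or.inl (mem_comp_of_adj hv hb ⟨hb', hxb⟩)
        · exact absurd hb.symm (hAx v hv)
        · exact absurd (hyN v hb.symm) (hAx v hv)
      have hxA : x ∉ A := fun h' => h.x_notMem (hAI h')
      have hyA : y ∉ A := fun h' => h.y_notMem (hAI h')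
      have haA : a ∉ A := fun h' => hAx a h' hxa
      by_cases hAz : A ⊆ {z}
      · obtain rfl : d = z := hAz hdA
        refine h.cut' (A := {d}) (by simpa using hdI) ⟨d, rfl⟩ a ?_
        rintro v rfl b hb
        rcases hAN v hdA b hb with h' | h'
        · exact absurd (hAz h') hb.ne'
        · exact Or.inr (huniq v hdI b a h' hxa hb had.symm)
      · have hr : Rooted k ∅ (glue G A (G.neighborSet x \ {a}) {a} x y) A x y z := by
          refine rooted_glue h.ne hxA hyA ?_ ?_ ?_ ?_ hAz ?_
          · intro v hv hvz
            refine ⟨∅, by simpa using h.deg v (hAI hv) hvz, ?_, ?_, ?_⟩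
            · intro b hb _
              refine (hAN v hv b hb).imp_right fun hxb => ?_
              by_cases hba : b = a
              · exact Or.inr hba
              · exact Or.inl ⟨hxb, hba⟩
            · intro p hp p' hp' hvp hvp' _ _
              exact huniq v (hAI hv) p p' hp.1 hp'.1 hvp hvp'
            · rintro _ rfl _ rfl _ _ _ _
              rfl
          · intro A' hA' hne r hr hP hQ
            refine h.cut A' (hA'.trans hAI) hne r fun v hv b hb => ?_
            rcases hAN v (hA' hv) b hb with hb' | hb'
            · exact hr v hv b hb' hb
            · by_cases hba : b = a
              · exact absurd hb (hQ v hv b hba)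
              · exact absurd hb (hP v hv b ⟨hb', hba⟩)
          · intro A' hA' hne hcl hP
            refine h.cut A' (hA'.trans hAI) hne a fun v hv b hb => ?_
            rcases hAN v (hA' hv) b hb with hb' | hb'
            · exact Or.inl (hcl v hv b hb' hb)
            · by_cases hba : b = a
              · exact Or.inr hba
              · exact absurd hb (hP v hv b ⟨hb', hba⟩)
          · intro A' hA' hne hcl hQ
            exact hQ d (comp_subset_of_closed hA' (nonempty_of_not_subset_empty hne) hcl hdA) a rfl
              had.symm
          · exact fun hk => Or.inl ⟨a, rfl, (htf hk).tfon (by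
              rintro (h' | h')
              · exact hxa.ne h'
              · exact hxA h')⟩
        refine h.bad ((h.ih.conn hr (hlt A hAI hAx)).shift (c := 2 + 2) fun m hm => ?_)
        obtain ⟨p, hp, q, rfl, hpq⟩ := hm.path (fun p hp h' => hAx p h' hp.1)
          (fun q hq h' => haA (hq ▸ h')) (fun p hp => hp.2)
        have h1 := hpq.cons hp.1 (by
          rintro (h' | h' | h')
          · exact hp.1.ne h'
          · exact hxa.ne h'
          · exact hxA h')
        have h2 := h1.symm.cons hya (by
          rintro (h' | h' | h' | h')
          · exact h.ne h'.symm
          · exact h.not_adj (h' ▸ hp.1)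
          · exact hya.ne h'
          · exact hyA h')
        exact h2.symm.mono (Set.subset_univ _)
  · have hr : Rooted k ∅ (glue G C (G.neighborSet x) {y} x y) C x y z := by
      refine rooted_glue h.ne hxC hyC ?_ ?_ ?_ ?_ hCz ?_
      · intro v hv hvz
        refine ⟨∅, by simpa using h.deg v (hCI hv) hvz, fun b hb _ => hCN v hv b hb, ?_, ?_⟩
        · intro p hp p' hp' hvp hvp' _ _
          exact huniq v (hCI hv) p p' hp hp' hvp hvp'
        · rintro _ rfl _ rfl _ _ _ _
          rfl
      · intro A hA hne r hr hP hQ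
        refine h.cut A (hA.trans hCI) hne r fun v hv b hb => ?_
        rcases hCN v (hA hv) b hb with hb' | hb' | hb'
        · exact hr v hv b hb' hb
        · exact absurd hb (hP v hv b hb')
        · exact absurd hb (hQ v hv b hb')
      · intro A hA hne hcl hP
        refine h.cut A (hA.trans hCI) hne y fun v hv b hb => ?_
        rcases hCN v (hA hv) b hb with hb' | hb' | hb'
        · exact Or.inl (hcl v hv b hb' hb)
        · exact absurd hb (hP v hv b hb')
        · exact Or.inr hb'
      · intro A hA hne hcl hQ
        exact comp_diff_closed hA (nonempty_of_not_subset_empty hne) hcl fun a ha => hQ a ha y rfl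
      · exact fun hk => Or.inl ⟨y, rfl, (htf hk).tfon (by
          rintro (h' | h')
          · exact h.ne h'
          · exact hxC h')⟩
    refine h.bad ((h.ih.conn hr (hlt C hCI hCx)).shift (c := 2 + 1) fun m hm => ?_)
    obtain ⟨p, hp, q, rfl, hpq⟩ := hm.path (fun p hp h' => hCx p h' hp)
      (fun q hq h' => hyC (hq ▸ h')) (fun p hp h' => h.not_adj (h' ▸ hp))
    refine (hpq.cons hp ?_).mono (Set.subset_univ _)
    rintro (h' | h' | h')
    · exact SimpleGraph.Adj.ne hp h'
    · exact h.ne h'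
    · exact hxC h'

/-- The rooted two-path theorem. -/
theorem solved_two (N : ℕ) : Solved V 2 N := by
  induction N with
  | zero => exact fun G I x y z _ h => absurd h (Nat.not_lt_zero _)
  | succ N ih =>
    intro G I x y z hr hN
    by_contra hbad
    have h : Crit 2 G I x y z :=
      ⟨hr, Or.inl rfl, fun G' I' x' y' z' hr' hN' => ih G' I' x' y' z' hr' (by omega), hbad⟩
    have hgood : ∀ {S T : Set V} {m n : ℕ}, PathIn G S x y m → PathIn G T x y n →
        (m = n + 1 ∨ m = n + 2) → False := fun h1 h2 hmn =>
      hbad ⟨fun _ => ⟨_, _, h1.mono (Set.subset_univ _), h2.mono (Set.subset_univ _), hmn⟩,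
        by omega⟩
    have htri : ∀ a b, G.Adj x a → G.Adj x b → G.Adj a b → False := by
      intro a b ha hb hab
      have hac : a ∈ comp G (I ∪ {y}) y := by
        by_contra hac
        refine h.cut' (A := I \ comp G (I ∪ {y}) y) Set.sdiff_subset ⟨a, h.mem_of_adj_x ha, hac⟩ x ?_
        rintro v ⟨hv, hvc⟩ c hvc'
        by_cases hc : c ∈ comp G (I ∪ {y}) y
        · exact absurd (mem_comp_of_adj hc hvc'.symm (Or.inl hv)) hvc
        rcases h.mem_of_adj hvc' with h' | h' | rfl
        · exact Or.inl ⟨h', hc⟩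
        · exact Or.inr h'
        · exact absurd (mem_comp_self (show c ∈ I ∪ {c} from Or.inr rfl)) hc
      obtain ⟨l, hl⟩ := hac
      obtain ⟨w, hw, m, hm⟩ := hl.first_hit (W := {a, b}) (by simp)
      obtain ⟨w', hw', hxw', hww'⟩ : ∃ w' ∈ ({a, b} : Set V), G.Adj x w' ∧ G.Adj w' w := by
        rcases hw with rfl | rfl
        · exact ⟨b, by simp, hb, hab.symm⟩
        · exact ⟨a, by simp, ha, hab⟩
      have hxw : G.Adj x w := by rcases hw with rfl | rfl <;> assumption
      have hx : x ∉ (I ∪ {y}) := by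
        rintro (h' | h')
        · exact h.x_notMem h'
        · exact h.ne h'
      have h1 := hm.symm.cons hxw fun h' => hx h'.1
      have h2 := (hm.symm.cons hww' fun h' => h'.2 ⟨hw', hww'.ne⟩).cons hxw' (by
        rintro (h' | h')
        · exact hxw'.ne h'
        · exact hx h'.1)
      exact hgood h2 h1 (Or.inl rfl)
    obtain ⟨u, hu, a, b, hab, ha, hb, hua, hub⟩ := h.exists_two_common_nbrs (by omega) (by
      intro a ha haz hxa hay
      obtain ⟨d, had, hd⟩ := exists_nbr_notMem (S := {x, y})
        (ncard_pair_le.trans_lt (h.deg a ha haz))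
      refine ⟨d, ?_, fun hxd => htri a d hxa hxd had, had⟩
      rcases h.mem_of_adj had with h' | h' | h'
      · exact h'
      · exact absurd (Or.inl h') hd
      · exact absurd (Or.inr h') hd)
    have hux : u ≠ x := h.ne_x hu
    obtain ⟨l, hl⟩ := h.mem_comp_avoid hu (h.mem_of_adj_x ha) hua.ne'
    obtain ⟨w, hw, m, hm⟩ := hl.first_hit (W := {a, b}) (by simp)
    obtain ⟨w', hw', hww', hxw', huw'⟩ :
        ∃ w' ∈ ({a, b} : Set V), w' ≠ w ∧ G.Adj x w' ∧ G.Adj u w' := by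
      rcases hw with rfl | rfl
      · exact ⟨b, by simp, hab.symm, hb, hub⟩
      · exact ⟨a, by simp, hab, ha, hua⟩
    have hxw : G.Adj x w := by rcases hw with rfl | rfl <;> assumption
    have huw : G.Adj u w := by rcases hw with rfl | rfl <;> assumption
    have hx : x ∉ (I ∪ {y}) := by
      rintro (h' | h')
      · exact h.x_notMem h'
      · exact h.ne h'
    have h1 := hm.symm.cons hxw fun h' => hx h'.1.1
    have h2 := ((hm.symm.cons huw fun h' => h'.1.2 rfl).cons huw'.symm (by
      rintro (h' | h')
      · exact huw'.ne h'.symm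
      · exact h'.2 ⟨hw', hww'⟩)).cons hxw' (by
      rintro (h' | h' | h')
      · exact hxw'.ne h'
      · exact hux h'.symm
      · exact hx h'.1.1)
    exact hgood h2 h1 (Or.inr rfl)

end FewCommonNeighbors

section ThreePaths

variable {G : SimpleGraph V} {I C P Q E E' A D S T U S₁ S₂ S₃ : Set V}
  {a b c d u v w x y z e p q r : V} {k m n N l₁ l₂ l₃ : ℕ}

lemma Crit.false_of_three (h : Crit 3 G I x y z) (h₁ : PathIn G S₁ x y l₁)
    (h₂ : PathIn G S₂ x y l₂) (h₃ : PathIn G S₃ x y l₃)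
    (hl : (l₁ = l₂ + 2 ∧ l₂ = l₃ + 2) ∨ (l₁ = l₂ + 1 ∧ l₂ = l₃ + 2) ∨
      (l₁ = l₂ + 2 ∧ l₂ = l₃ + 1)) : False :=
  h.bad ⟨by omega, fun _ => ⟨l₁, l₂, l₃, h₁.mono (Set.subset_univ _), h₂.mono (Set.subset_univ _),
    h₃.mono (Set.subset_univ _), hl⟩⟩

lemma le_ncard_sdiff_singleton {N : Set V} (h : k + 1 ≤ N.ncard) : k ≤ (N \ {a}).ncard := by
  have := Set.pred_ncard_le_ncard_sdiff_singleton N a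
  omega

variable [Finite V]

/-- A set avoiding the exceptional vertex is not cut off by `x`, `u` and one further vertex. -/
lemma Crit.not_nbrSub_triple (h : Crit 3 G I x y z) (hA : A ⊆ I) (hne : A.Nonempty) (hzA : z ∉ A)
    (huA : u ∉ A) (hqA : q ∉ A) (hu : u ∈ I) (hqx : q ≠ x) (hqu : q ≠ u) (hAI : insert u A ≠ I) :
    ¬ NbrSub G A {x, u, q} := by
  intro hN
  have hCI : insert u A ⊆ I := Set.insert_subset hu hA
  have hxC : x ∉ insert u A := fun h' => h.x_notMem (hCI h')
  have hqC : q ∉ insert u A := by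
    rintro (h' | h')
    · exact hqu h'
    · exact hqA h'
  have hr : Rooted 3 {u} (glue G (insert u A) {x} {q} x y) (insert u A) x y u := by
    refine h.glue_pair hCI hxC hqC hqx.symm ?_ ?_ ?_
    · intro v hv hvu
      have hvA : v ∈ A := hv.resolve_left hvu
      refine ⟨∅, by simpa using h.deg v (hA hvA) fun h' => hzA (h' ▸ hvA), fun b hb _ => ?_⟩
      rcases hN v hvA b hb with h' | h' | h' | h'
      · exact Or.inl (Or.inr h')
      · exact Or.inr (Or.inl h')
      · exact Or.inl (Or.inl h')
      · exact Or.inr (Or.inr h')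
    · intro A' hA' hne' r hr
      obtain ⟨v, hv, hvu⟩ := Set.not_subset.1 hne'
      have hsub : A' \ {u} ⊆ A := fun w hw => (hA' hw.1).resolve_left hw.2
      refine h.not_nbrSub_of_not_subset (D := A' \ {u}) (p := u) (q := r) (hsub.trans hA)
        (fun h' => hzA (h' ⟨hv, hvu⟩ ▸ hsub ⟨hv, hvu⟩)) (fun h' => ?_) ?_
      · rw [← h'] at hu
        exact hu.2 rfl
      · intro a ha b hab
        by_cases hbu : b = u
        · exact Or.inr (Or.inl hbu)
        have hb : b ∈ insert u A ∨ b = x ∨ b = q := by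
          rcases hN a (hsub ha) b hab with h' | h' | h' | h'
          · exact Or.inl (Or.inr h')
          · exact Or.inr (Or.inl h')
          · exact absurd h' hbu
          · exact Or.inr (Or.inr h')
        rcases hr a ha.1 b hb hab with h' | h'
        · exact Or.inl ⟨h', hbu⟩
        · exact Or.inr (Or.inr h')
    · obtain ⟨v, hv⟩ := hne
      exact fun h' => huA (h' (Or.inr hv) ▸ hv)
  have hg := h.ih.conn_dangling (Or.inr rfl) hr (Set.ncard_lt_ncard (hCI.ssubset_of_ne hAI))
    (by omega)
  have hqI : q ∈ I ∪ {y} := by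
    by_contra hq
    refine h.not_nbrSub hA hne (fun h' => huA (h' ▸ hu)) u fun a ha b hab => ?_
    rcases hN a ha b hab with h' | h' | h' | rfl
    · exact Or.inl h'
    · exact Or.inr (Or.inl h')
    · exact Or.inr (Or.inr h')
    · rcases h.mem_of_adj hab with h' | h' | h'
      · exact absurd (Or.inl h') hq
      · exact absurd h' hqx
      · exact absurd (Or.inr h') hq
  set U := (I ∪ {y}) \ insert u A with hU
  have hqU : q ∈ U := ⟨hqI, hqC⟩
  have hy : y ∈ comp G U q := by
    by_contra hy
    refine h.not_nbrSub (D := comp G U q ∪ A) ?_ (hne.mono Set.subset_union_right) ?_ u ?_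
    · rintro v (hv | hv)
      · rcases (comp_subset hv).1 with h' | rfl
        · exact h'
        · exact absurd hv hy
      · exact hA hv
    · intro h'
      rw [← h'] at hu
      rcases hu with h' | h'
      · exact (comp_subset h').2 (Or.inl rfl)
      · exact huA h'
    · rintro a (ha | ha) b hab
      · by_cases hb : b ∈ insert u A
        · exact hb.symm.imp Or.inr fun h' => Or.inr h'
        rcases h.mem_of_adj hab with h' | h' | h'
        · exact Or.inl (Or.inl (mem_comp_of_adj ha hab ⟨Or.inl h', hb⟩))
        · exact Or.inr (Or.inl h')
        · exact Or.inl (Or.inl (mem_comp_of_adj ha hab ⟨Or.inr h', hb⟩))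
      · rcases hN a ha b hab with h' | h' | h' | rfl
        · exact Or.inl (Or.inr h')
        · exact Or.inr (Or.inl h')
        · exact Or.inr (Or.inr h')
        · exact Or.inl (Or.inl (mem_comp_self hqU))
  obtain ⟨l, hl⟩ := hy
  refine h.bad (hg.shift (c := 2 + l) fun m hm => ?_)
  rw [← add_assoc]
  refine ((hm.path_pair hxC hqC hqx.symm).append hl ?_).mono (Set.subset_univ _)
  rintro v (rfl | rfl | hv) hvU
  · exact absurd hvU.1 (by rintro (h' | h'); exacts [h.x_notMem h', h.ne h'])
  · rfl
  · exact absurd hv hvU.2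

lemma Crit.false_of_adj_y (h : Crit 3 G I x y z) (hq : q ∈ I) (hqy : G.Adj q y)
    (hdeg : ∀ w ∈ I, w ≠ q → w ≠ e → 4 ≤ (G.neighborSet w \ {y}).ncard) (hne : ¬ I \ {q} ⊆ {e}) :
    False := by
  have hxC : x ∉ I \ {q} := fun h' => h.x_notMem h'.1
  have hyC : y ∉ I \ {q} := fun h' => h.y_notMem h'.1
  have hqC : q ∉ I \ {q} := fun h' => h'.2 rfl
  have hmem : ∀ {b}, b ∈ I ∨ b = x → b ∈ I \ {q} ∨ b = x ∨ b = q := by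
    rintro b (hb | hb)
    · by_cases hbq : b = q
      · exact Or.inr (Or.inr hbq)
      · exact Or.inl ⟨hb, hbq⟩
    · exact Or.inr (Or.inl hb)
  have hr : Rooted 3 ∅ (glue G (I \ {q}) {x} {q} x y) (I \ {q}) x y e := by
    refine h.glue_pair Set.sdiff_subset hxC hqC (h.ne_x hq).symm ?_ ?_ hne
    · intro v hv hve
      refine ⟨{y}, hdeg v hv.1 hv.2 hve, fun b hb hby => hmem ?_⟩
      rcases h.mem_of_adj hb with h' | h' | h'
      · exact Or.inl h'
      · exact Or.inr h'
      · exact absurd h' hby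
    · intro A hA hne r hr
      refine h.symm.not_nbrSub (D := A) (hA.trans Set.sdiff_subset)
        (nonempty_of_not_subset_empty hne) (fun h' => hqC (hA (h' ▸ hq))) r ?_
      intro a ha b hab
      by_cases hby : b = y
      · exact Or.inr (Or.inl hby)
      refine (hr a ha b (hmem ?_) hab).imp_right Or.inr
      rcases h.mem_of_adj hab with h' | h' | h'
      · exact Or.inl h'
      · exact Or.inr h'
      · exact absurd h' hby
  have hg := h.ih.conn hr (Set.ncard_lt_ncard (Set.sdiff_singleton_ssubset.2 hq))
  refine h.bad (hg.shift (c := 2 + 1) fun m hm => ?_)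
  have h1 := (hm.path_pair hxC hqC (h.ne_x hq).symm).symm.cons hqy.symm (by
    rintro (h' | h' | h')
    · exact h.ne h'.symm
    · exact hqy.ne h'.symm
    · exact hyC h')
  exact h1.symm.mono (Set.subset_univ _)

/-- Around `u`, the vertices adjacent to `x` have few common neighbours with `x` and `u`. -/
lemma Crit.common_nbr_unique_of_adj (h : Crit 3 G I x y z) (hu : u ∈ I) (huv : u ≠ v)
    (hxv : G.Adj x v) (hxa : G.Adj x a) (hxb : G.Adj x b) (hua : G.Adj u a) (hub : G.Adj u b)
    (hva : G.Adj v a) (hvb : G.Adj v b) : a = b := by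
  by_contra hab
  have hux := h.ne_x hu
  have hx : x ∉ I ∪ {y} := by
    rintro (h' | h')
    · exact h.x_notMem h'
    · exact h.ne h'
  have key : ∀ {a b : V} {S : Set V} {m : ℕ}, a ≠ b → G.Adj x a → G.Adj x b → G.Adj u a →
      G.Adj u b → G.Adj v a → G.Adj v b → PathIn G S y a m → x ∉ S → u ∉ S → v ∉ S → b ∉ S →
      False := by
    intro a b S m hab hxa hxb hua hub hva hvb hm hxS huS hvS hbS
    have h1 := hm.symm.cons hxa hxS
    have h2 := (hm.symm.cons hva hvS).cons hxv (by grind [SimpleGraph.Adj.ne])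
    have h4 := (((hm.symm.cons hua huS).cons hub.symm (by grind [SimpleGraph.Adj.ne])).cons hvb
      (by grind [SimpleGraph.Adj.ne])).cons hxv (by grind [SimpleGraph.Adj.ne])
    exact h.false_of_three h4 h2 h1 (by omega)
  obtain ⟨l, hl⟩ := h.mem_comp_avoid hu (h.mem_of_adj_x hxa) hua.ne'
  obtain ⟨w, hw, m, hm⟩ := hl.first_hit (W := {a, b, v}) (by simp)
  have hxS : x ∉ ((I ∪ {y}) \ {u}) \ ({a, b, v} \ {w}) := fun h' => hx h'.1.1
  have huS : u ∉ ((I ∪ {y}) \ {u}) \ ({a, b, v} \ {w}) := fun h' => h'.1.2 rfl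
  rcases hw with rfl | rfl | rfl
  · exact key hab hxa hxb hua hub hva hvb hm hxS huS (by grind [SimpleGraph.Adj.ne])
      (by grind [SimpleGraph.Adj.ne])
  · exact key (Ne.symm hab) hxb hxa hub hua hvb hva hm hxS huS (by grind [SimpleGraph.Adj.ne])
      (by grind [SimpleGraph.Adj.ne])
  · have haS : a ∉ ((I ∪ {y}) \ {u}) \ ({a, b, w} \ {w}) := by grind [SimpleGraph.Adj.ne]
    have hbS : b ∉ ((I ∪ {y}) \ {u}) \ ({a, b, w} \ {w}) := by grind [SimpleGraph.Adj.ne]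
    have h1 := hm.symm.cons hxv hxS
    have h2 := (hm.symm.cons hva.symm haS).cons hxa (by grind [SimpleGraph.Adj.ne])
    have h4 := (((hm.symm.cons hvb.symm hbS).cons hub (by grind [SimpleGraph.Adj.ne])).cons hua.symm
      (by grind [SimpleGraph.Adj.ne])).cons hxa (by grind [SimpleGraph.Adj.ne])
    exact h.false_of_three h4 h2 h1 (by omega)

end ThreePaths

section ThreeCommonNeighbors

variable {G : SimpleGraph V} {I C P Q A D S T U : Set V}
  {a b c d t u v w x y z p q r : V} {k m n N : ℕ}

lemma Rooted.x_notMem_union (h : Rooted k D G I x y z) : x ∉ I ∪ {y} := by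
  rintro (h' | h')
  · exact h.x_notMem h'
  · exact h.ne h'

lemma Crit.false_of_common_mem_comp (h : Crit 3 G I x y z) (hu : u ∈ I) (hv : v ∈ I)
    (huv : u ≠ v) (hab : a ≠ b) (hac : a ≠ c) (hbc : b ≠ c)
    (hxa : G.Adj x a) (hxb : G.Adj x b) (hxc : G.Adj x c) (hua : G.Adj u a) (hub : G.Adj u b)
    (huc : G.Adj u c) (hva : G.Adj v a) (hvb : G.Adj v b) (hvc : G.Adj v c)
    (hxt : G.Adj x t) (hut : G.Adj u t) (hvt : G.Adj v t) :
    t ∉ comp G ((I ∪ {y}) \ {u, v}) y := by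
  rintro ⟨l, hl⟩
  set W : Set V := {w | G.Adj x w ∧ G.Adj u w ∧ G.Adj v w} with hW
  obtain ⟨s, ⟨hxs, hus, hvs⟩, m, hm⟩ := hl.first_hit (W := W) ⟨hxt, hut, hvt⟩
  set R := ((I ∪ {y}) \ {u, v}) \ (W \ {s}) with hR
  have hx : x ∉ R := fun h' => h.x_notMem_union h'.1.1
  have huR : u ∉ R := fun h' => h'.1.2 (Or.inl rfl)
  have hvR : v ∉ R := fun h' => h'.1.2 (Or.inr rfl)
  have hux := h.ne_x hu
  have hvx := h.ne_x hv
  have key : ∀ {b c}, b ∈ W → c ∈ W → b ≠ c → b ≠ s → c ≠ s → False := by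
    intro b c hb hc hbc hbs hcs
    have hbR : b ∉ R := fun h' => h'.2 ⟨hb, hbs⟩
    have hcR : c ∉ R := fun h' => h'.2 ⟨hc, hcs⟩
    obtain ⟨hxb, hub, hvb⟩ := hb
    obtain ⟨hxc, huc, hvc⟩ := hc
    have h1 := hm.symm.cons hxs hx
    have h3 := ((hm.symm.cons hus huR).cons hub.symm (by grind [SimpleGraph.Adj.ne])).cons hxb
      (by grind [SimpleGraph.Adj.ne])
    have h5 := ((((hm.symm.cons hvs hvR).cons hvc.symm (by grind [SimpleGraph.Adj.ne])).cons huc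
      (by grind [SimpleGraph.Adj.ne])).cons hub.symm (by grind [SimpleGraph.Adj.ne])).cons hxb
      (by grind [SimpleGraph.Adj.ne])
    exact h.false_of_three h5 h3 h1 (by omega)
  have haW : a ∈ W := ⟨hxa, hua, hva⟩
  have hbW : b ∈ W := ⟨hxb, hub, hvb⟩
  have hcW : c ∈ W := ⟨hxc, huc, hvc⟩
  by_cases has : a = s
  · exact key hbW hcW hbc (has ▸ hab.symm) (has ▸ hac.symm)
  by_cases hbs : b = s
  · exact key haW hcW hac has (hbs ▸ hbc.symm)
  · exact key haW hbW hab has hbs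

variable [Finite V]

lemma Crit.false_of_exc_adj_y (h : Crit 3 G I x y z) (htf : TF G x) (hz : z ∈ I) (hu : u ∈ I)
    (hv : v ∈ I) (huv : u ≠ v) (hab : a ≠ b) (hxa : G.Adj x a) (hxb : G.Adj x b)
    (hua : G.Adj u a) (hub : G.Adj u b)
    (hva : G.Adj v a) (hvb : G.Adj v b) (hzy : G.Adj z y) (huy : G.Adj u y)
    (hzN : NbrSub G {z} {x, u, v, y}) : False := by
  have hux := h.ne_x hu
  have hvx := h.ne_x hv
  have hzx := h.ne_x hz
  have huy' := h.ne_y hu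
  have hvy' := h.ne_y hv
  have hzu : ¬ G.Adj z u := fun hzu => htf z u y hzx hux h.ne.symm hzu huy hzy
  have hay : a ≠ y := fun h' => h.not_adj (h' ▸ hxa)
  have hby : b ≠ y := fun h' => h.not_adj (h' ▸ hxb)
  have hxz : G.Adj x z := by
    by_contra hxz
    refine h.symm.not_nbrSub (D := {z}) (by simpa using hz) ⟨z, rfl⟩
      (fun h' => h.nz h'.symm.subset) v ?_
    rintro _ rfl b hb
    rcases hzN _ rfl b hb with h' | h' | h' | h' | h'
    · exact absurd h' hb.ne'
    · exact absurd (h' ▸ hb.symm) hxz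
    · exact absurd (h' ▸ hb) hzu
    · exact Or.inr (Or.inr h')
    · exact Or.inr (Or.inl h')
  have hxy := h.ne
  have h2 := path2 hxz hzy hxy
  have h3 := path3 hxa hua.symm huy h.ne hux.symm hay
  have h5 := (((path2 hub.symm huy hby).cons hvb (by grind [SimpleGraph.Adj.ne])).cons hva.symm
    (by grind [SimpleGraph.Adj.ne])).cons hxa (by grind [SimpleGraph.Adj.ne])
  exact h.false_of_three h5 h3 h2 (by omega)

/-- Two vertices with three common neighbours in the neighbourhood of `x` separate `y`. -/
lemma Crit.comp_eq_of_three_common (h : Crit 3 G I x y z) (htf : TF G x) (hu : u ∈ I) (hv : v ∈ I)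
    (huv : u ≠ v) (hab : a ≠ b) (hac : a ≠ c) (hbc : b ≠ c)
    (hxa : G.Adj x a) (hxb : G.Adj x b) (hxc : G.Adj x c) (hua : G.Adj u a) (hub : G.Adj u b)
    (huc : G.Adj u c) (hva : G.Adj v a) (hvb : G.Adj v b) (hvc : G.Adj v c) :
    comp G ((I ∪ {y}) \ {u, v}) y \ {y} = ∅ := by
  have hW : ∀ t, G.Adj x t → G.Adj u t → G.Adj v t → t ∉ comp G ((I ∪ {y}) \ {u, v}) y :=
    fun t => h.false_of_common_mem_comp hu hv huv hab hac hbc hxa hxb hxc hua hub huc hva hvb hvc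
  have hux := h.ne_x hu
  have hvx := h.ne_x hv
  have huy := h.ne_y hu
  have hvy := h.ne_y hv
  have hyU : y ∈ (I ∪ {y}) \ {u, v} := ⟨Or.inr rfl, by rintro (h' | h'); exacts [huy h'.symm, hvy h'.symm]⟩
  have hay : a ≠ y := fun h' => h.not_adj (h' ▸ hxa)
  have hby : b ≠ y := fun h' => h.not_adj (h' ▸ hxb)
  set C := comp G ((I ∪ {y}) \ {u, v}) y \ {y} with hC
  have hCI : C ⊆ I := fun w hw => (comp_subset hw.1).1.resolve_right hw.2
  have huC : u ∉ C := fun h' => (comp_subset h'.1).2 (Or.inl rfl)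
  have hvC : v ∉ C := fun h' => (comp_subset h'.1).2 (Or.inr rfl)
  have hxC : x ∉ C := fun h' => h.x_notMem (hCI h')
  have hyC : y ∉ C := fun h' => h'.2 rfl
  have hCN : ∀ w ∈ comp G ((I ∪ {y}) \ {u, v}) y, ∀ b, G.Adj w b →
      b ∈ C ∨ b = x ∨ b = u ∨ b = v ∨ b = y := by
    intro w hw b hb
    by_cases hby : b = y
    · simp [hby]
    by_cases hbu : b = u
    · simp [hbu]
    by_cases hbv : b = v
    · simp [hbv]
    rcases h.mem_of_adj hb with hb' | hb' | hb'
    · refine Or.inl ⟨mem_comp_of_adj hw hb ⟨Or.inl hb', ?_⟩, hby⟩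
      rintro (h' | h')
      · exact hbu h'
      · exact hbv h'
    · exact Or.inr (Or.inl hb')
    · exact absurd hb' hby
  by_cases hCz : C ⊆ {z}
  · by_contra hCne
    have hCne := Set.nonempty_iff_ne_empty.2 hCne
    have hCz := hCne.subset_singleton_iff.1 hCz
    have hzC : z ∈ C := hCz ▸ rfl
    have hz := hCI hzC
    have hzy : G.Adj z y := by
      by_contra hzy
      refine comp_diff_closed (A := {z}) (by rw [← hC, hCz]) ⟨z, rfl⟩ ?_ ?_
      · rintro a - b hb -
        rwa [← hC, hCz] at hb
      · rintro _ rfl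
        exact hzy
    have hzN : NbrSub G {z} {x, u, v, y} := by
      rintro _ rfl b hb
      rcases hCN _ hzC.1 b hb with h' | h'
      · rw [hCz] at h'
        exact Or.inl h'
      · exact Or.inr h'
    obtain ⟨s, hys, hsz⟩ := h.symm.exists_adj_x_ne z
    rcases hCN y (mem_comp_self hyU) s hys with h' | rfl | rfl | rfl | rfl
    · rw [hCz] at h'
      exact hsz h'
    · exact h.not_adj hys.symm
    · exact h.false_of_exc_adj_y htf hz hu hv huv hab hxa hxb hua hub hva hvb hzy hys.symm hzN
    · refine h.false_of_exc_adj_y htf hz hv hu huv.symm hab hxa hxb hva hvb hua hub hzy hys.symm ?_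
      rwa [Set.insert_comm s u]
    · exact hys.ne rfl
  exfalso
  have hr : Rooted 2 ∅ (glue G C {u, v} {y} x y) C x y z := by
    refine rooted_glue h.ne hxC hyC ?_ ?_ ?_ ?_ hCz (by omega)
    · intro w hw hwz
      by_cases hxw : G.Adj x w
      · refine ⟨{x}, le_ncard_sdiff_singleton (h.deg w (hCI hw) hwz), ?_, ?_, ?_⟩
        · intro b hb hbx
          have := hCN w hw.1 b hb
          simp only [Set.mem_singleton_iff, Set.mem_insert_iff] at hbx ⊢
          tauto
        · have := hW w hxw
          rintro _ (rfl | rfl) _ (rfl | rfl) h1 h2 - -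
          · rfl
          · exact absurd hw.1 (this h1.symm h2.symm)
          · exact absurd hw.1 (this h2.symm h1.symm)
          · rfl
        · rintro _ rfl _ rfl - - - -
          rfl
      · refine ⟨{v}, le_ncard_sdiff_singleton (h.deg w (hCI hw) hwz), ?_, ?_, ?_⟩
        · intro b hb hbx
          have := hCN w hw.1 b hb
          have : b ≠ x := by
            rintro rfl
            exact hxw hb.symm
          simp only [Set.mem_singleton_iff, Set.mem_insert_iff] at hbx ⊢
          tauto
        · rintro _ (rfl | rfl) _ (rfl | rfl) - - h1 h2
          · rfl
          · exact absurd rfl h2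
          · exact absurd rfl h1
          · rfl
        · rintro _ rfl _ rfl - - - -
          rfl
    · intro A hA hne r hr hP hQ
      refine h.not_nbrSub (hA.trans hCI) (nonempty_of_not_subset_empty hne)
        (fun h' => huC (hA (h' ▸ hu))) r fun w hw b hb => ?_
      rcases hCN w (hA hw).1 b hb with h' | h' | h' | h' | h'
      · exact (hr w hw b h' hb).imp_right Or.inr
      · exact Or.inr (Or.inl h')
      · exact absurd hb (hP w hw b (Or.inl h'))
      · exact absurd hb (hP w hw b (Or.inr h'))
      · exact absurd hb (hQ w hw b h')
    · intro A hA hne hcl hP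
      refine h.not_nbrSub (hA.trans hCI) (nonempty_of_not_subset_empty hne)
        (fun h' => huC (hA (h' ▸ hu))) y fun w hw b hb => ?_
      rcases hCN w (hA hw).1 b hb with h' | h' | h' | h' | h'
      · exact Or.inl (hcl w hw b h' hb)
      · exact Or.inr (Or.inl h')
      · exact absurd hb (hP w hw b (Or.inl h'))
      · exact absurd hb (hP w hw b (Or.inr h'))
      · exact Or.inr (Or.inr h')
    · intro A hA hne hcl hQ
      exact comp_diff_closed hA (nonempty_of_not_subset_empty hne) hcl fun a ha => hQ a ha y rfl
  refine h.bad (((solved_two _).conn hr (Nat.lt_succ_self _)).two_to_three (c := 4) fun m hm => ?_)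
  obtain ⟨p, hp, q, rfl, hpq⟩ := hm.path (by simp [huC, hvC]) (fun q hq => hq ▸ hyC)
    (by simp [huy, hvy])
  have haC : a ∉ C := fun h' => hW a hxa hua hva h'.1
  have hbC : b ∉ C := fun h' => hW b hxb hub hvb h'.1
  have key : ∀ {p p'}, p ≠ p' → p ≠ x → p' ≠ x → p' ∉ C → p' ≠ q → G.Adj p a → G.Adj p b →
      G.Adj p' a → G.Adj p' b → PathIn G (insert p (insert q C)) p q (m + 2) →
      PathIn G Set.univ x q (m + 4) ∧ PathIn G Set.univ x q (m + 4 + 2) := by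
    intro p p' hpp hpx hpx' hpC hpy hpa hpb hpa' hpb' hp
    have hxy := h.ne
    have h2 := (hp.cons hpa.symm (by grind [SimpleGraph.Adj.ne])).cons hxa
      (by grind [SimpleGraph.Adj.ne])
    have h4 := (((hp.cons hpb.symm (by grind [SimpleGraph.Adj.ne])).cons hpb'
      (by grind [SimpleGraph.Adj.ne])).cons hpa'.symm (by grind [SimpleGraph.Adj.ne])).cons hxa
      (by grind [SimpleGraph.Adj.ne])
    exact ⟨h2.mono (Set.subset_univ _), h4.mono (Set.subset_univ _)⟩
  rcases hp with rfl | rfl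
  · exact key huv hux hvx hvC hvy hua hub hva hvb hpq
  · exact key huv.symm hvx hux huC huy hva hvb hua hub hpq

omit [Finite V] in
lemma PathIn.extend_through (hm : PathIn G (insert p (insert q A)) p q n) (hqu : G.Adj q u)
    (hqv : G.Adj q v) (hur : G.Adj u r) (hvr : G.Adj v r) (huy : G.Adj u y) (hpu : p ≠ u)
    (hpv : p ≠ v) (hpr : p ≠ r) (hpy : p ≠ y) (hqr : q ≠ r) (hqy : q ≠ y) (hry : r ≠ y)
    (huv : u ≠ v) (hvy : v ≠ y) (hu : u ∉ A) (hv : v ∉ A) (hr : r ∉ A) (hy : y ∉ A) :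
    PathIn G Set.univ p y (n + 2) ∧ PathIn G Set.univ p y (n + 2 + 2) := by
  have h2 := (hm.symm.cons hqu.symm (by grind [SimpleGraph.Adj.ne])).cons huy.symm
    (by grind [SimpleGraph.Adj.ne])
  have h4 := (((hm.symm.cons hqv.symm (by grind [SimpleGraph.Adj.ne])).cons hvr.symm
    (by grind [SimpleGraph.Adj.ne])).cons hur (by grind [SimpleGraph.Adj.ne])).cons huy.symm
    (by grind [SimpleGraph.Adj.ne])
  exact ⟨h2.symm.mono (Set.subset_univ _), h4.symm.mono (Set.subset_univ _)⟩

omit [Finite V] in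
lemma PathIn.extend_both (hm : PathIn G (insert p (insert q A)) p q n) (hqu : G.Adj q u)
    (hqv : G.Adj q v) (hur : G.Adj u r) (hxp : G.Adj x p) (hup : G.Adj u p) (hxr : G.Adj x r)
    (huy : G.Adj u y) (hvy : G.Adj v y) (hpr : p ≠ r) (hqr : q ≠ r) (hpy : p ≠ y) (hqy : q ≠ y)
    (hry : r ≠ y) (huv : u ≠ v) (hxq : x ≠ q) (hxy : x ≠ y) (hux : u ≠ x) (hvx : v ≠ x)
    (hpv : p ≠ v) (hrv : r ≠ v) (hx : x ∉ A) (hu : u ∉ A) (hv : v ∉ A) (hr : r ∉ A) (hy : y ∉ A) :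
    PathIn G Set.univ x y (n + 3) ∧ PathIn G Set.univ x y (n + 3 + 2) := by
  have h2 := ((hm.symm.cons hqu.symm (by grind [SimpleGraph.Adj.ne])).cons huy.symm
    (by grind [SimpleGraph.Adj.ne])).symm.cons hxp (by grind [SimpleGraph.Adj.ne])
  have h4 := ((((hm.symm.cons hqv.symm (by grind [SimpleGraph.Adj.ne])).cons hvy.symm
    (by grind [SimpleGraph.Adj.ne])).symm.cons hup (by grind [SimpleGraph.Adj.ne])).cons hur.symm
    (by grind [SimpleGraph.Adj.ne])).cons hxr (by grind [SimpleGraph.Adj.ne])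
  exact ⟨h2.mono (Set.subset_univ _), h4.mono (Set.subset_univ _)⟩

lemma Crit.false_of_nbrs_eq (h : Crit 3 G I x y z) (htf : TF G x) (hu : u ∈ I) (hv : v ∈ I)
    (huv : u ≠ v) (hab : a ≠ b) (hac : a ≠ c) (hbc : b ≠ c)
    (hxa : G.Adj x a) (hxb : G.Adj x b) (hxc : G.Adj x c) (hua : G.Adj u a) (hub : G.Adj u b)
    (huc : G.Adj u c) (hva : G.Adj v a) (hvb : G.Adj v b) (hvc : G.Adj v c)
    (huy : G.Adj u y) (hvy : G.Adj v y) (hyN : ∀ w, G.Adj y w → w = u ∨ w = v)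
    (huN : ∀ w, G.Adj u w → w = y ∨ w = a ∨ w = b ∨ w = c)
    (hvN : ∀ w, G.Adj v w → w = y ∨ w = a ∨ w = b ∨ w = c)
    (huniq : ∀ w ∈ I, w ≠ u → w ≠ v → ∀ s ∈ ({a, b, c} : Set V), ∀ t ∈ ({a, b, c} : Set V),
      G.Adj w s → G.Adj w t → s = t) (haz : a ≠ z) : False := by
  have hux := h.ne_x hu
  have hvx := h.ne_x hv
  have hxy := h.ne
  have hmem : ∀ t ∈ ({a, b, c} : Set V), G.Adj x t ∧ G.Adj u t ∧ G.Adj v t := by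
    rintro t (rfl | rfl | rfl)
    · exact ⟨hxa, hua, hva⟩
    · exact ⟨hxb, hub, hvb⟩
    · exact ⟨hxc, huc, hvc⟩
  have haI := h.mem_of_adj_x hxa
  obtain ⟨d, had, hd⟩ := exists_nbr_notMem (S := {x, u, v})
    (ncard_triple_le.trans_lt (h.deg a haI haz))
  simp only [Set.mem_insert_iff, Set.mem_singleton_iff, not_or] at hd
  obtain ⟨hdx, hdu, hdv⟩ := hd
  have hdt : ∀ t ∈ ({a, b, c} : Set V), d ≠ t := by
    rintro t ht rfl
    obtain ⟨hxt, hut, -⟩ := hmem d ht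
    exact htf u a d hux hxa.ne' hdx hua had hut
  have hdy : d ≠ y := by
    rintro rfl
    rcases hyN a had.symm with rfl | rfl
    · exact hua.ne rfl
    · exact hva.ne rfl
  have hdI : d ∈ I := by
    rcases h.mem_of_adj had with h' | h' | h'
    · exact h'
    · exact absurd h' hdx
    · exact absurd h' hdy
  set U := I \ ({u, v} ∪ {a, b, c}) with hU
  have hdU : d ∈ U := by
    refine ⟨hdI, ?_⟩
    rintro ((h' | h') | h')
    · exact hdu h'
    · exact hdv h'
    · exact hdt d h' rfl
  set A := comp G U d with hA
  have hAI : A ⊆ I := fun w hw => (comp_subset hw).1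
  have hdA : d ∈ A := mem_comp_self hdU
  have huA : u ∉ A := fun h' => (comp_subset h').2 (by simp)
  have hvA : v ∉ A := fun h' => (comp_subset h').2 (by simp)
  have htA : ∀ t ∈ ({a, b, c} : Set V), t ∉ A := fun t ht h' => (comp_subset h').2 (Or.inr ht)
  have hxA : x ∉ A := fun h' => h.x_notMem (hAI h')
  have hyA : y ∉ A := fun h' => h.y_notMem (hAI h')
  have hAN : ∀ w ∈ A, ∀ s, G.Adj w s → s ∈ A ∨ s = x ∨ s ∈ ({a, b, c} : Set V) := by
    intro w hw s hs
    by_cases hst : s ∈ ({a, b, c} : Set V)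
    · exact Or.inr (Or.inr hst)
    rcases h.mem_of_adj hs with h' | h' | rfl
    · refine Or.inl (mem_comp_of_adj hw hs ⟨h', ?_⟩)
      rintro ((rfl | rfl) | h'')
      · rcases huN w hs.symm with rfl | h''
        · exact hyA hw
        · exact htA w h'' hw
      · rcases hvN w hs.symm with rfl | h''
        · exact hyA hw
        · exact htA w h'' hw
      · exact hst h''
    · exact Or.inr (Or.inl h')
    · rcases hyN w hs.symm with rfl | rfl
      · exact absurd hw huA
      · exact absurd hw hvA
  have hAuniq : ∀ w ∈ A, ∀ s ∈ ({a, b, c} : Set V), ∀ t ∈ ({a, b, c} : Set V),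
      G.Adj w s → G.Adj w t → s = t := fun w hw =>
    huniq w (hAI hw) (fun h' => huA (h' ▸ hw)) (fun h' => hvA (h' ▸ hw))
  have hAz : ¬ A ⊆ {z} := by
    intro hAz
    obtain rfl : d = z := hAz hdA
    refine h.not_nbrSub (D := {d}) (by simpa using hdI) ⟨d, rfl⟩ (fun h' => h.nz h'.symm.subset) a ?_
    rintro w rfl s hs
    rcases hAN w hdA s hs with h' | h' | h'
    · exact absurd (hAz h') hs.ne'
    · exact Or.inr (Or.inl h')
    · exact Or.inr (Or.inr (hAuniq w hdA s h' a (by simp) hs had.symm))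
  have hcl : ∀ A' ⊆ A, ¬ A' ⊆ ∅ → (∀ a ∈ A', ∀ b ∈ A, G.Adj a b → b ∈ A') → A ⊆ A' :=
    fun A' hA' hne hcl => comp_subset_of_closed hA' (nonempty_of_not_subset_empty hne) hcl
  by_cases hxN : ∃ w ∈ A, G.Adj x w
  · obtain ⟨w₀, hw₀, hxw₀⟩ := hxN
    have hr : Rooted 2 ∅ (glue G A {x} {a, b, c} x y) A x y z := by
      refine rooted_glue hxy hxA hyA ?_ ?_ ?_ ?_ hAz (by omega)
      · intro w hw hwz
        refine ⟨∅, ?_, fun s hs _ => hAN w hw s hs, ?_, fun s hs t ht hws hwt _ _ =>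
          hAuniq w hw s hs t ht hws hwt⟩
        · have := h.deg w (hAI hw) hwz
          rw [Set.sdiff_empty]
          omega
        · rintro _ rfl _ rfl - - - -
          rfl
      · intro A' hA' hne r hr hP hQ
        refine h.cut A' (hA'.trans hAI) hne r fun w hw s hs => ?_
        rcases hAN w (hA' hw) s hs with h' | h' | h'
        · exact hr w hw s h' hs
        · exact absurd hs (hP w hw s h')
        · exact absurd hs (hQ w hw s h')
      · intro A' hA' hne hc hP
        exact hP w₀ (hcl A' hA' hne hc hw₀) x rfl hxw₀.symm
      · intro A' hA' hne hc hQ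
        exact hQ d (hcl A' hA' hne hc hdA) a (by simp) had.symm
    refine h.bad (((solved_two _).conn hr (Nat.lt_succ_self _)).two_to_three (c := 4)
      fun m hm => ?_)
    obtain ⟨p, rfl, q, hq, hpq⟩ := hm.path (fun p hp => hp ▸ hxA) htA
      (by rintro p rfl h'; exact (hmem p h').1.ne rfl)
    obtain ⟨hxq, huq, hvq⟩ := hmem q hq
    obtain ⟨q', hq', hqq⟩ : ∃ q' ∈ ({a, b, c} : Set V), q ≠ q' := by
      by_cases hqa : q = a
      · exact ⟨b, by simp, hqa ▸ hab⟩
      · exact ⟨a, by simp, hqa⟩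
    obtain ⟨hxq', huq', hvq'⟩ := hmem q' hq'
    have hqy : q ≠ y := fun h' => h.not_adj (h' ▸ hxq)
    have hqy' : q' ≠ y := fun h' => h.not_adj (h' ▸ hxq')
    have hqA' := htA q' hq'
    exact hpq.extend_through huq.symm hvq.symm huq' hvq' huy hux.symm hvx.symm hxq'.ne hxy hqq hqy hqy'
      huv hvy.ne huA hvA hqA' hyA
  · have hAN' : ∀ w ∈ A, ∀ s, G.Adj w s → s ∈ A ∨ s = a ∨ s ∈ ({b, c} : Set V) := by
      intro w hw s hs
      rcases hAN w hw s hs with h' | rfl | h' | h'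
      · exact Or.inl h'
      · exact absurd ⟨w, hw, hs.symm⟩ hxN
      · exact Or.inr (Or.inl h')
      · exact Or.inr (Or.inr h')
    have hr : Rooted 2 ∅ (glue G A {a} {b, c} x y) A x y z := by
      refine rooted_glue hxy hxA hyA ?_ ?_ ?_ ?_ hAz (by omega)
      · intro w hw hwz
        refine ⟨∅, ?_, fun s hs _ => hAN' w hw s hs, ?_, fun s hs t ht hws hwt _ _ =>
          hAuniq w hw s (Or.inr hs) t (Or.inr ht) hws hwt⟩
        · have := h.deg w (hAI hw) hwz
          rw [Set.sdiff_empty]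
          omega
        · rintro _ rfl _ rfl - - - -
          rfl
      · intro A' hA' hne r hr hP hQ
        refine h.cut A' (hA'.trans hAI) hne r fun w hw s hs => ?_
        rcases hAN' w (hA' hw) s hs with h' | h' | h'
        · exact hr w hw s h' hs
        · exact absurd hs (hP w hw s h')
        · exact absurd hs (hQ w hw s h')
      · intro A' hA' hne hc hP
        exact hP d (hcl A' hA' hne hc hdA) a rfl had.symm
      · intro A' hA' hne hc hQ
        refine h.cut A' (hA'.trans hAI) hne a fun w hw s hs => ?_
        rcases hAN' w (hA' hw) s hs with h' | h' | h'
        · exact Or.inl (hc w hw s h' hs)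
        · exact Or.inr h'
        · exact absurd hs (hQ w hw s h')
    refine h.bad (((solved_two _).conn hr (Nat.lt_succ_self _)).two_to_three (c := 5)
      fun m hm => ?_)
    obtain ⟨p, rfl, q, hq, hpq⟩ := hm.path (fun p hp => hp ▸ htA a (by simp))
      (fun q hq => htA q (Or.inr hq)) (by rintro p rfl (h' | h'); exacts [hab h', hac h'])
    obtain ⟨hxq, huq, hvq⟩ := hmem q (Or.inr hq)
    obtain ⟨q', hq', hqq⟩ : ∃ q' ∈ ({b, c} : Set V), q ≠ q' := by
      by_cases hqb : q = b
      · exact ⟨c, by simp, hqb ▸ hbc⟩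
      · exact ⟨b, by simp, hqb⟩
    obtain ⟨hxq', huq', hvq'⟩ := hmem q' (Or.inr hq')
    have hqp' : q' ≠ p := by
      rcases hq' with rfl | rfl
      · exact hab.symm
      · exact hac.symm
    have hpy : p ≠ y := fun h' => h.not_adj (h' ▸ hxa)
    have hqy : q ≠ y := fun h' => h.not_adj (h' ▸ hxq)
    have hqy' : q' ≠ y := fun h' => h.not_adj (h' ▸ hxq')
    have hqA' := htA q' (Or.inr hq')
    exact hpq.extend_both huq.symm hvq.symm huq' hxa hua hxq' huy hvy hqp'.symm hqq hpy hqy hqy' huv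
      hxq.ne hxy hux hvx hva.ne' hvq'.ne' hxA huA hvA hqA' hyA

/-- No two vertices have three common neighbours in the neighbourhood of `x`. -/
lemma Crit.false_of_three_common (h : Crit 3 G I x y z) (htf : TF G x) (hu : u ∈ I) (hv : v ∈ I)
    (huv : u ≠ v) (hab : a ≠ b) (hac : a ≠ c) (hbc : b ≠ c)
    (hxa : G.Adj x a) (hxb : G.Adj x b) (hxc : G.Adj x c) (hua : G.Adj u a) (hub : G.Adj u b)
    (huc : G.Adj u c) (hva : G.Adj v a) (hvb : G.Adj v b) (hvc : G.Adj v c) : False := by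
  have hux := h.ne_x hu
  have hvx := h.ne_x hv
  have hxy := h.ne
  have hay : a ≠ y := fun h' => h.not_adj (h' ▸ hxa)
  have hby : b ≠ y := fun h' => h.not_adj (h' ▸ hxb)
  have hcy : c ≠ y := fun h' => h.not_adj (h' ▸ hxc)
  have huy' := h.ne_y hu
  have hvy' := h.ne_y hv
  have haI := h.mem_of_adj_x hxa
  have hC := h.comp_eq_of_three_common htf hu hv huv hab hac hbc hxa hxb hxc hua hub huc hva hvb hvc
  have hyN : ∀ w, G.Adj y w → w = u ∨ w = v := by
    intro w hw
    by_contra hwuv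
    have hwC : w ∈ comp G ((I ∪ {y}) \ {u, v}) y \ {y} := by
      refine ⟨mem_comp_of_adj (mem_comp_self ⟨Or.inr rfl, ?_⟩) hw
        ⟨Or.inl (h.mem_of_adj_y hw), hwuv⟩, hw.ne'⟩
      rintro (h' | h')
      · exact huy' h'.symm
      · exact hvy' h'.symm
    rw [hC] at hwC
    exact hwC
  have huy : G.Adj u y := by
    obtain ⟨s, hs, hsv⟩ := h.symm.exists_adj_x_ne v
    obtain rfl := (hyN s hs).resolve_right hsv
    exact hs.symm
  have hvy : G.Adj v y := by
    obtain ⟨s, hs, hsu⟩ := h.symm.exists_adj_x_ne u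
    obtain rfl := (hyN s hs).resolve_left hsu
    exact hs.symm
  have hdeg : ∀ w ∈ I, w ≠ u → w ≠ v → w ≠ z → 4 ≤ (G.neighborSet w \ {y}).ncard := by
    intro w hw hwu hwv hwz
    rw [Set.sdiff_singleton_eq_self]
    · exact h.deg w hw hwz
    · intro h'
      rcases hyN w (SimpleGraph.Adj.symm h') with h' | h'
      · exact hwu h'
      · exact hwv h'
  by_cases hzu : u = z
  · subst hzu
    exact h.false_of_adj_y hu huy (fun w hw h1 h2 => hdeg w hw h1 h2 h1)
      fun h' => hva.ne' (h' ⟨haI, hua.ne'⟩)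
  by_cases hzv : v = z
  · subst hzv
    exact h.false_of_adj_y hv hvy (fun w hw h1 h2 => hdeg w hw h2 h1 h1)
      fun h' => hua.ne' (h' ⟨haI, hva.ne'⟩)
  have hcard : ∀ {u v}, u ∈ I → v ∈ I → u ≠ v → G.Adj u a → G.Adj u b → G.Adj u c → G.Adj v a →
      G.Adj v y → (∀ w ∈ I, w ≠ u → w ≠ v → w ≠ z → 4 ≤ (G.neighborSet w \ {y}).ncard) →
      ∀ w, G.Adj u w → w = y ∨ w = a ∨ w = b ∨ w = c := by
    intro u v hu hv huv hua hub huc hva hvy hdeg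
    have hle : (G.neighborSet u \ {y}).ncard ≤ 3 := by
      by_contra hlt
      refine h.false_of_adj_y (e := z) hv hvy (fun w hw h1 h2 => ?_)
        fun h' => hua.ne' ((h' ⟨haI, hva.ne'⟩).trans (h' ⟨hu, huv⟩).symm)
      by_cases hwu : w = u
      · subst hwu
        omega
      · exact hdeg w hw hwu h1 h2
    have hsub : ({a, b, c} : Set V) ⊆ G.neighborSet u \ {y} := by
      rintro t (rfl | rfl | rfl)
      · exact ⟨hua, hay⟩
      · exact ⟨hub, hby⟩
      · exact ⟨huc, hcy⟩
    have hthree : ({a, b, c} : Set V).ncard = 3 := Set.ncard_eq_three.2 ⟨a, b, c, hab, hac, hbc, rfl⟩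
    have heq := Set.eq_of_subset_of_ncard_le hsub (by omega)
    intro w hw
    by_cases hwy : w = y
    · exact Or.inl hwy
    · right
      have : w ∈ G.neighborSet u \ {y} := ⟨hw, hwy⟩
      rw [← heq] at this
      exact this
  have huN := hcard hu hv huv hua hub huc hva hvy hdeg
  have hvN := hcard hv hu huv.symm hva hvb hvc hua huy fun w hw h1 h2 => hdeg w hw h2 h1
  have hpair : ∀ w ∈ I, w ≠ u → w ≠ v → ∀ {a b c}, a ≠ b → a ≠ c → b ≠ c → a ≠ y → b ≠ y → c ≠ y →
      G.Adj x a → G.Adj x b → G.Adj x c → G.Adj u a → G.Adj u b → G.Adj u c → G.Adj v a →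
      G.Adj v b → G.Adj v c → G.Adj w a → G.Adj w b → False := by
    intro w hw hwu hwv a b c hab hac hbc hay hby hcy hxa hxb hxc hua hub huc hva hvb hvc hwa hwb
    have hwx := h.ne_x hw
    have hwy := h.ne_y hw
    have hwc : w ≠ c := by
      rintro rfl
      exact htf u w a hux hwx hxa.ne' huc hwa hua
    have h3 := path3 hxc huc.symm huy hxy hux.symm hcy
    have h5 := (((path2 hub.symm huy hby).cons hvb (by grind [SimpleGraph.Adj.ne])).cons hva.symm
      (by grind [SimpleGraph.Adj.ne])).cons hxa (by grind [SimpleGraph.Adj.ne])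
    have h7 := (((((path2 huc.symm huy hcy).cons hvc (by grind [SimpleGraph.Adj.ne])).cons hvb.symm
      (by grind [SimpleGraph.Adj.ne])).cons hwb (by grind [SimpleGraph.Adj.ne])).cons hwa.symm
      (by grind [SimpleGraph.Adj.ne])).cons hxa (by grind [SimpleGraph.Adj.ne])
    exact h.false_of_three h7 h5 h3 (by omega)
  have huniq : ∀ w ∈ I, w ≠ u → w ≠ v → ∀ s ∈ ({a, b, c} : Set V), ∀ t ∈ ({a, b, c} : Set V),
      G.Adj w s → G.Adj w t → s = t := by
    intro w hw hwu hwv s hs t ht hws hwt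
    have h1 := hpair w hw hwu hwv hab hac hbc hay hby hcy hxa hxb hxc hua hub huc hva hvb hvc
    have h2 := hpair w hw hwu hwv hbc hab.symm hac.symm hby hcy hay hxb hxc hxa hub huc hua hvb hvc
      hva
    have h3 := hpair w hw hwu hwv hac.symm hbc.symm hab hcy hay hby hxc hxa hxb huc hua hub hvc hva
      hvb
    rcases hs with rfl | rfl | rfl <;> rcases ht with rfl | rfl | rfl
    · rfl
    · exact (h1 hws hwt).elim
    · exact (h3 hwt hws).elim
    · exact (h1 hwt hws).elim
    · rfl
    · exact (h2 hws hwt).elim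
    · exact (h3 hws hwt).elim
    · exact (h2 hwt hws).elim
    · rfl
  by_cases haz : a = z
  · refine h.false_of_nbrs_eq (a := b) (b := a) htf hu hv huv hab.symm hbc hac hxb hxa hxc hub hua
      huc hvb hva hvc huy hvy hyN ?_ ?_ ?_ fun h' => hab (haz.trans h'.symm)
    · intro w hw
      have := huN w hw
      tauto
    · intro w hw
      have := hvN w hw
      tauto
    · rwa [Set.insert_comm b a]
  · exact h.false_of_nbrs_eq htf hu hv huv hab hac hbc hxa hxb hxc hua hub huc hva hvb hvc huy hvy
      hyN huN hvN huniq haz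

end ThreeCommonNeighbors

/-- A vertex `u` whose set `T` of common neighbours with `x` has at least two elements. -/
structure Hub (G : SimpleGraph V) (I : Set V) (x y z u : V) (T : Set V) : Prop
    extends Crit 3 G I x y z where
  triangle : TF G x
  u_mem : u ∈ I
  mem_iff : ∀ t, t ∈ T ↔ G.Adj x t ∧ G.Adj u t
  two : ∃ a ∈ T, ∃ b ∈ T, a ≠ b

section HubLemmas

variable {G : SimpleGraph V} {I A C T Y : Set V}
  {a b c d t u v w x y z p q r : V} {k m n N : ℕ}

lemma Hub.x_adj (h : Hub G I x y z u T) (ht : t ∈ T) : G.Adj x t := ((h.mem_iff t).1 ht).1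

lemma Hub.u_adj (h : Hub G I x y z u T) (ht : t ∈ T) : G.Adj u t := ((h.mem_iff t).1 ht).2

lemma Hub.subset (h : Hub G I x y z u T) : T ⊆ I := fun _ ht => h.mem_of_adj_x (h.x_adj ht)

lemma Hub.x_notMem_T (h : Hub G I x y z u T) : x ∉ T := fun h' => (h.x_adj h').ne rfl

lemma Hub.u_notMem_T (h : Hub G I x y z u T) : u ∉ T := fun h' => (h.u_adj h').ne rfl

lemma Hub.y_notMem_T (h : Hub G I x y z u T) : y ∉ T := fun h' => h.not_adj (h.x_adj h')

lemma Hub.u_ne_x (h : Hub G I x y z u T) : u ≠ x := h.ne_x h.u_mem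

lemma Hub.u_ne_y (h : Hub G I x y z u T) : u ≠ y := h.ne_y h.u_mem

lemma Hub.exists_ne_mem (h : Hub G I x y z u T) (p : V) : ∃ b ∈ T, b ≠ p := by
  obtain ⟨a, ha, b, hb, hab⟩ := h.two
  by_cases hap : a = p
  · exact ⟨b, hb, hap ▸ hab.symm⟩
  · exact ⟨a, ha, hap⟩

lemma Hub.not_adj_of_adj_u (h : Hub G I x y z u T) (huv : G.Adj u v) (hvx : v ≠ x) (ht : t ∈ T) :
    ¬ G.Adj v t := fun hvt =>
  h.triangle u v t h.u_ne_x hvx (h.x_adj ht).ne' huv hvt (h.u_adj ht)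

lemma PathIn.fan (hm : PathIn G (insert p (insert q A)) p q n) (hxp : G.Adj x p) (hup : G.Adj u p)
    (hub : G.Adj u b) (hxb : G.Adj x b) (hbp : b ≠ p) (hxq : x ≠ q) (huq : u ≠ q) (hbq : b ≠ q)
    (hux : u ≠ x) (hx : x ∉ A) (hu : u ∉ A) (hb : b ∉ A) :
    PathIn G Set.univ x q (n + 1) ∧ PathIn G Set.univ x q (n + 1 + 2) := by
  have h1 := hm.cons hxp (by grind [SimpleGraph.Adj.ne])
  have h3 := ((hm.cons hup (by grind [SimpleGraph.Adj.ne])).cons hub.symm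
    (by grind [SimpleGraph.Adj.ne])).cons hxb (by grind [SimpleGraph.Adj.ne])
  exact ⟨h1.mono (Set.subset_univ _), h3.mono (Set.subset_univ _)⟩

lemma Hub.insert_ne (h : Hub G I x y z u T) (hA : ∀ t ∈ T, t ∉ A) : insert u A ≠ I := by
  obtain ⟨a, ha, -⟩ := h.two
  intro h'
  have := h.subset ha
  rw [← h'] at this
  rcases this with rfl | h'
  · exact h.u_notMem_T ha
  · exact hA a ha h'

lemma Hub.mem_of_comp_adj (h : Hub G I x y z u T)
    (hv : v ∈ comp G ((I ∪ {y}) \ insert u T) w) (hb : G.Adj v b) :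
    b ∈ comp G ((I ∪ {y}) \ insert u T) w ∨ b = x ∨ b = u ∨ b ∈ T := by
  by_cases hbu : b ∈ insert u T
  · exact Or.inr (Or.inr hbu)
  rcases h.mem_of_adj hb with h' | h' | h'
  · exact Or.inl (mem_comp_of_adj hv hb ⟨Or.inl h', hbu⟩)
  · exact Or.inr (Or.inl h')
  · exact Or.inl (mem_comp_of_adj hv hb ⟨Or.inr h', hbu⟩)

variable [Finite V]

lemma Hub.unique_of_adj_x (h : Hub G I x y z u T) (hvu : v ≠ u) (hxv : G.Adj x v) (hs : a ∈ T)
    (ht : b ∈ T) (hva : G.Adj v a) (hvb : G.Adj v b) : a = b :=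
  h.common_nbr_unique_of_adj h.u_mem hvu.symm hxv (h.x_adj hs) (h.x_adj ht) (h.u_adj hs)
    (h.u_adj ht) hva hvb

lemma Hub.eq_of_three (h : Hub G I x y z u T) (hv : v ∈ I) (hvu : v ≠ u) (ha : a ∈ T) (hb : b ∈ T)
    (hc : c ∈ T) (hva : G.Adj v a) (hvb : G.Adj v b) (hvc : G.Adj v c) (hac : a ≠ c) (hbc : b ≠ c) :
    a = b := by
  by_contra hab
  exact h.false_of_three_common h.triangle h.u_mem hv hvu.symm hab hac hbc (h.x_adj ha) (h.x_adj hb)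
    (h.x_adj hc) (h.u_adj ha) (h.u_adj hb) (h.u_adj hc) hva hvb hvc

lemma Hub.exists_deleted (h : Hub G I x y z u T) (hv : v ∈ I) (hvz : v ≠ z) (hvu : v ≠ u)
    (hvT : v ∉ T) : ∃ L : Set V, 2 + 1 ≤ (G.neighborSet v \ L).ncard ∧
      (∀ b, G.Adj v b → b ∉ L → b ≠ x ∧ b ≠ u) ∧
      ∀ p ∈ T, ∀ p' ∈ T, G.Adj v p → G.Adj v p' → p ∉ L → p' ∉ L → p = p' := by
  have hdeg : ∀ a, 2 + 1 ≤ (G.neighborSet v \ {a}).ncard := fun a =>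
    le_ncard_sdiff_singleton (h.deg v hv hvz)
  by_cases hxv : G.Adj x v
  · refine ⟨{x}, hdeg x, fun b hb hbx => ⟨hbx, ?_⟩, fun p hp p' hp' h1 h2 _ _ =>
      h.unique_of_adj_x hvu hxv hp hp' h1 h2⟩
    rintro rfl
    exact hvT ((h.mem_iff v).2 ⟨hxv, hb.symm⟩)
  have hbx : ∀ b, G.Adj v b → b ≠ x := by
    rintro b hb rfl
    exact hxv hb.symm
  by_cases huv : G.Adj u v
  · exact ⟨{u}, hdeg u, fun b hb hbu => ⟨hbx b hb, hbu⟩, fun p hp p' hp' h1 h2 _ _ =>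
      absurd h1 (h.not_adj_of_adj_u huv (h.ne_x hv) hp)⟩
  have hbu : ∀ b, G.Adj v b → b ≠ u := by
    rintro b hb rfl
    exact huv hb.symm
  by_cases hc : ∃ c ∈ T, G.Adj v c
  · obtain ⟨c, hc, hvc⟩ := hc
    exact ⟨{c}, hdeg c, fun b hb _ => ⟨hbx b hb, hbu b hb⟩, fun p hp p' hp' h1 h2 h3 h4 =>
      h.eq_of_three hv hvu hp hp' hc h1 h2 hvc h3 h4⟩
  · exact ⟨{x}, hdeg x, fun b hb _ => ⟨hbx b hb, hbu b hb⟩, fun p hp p' hp' h1 h2 _ _ =>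
      absurd ⟨p, hp, h1⟩ hc⟩

/-- The component of `y` in `G - x - u - T` is covered by a set attached to `x`, `u` and one
further vertex, up to one vertex. -/
lemma Hub.exists_cover (h : Hub G I x y z u T) (hY : Y = comp G ((I ∪ {y}) \ insert u T) y) :
    ∃ A ⊆ Y \ {y}, ∃ w ∈ Y, w ∉ A ∧ NbrSub G A {w, x, u} ∧
      (A = ∅ ∧ Y \ {y} ⊆ {z} ∨ A.Nonempty ∧ Y \ {y} ⊆ insert w A) := by
  have hyY : y ∈ Y := by
    rw [hY]
    refine mem_comp_self ⟨Or.inr rfl, ?_⟩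
    rintro (h' | h')
    · exact h.u_ne_y h'.symm
    · exact h.y_notMem_T h'
  have hYI : Y \ {y} ⊆ I := fun v hv => by
    rw [hY] at hv
    exact (comp_subset hv.1).1.resolve_right hv.2
  have huY : u ∉ Y := fun h' => by
    rw [hY] at h'
    exact (comp_subset h').2 (Or.inl rfl)
  have hTY : ∀ t ∈ T, t ∉ Y := fun t ht h' => by
    rw [hY] at h'
    exact (comp_subset h').2 (Or.inr ht)
  have hxY : x ∉ Y := fun h' => h.x_notMem (hYI ⟨h', h.ne⟩)
  have hYN : ∀ v ∈ Y, ∀ b, G.Adj v b → b ∈ Y ∨ b = x ∨ b = u ∨ b ∈ T := by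
    subst hY
    exact fun v hv b hb => h.mem_of_comp_adj hv hb
  let F : Set (Set V) := {A | A ⊆ Y \ {y} ∧ ∃ w ∈ Y, w ∉ A ∧ NbrSub G A {w, x, u}}
  obtain ⟨A, ⟨hAY, w, hwY, hwA, hA⟩, hmax⟩ := (Set.toFinite F).exists_maximal
    ⟨∅, Set.empty_subset _, y, hyY, Set.notMem_empty _, fun a ha => absurd ha (Set.notMem_empty _)⟩
  have hfail : ∀ A ⊆ Y \ {y}, A.Nonempty → ∀ r ∈ Y, r ∉ A → NbrSub G A {r, x, u} → z ∈ A := by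
    intro A hA hne r hr hrA hN
    by_contra hz
    refine h.not_nbrSub_triple (hA.trans hYI) hne hz (fun h' => huY (hA h').1) hrA h.u_mem
      (by rintro rfl; exact hxY hr) (by rintro rfl; exact huY hr)
      (h.insert_ne fun t ht h' => hTY t ht (hA h').1) fun a ha b hab => ?_
    have := hN a ha b hab
    simp only [Set.mem_insert_iff, Set.mem_singleton_iff] at this ⊢
    tauto
  obtain ⟨e, he⟩ : ∃ e, A = ∅ ∧ e = z ∨ A.Nonempty ∧ z ∈ A ∧ e = w := by
    rcases A.eq_empty_or_nonempty with h' | h'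
    · exact ⟨z, Or.inl ⟨h', rfl⟩⟩
    · exact ⟨w, Or.inr ⟨h', hfail A hAY h' w hwY hwA hA, rfl⟩⟩
  refine ⟨A, hAY, w, hwY, hwA, hA, ?_⟩
  by_cases hCe : (Y \ {y}) \ A ⊆ {e}
  · rcases he with ⟨rfl, rfl⟩ | ⟨h', -, rfl⟩
    · exact Or.inl ⟨rfl, by rwa [Set.sdiff_empty] at hCe⟩
    · refine Or.inr ⟨h', fun v hv => ?_⟩
      by_cases hvA : v ∈ A
      · exact Or.inr hvA
      · exact Or.inl (hCe ⟨hv, hvA⟩)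
  exfalso
  set C := (Y \ {y}) \ A with hC
  have hCI : C ⊆ I := fun v hv => hYI hv.1
  have hxC : x ∉ C := fun h' => hxY h'.1.1
  have hyC : y ∉ C := fun h' => h'.1.2 rfl
  have huC : u ∉ C := fun h' => huY h'.1.1
  have hTC : ∀ t ∈ T, t ∉ C := fun t ht h' => hTY t ht h'.1.1
  have hCN : ∀ v ∈ C, ∀ b, G.Adj v b → b ∈ C ∨ b = y ∨ b ∈ A ∨ b = x ∨ b = u ∨ b ∈ T := by
    intro v hv b hb
    rcases hYN v hv.1.1 b hb with h' | h'
    · by_cases hby : b = y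
      · exact Or.inr (Or.inl hby)
      by_cases hbA : b ∈ A
      · exact Or.inr (Or.inr (Or.inl hbA))
      · exact Or.inl ⟨⟨h', hby⟩, hbA⟩
    · exact Or.inr (Or.inr (Or.inr h'))
  have hCA : ∀ v ∈ C, ∀ b ∈ A, G.Adj v b → v = w := by
    intro v hv b hb hvb
    rcases hA b hb v hvb.symm with h' | h' | rfl | rfl
    · exact absurd h' hv.2
    · exact h'
    · exact absurd hv hxC
    · exact absurd hv huC
  have hext : ∀ A' ⊆ C, A'.Nonempty → ∀ r ∈ Y, r ∉ A → r ∉ A' →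
      (∀ a ∈ A', ∀ b ∈ C, G.Adj a b → b ∈ A' ∨ b = r) → (∀ a ∈ A', ∀ p ∈ T, ¬ G.Adj a p) →
      (∀ a ∈ A', G.Adj a y → r = y) → False := by
    intro A' hA' hne r hr hrA hrA' hcl hP hQ
    have hN : ∀ a ∈ A', ∀ b, G.Adj a b → b ∈ A' ∨ b ∈ A ∨ b = r ∨ b = x ∨ b = u := by
      intro a ha b hab
      rcases hCN a (hA' ha) b hab with h' | rfl | h' | h' | h' | h'
      · rcases hcl a ha b h' hab with h' | h'
        · exact Or.inl h'
        · exact Or.inr (Or.inr (Or.inl h'))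
      · exact Or.inr (Or.inr (Or.inl (hQ a ha hab).symm))
      · exact Or.inr (Or.inl h')
      · exact Or.inr (Or.inr (Or.inr (Or.inl h')))
      · exact Or.inr (Or.inr (Or.inr (Or.inr h')))
      · exact absurd hab (hP a ha b h')
    obtain ⟨a₀, ha₀⟩ := hne
    by_cases hw : w ∈ A'
    · have hF : A' ∪ A ∈ F := by
        refine ⟨Set.union_subset (hA'.trans Set.sdiff_subset) hAY, r, hr, ?_, ?_⟩
        · rintro (h' | h')
          · exact hrA' h'
          · exact hrA h'
        · rintro a (ha | ha) b hab
          · rcases hN a ha b hab with h' | h' | h' | h' | h'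
            · exact Or.inl (Or.inl h')
            · exact Or.inl (Or.inr h')
            · exact Or.inr (Or.inl h')
            · exact Or.inr (Or.inr (Or.inl h'))
            · exact Or.inr (Or.inr (Or.inr h'))
          · rcases hA a ha b hab with h' | rfl | h' | h'
            · exact Or.inl (Or.inr h')
            · exact Or.inl (Or.inl hw)
            · exact Or.inr (Or.inr (Or.inl h'))
            · exact Or.inr (Or.inr (Or.inr h'))
      exact (hA' ha₀).2 (hmax hF Set.subset_union_right (Or.inl ha₀))
    · have hN' : NbrSub G A' {r, x, u} := by
        intro a ha b hab
        rcases hN a ha b hab with h' | h' | h' | h' | h'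
        · exact Or.inl h'
        · exact absurd (hCA a (hA' ha) b h' hab ▸ ha) hw
        · exact Or.inr (Or.inl h')
        · exact Or.inr (Or.inr (Or.inl h'))
        · exact Or.inr (Or.inr (Or.inr h'))
      have hz := hfail A' (hA'.trans Set.sdiff_subset) ⟨a₀, ha₀⟩ r hr hrA' hN'
      rcases he with ⟨rfl, -⟩ | ⟨-, hzA, -⟩
      · exact hmax (y := A') ⟨hA'.trans Set.sdiff_subset, r, hr, hrA', hN'⟩ (Set.empty_subset _) ha₀
      · exact (hA' hz).2 hzA
  have hyA : y ∉ A := fun h' => (hAY h').2 rfl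
  have hr : Rooted 2 ∅ (glue G C T {y} x y) C x y e := by
    refine rooted_glue h.ne hxC hyC ?_ ?_ ?_ ?_ hCe (by omega)
    · intro v hv hve
      have hvz : v ≠ z := by
        rcases he with ⟨-, rfl⟩ | ⟨-, hzA, -⟩
        · exact hve
        · rintro rfl
          exact hv.2 hzA
      obtain ⟨L, hL, hLN, hLT⟩ := h.exists_deleted (hCI hv) hvz (fun h' => huC (h' ▸ hv))
        fun h' => hTC v h' hv
      refine ⟨L, hL, fun b hb hbL => ?_, hLT, ?_⟩
      · obtain ⟨hbx, hbu⟩ := hLN b hb hbL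
        rcases hCN v hv b hb with h' | h' | h' | h' | h' | h'
        · exact Or.inl h'
        · exact Or.inr (Or.inr h')
        · have hvw := hCA v hv b h' hb
          rcases he with ⟨rfl, -⟩ | ⟨-, -, rfl⟩
          · exact absurd h' (Set.notMem_empty _)
          · exact absurd hvw hve
        · exact absurd h' hbx
        · exact absurd h' hbu
        · exact Or.inr (Or.inl h')
      · rintro _ rfl _ rfl - - - -
        rfl
    · intro A' hA' hne r hcl hP hQ
      have hne := nonempty_of_not_subset_empty hne
      by_cases hrC : r ∈ C ∧ r ∉ A'
      · exact hext A' hA' hne r hrC.1.1.1 hrC.1.2 hrC.2 hcl hP fun a ha hay =>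
          absurd hay (hQ a ha y rfl)
      · refine hext A' hA' hne y hyY hyA (fun h' => hyC (hA' h')) (fun a ha b hb hab => ?_) hP
          fun _ _ _ => rfl
        rcases hcl a ha b hb hab with h' | rfl
        · exact Or.inl h'
        · by_contra hb'
          exact hrC ⟨hb, fun h' => hb' (Or.inl h')⟩
    · intro A' hA' hne hcl hP
      exact hext A' hA' (nonempty_of_not_subset_empty hne) y hyY hyA (fun h' => hyC (hA' h'))
        (fun a ha b hb hab => Or.inl (hcl a ha b hb hab)) hP fun _ _ _ => rfl
    · intro A' hA' hne hcl hQ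
      have hne := nonempty_of_not_subset_empty hne
      have hy : ∀ a ∈ A', ¬ G.Adj a y := fun a ha => hQ a ha y rfl
      by_cases hw : w ∈ A'
      · refine comp_diff_closed (G := G) (U := (I ∪ {y}) \ insert u T) (v := y) (A := A' ∪ A) ?_
          (hne.mono Set.subset_union_left) ?_ ?_
        · rw [← hY]
          exact Set.union_subset (hA'.trans Set.sdiff_subset) hAY
        · rw [← hY]
          rintro a (ha | ha) b hb hab
          · by_cases hbA : b ∈ A
            · exact Or.inr hbA
            · exact Or.inl (hcl a ha b ⟨hb, hbA⟩ hab)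
          · rcases hA a ha b hab with h' | rfl | rfl | rfl
            · exact Or.inr h'
            · exact Or.inl hw
            · exact absurd hb.1 hxY
            · exact absurd hb.1 huY
        · rintro a (ha | ha) hay
          · exact hy a ha hay
          · rcases hA a ha y hay with h' | rfl | h' | h'
            · exact hyA h'
            · exact hyC (hA' hw)
            · exact h.ne h'.symm
            · exact h.u_ne_y h'.symm
      · refine comp_diff_closed (G := G) (U := (I ∪ {y}) \ insert u T) (v := y) (A := A') ?_ hne ?_ hy
        · rw [← hY]
          exact hA'.trans Set.sdiff_subset
        · rw [← hY]
          intro a ha b hb hab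
          by_cases hbA : b ∈ A
          · exact absurd (hCA a (hA' ha) b hbA hab ▸ ha) hw
          · exact hcl a ha b ⟨hb, hbA⟩ hab
  refine h.bad (((solved_two _).conn hr (Nat.lt_succ_self _)).two_to_three (c := 2 + 1)
    fun m hm => ?_)
  obtain ⟨p, hp, q, rfl, hpq⟩ := hm.path hTC (fun q hq => hq ▸ hyC)
    (by rintro p hp rfl; exact h.y_notMem_T hp)
  obtain ⟨b, hb, hbp⟩ := h.exists_ne_mem p
  exact hpq.fan (h.x_adj hp) (h.u_adj hp) (h.u_adj hb) (h.x_adj hb) hbp h.ne h.u_ne_y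
    (by rintro rfl; exact h.y_notMem_T hb) h.u_ne_x hxC huC (hTC b hb)

end HubLemmas

section HubComponent

variable {G : SimpleGraph V} {I A C T Y : Set V}
  {a b c d t u v w x y z p q r : V} {k m n N : ℕ}

lemma Hub.mem_comp_y (h : Hub G I x y z u T) : y ∈ comp G ((I ∪ {y}) \ insert u T) y := by
  refine mem_comp_self ⟨Or.inr rfl, ?_⟩
  rintro (h' | h')
  · exact h.u_ne_y h'.symm
  · exact h.y_notMem_T h'

variable [Finite V]

lemma Hub.false_of_cover (h : Hub G I x y z u T)
    (hY : Y = comp G ((I ∪ {y}) \ insert u T) y) (hAY : A ⊆ Y \ {y}) (hw : w ∈ Y) (hwy : w ≠ y)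
    (hwA : w ∉ A) (hA : NbrSub G A {w, x, u}) (hz : z ∈ insert w A)
    (hYA : Y \ {y} ⊆ insert w A) : False := by
  have hYU : Y ⊆ (I ∪ {y}) \ insert u T := hY ▸ comp_subset
  have hYI : Y \ {y} ⊆ I := fun v hv => (hYU hv.1).1.resolve_right hv.2
  have hwI : w ∈ I := hYI ⟨hw, hwy⟩
  have hwu : w ≠ u := fun h' => (hYU hw).2 (Or.inl h')
  have hwx : w ≠ x := h.ne_x hwI
  have hyA : y ∉ A := fun h' => (hAY h').2 rfl
  have hyY : y ∈ Y := hY ▸ h.mem_comp_y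
  have hyx : ¬ G.Adj y x := fun h' => h.not_adj h'.symm
  have hYN : ∀ v ∈ Y, ∀ b, G.Adj v b → b ∈ Y ∨ b = x ∨ b = u ∨ b ∈ T := by
    subst hY
    exact fun v hv b hb => h.mem_of_comp_adj hv hb
  have hyN : ∀ b, G.Adj y b → b = w ∨ b = u ∨ b ∈ T := by
    intro b hb
    rcases hYN y hyY b hb with h' | rfl | h' | h'
    · rcases hYA ⟨h', hb.ne'⟩ with h'' | h''
      · exact Or.inl h''
      · rcases hA b h'' y hb.symm with h3 | h3 | h3 | h3
        · exact absurd h3 hyA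
        · exact absurd h3.symm hwy
        · exact absurd h3.symm h.ne
        · exact absurd h3.symm h.u_ne_y
    · exact absurd hb hyx
    · exact Or.inr (Or.inl h')
    · exact Or.inr (Or.inr h')
  set Z := I \ insert u (insert w A) with hZ
  have hTZ : T ⊆ Z := by
    refine fun t ht => ⟨h.subset ht, ?_⟩
    rintro (rfl | rfl | h')
    · exact h.u_notMem_T ht
    · exact (hYU hw).2 (Or.inr ht)
    · exact (hYU (hAY h').1).2 (Or.inr ht)
  have hZne : Z.Nonempty := by
    obtain ⟨a, ha, -⟩ := h.two
    exact ⟨a, hTZ ha⟩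
  have hzZ : z ∉ Z := fun h' => h'.2 (Or.inr hz)
  have huZ : u ∉ Z := fun h' => h'.2 (Or.inl rfl)
  have hwZ : w ∉ Z := fun h' => h'.2 (Or.inr (Or.inl rfl))
  have hyZ : y ∉ Z := fun h' => h.y_notMem h'.1
  have hZI : insert u Z ≠ I := by
    intro h'
    rw [← h'] at hwI
    rcases hwI with h' | h'
    · exact hwu h'
    · exact hwZ h'
  have hZN : ∀ v ∈ Z, ∀ b, G.Adj v b → b ∈ Z ∨ b = x ∨ b = u ∨ b = y ∨ b = w := by
    intro v hv b hb
    rcases h.mem_of_adj hb with h' | h' | h'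
    · by_cases hbZ : b ∈ insert u (insert w A)
      · rcases hbZ with h'' | h'' | h''
        · tauto
        · tauto
        · rcases hA b h'' v hb.symm with h3 | rfl | rfl | rfl
          · exact absurd (Or.inr (Or.inr h3)) hv.2
          · exact absurd hv hwZ
          · exact absurd hv.1 h.x_notMem
          · exact absurd hv huZ
      · exact Or.inl ⟨h', hbZ⟩
    · tauto
    · tauto
  by_cases hyu : G.Adj u y
  · refine h.not_nbrSub_triple Set.sdiff_subset hZne hzZ huZ hwZ h.u_mem hwx hwu hZI ?_
    intro v hv b hb
    simp only [Set.mem_insert_iff, Set.mem_singleton_iff]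
    rcases hZN v hv b hb with h' | h' | h' | rfl | h'
    · tauto
    · tauto
    · tauto
    · rcases hyN v hb.symm with rfl | rfl | h'
      · exact absurd hv hwZ
      · exact absurd hv huZ
      · exact absurd hb.symm (h.not_adj_of_adj_u hyu h.ne.symm h')
    · tauto
  by_cases hwc : ∃ c ∈ Z, G.Adj c w
  swap
  · refine h.not_nbrSub_triple Set.sdiff_subset hZne hzZ huZ hyZ h.u_mem h.ne.symm h.u_ne_y.symm hZI
      ?_
    intro v hv b hb
    simp only [Set.mem_insert_iff, Set.mem_singleton_iff]
    rcases hZN v hv b hb with h' | h' | h' | h' | rfl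
    · tauto
    · tauto
    · tauto
    · tauto
    · exact absurd ⟨v, hv, hb⟩ hwc
  obtain ⟨c, hcZ, hcw⟩ := hwc
  have hcT : c ∈ T := by
    rcases hYN w hw c hcw.symm with h' | rfl | rfl | h'
    · rcases hYA ⟨h', by rintro rfl; exact hyZ hcZ⟩ with rfl | h''
      · exact absurd rfl hcw.ne
      · exact absurd (Or.inr (Or.inr h'')) hcZ.2
    · exact absurd hcZ.1 h.x_notMem
    · exact absurd hcZ huZ
    · exact h'
  have hwy' : G.Adj w y := by
    by_contra hwy'
    refine comp_diff_closed (G := G) (U := (I ∪ {y}) \ insert u T) (v := y) (A := insert w A) ?_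
      ⟨w, Or.inl rfl⟩ ?_ ?_
    · rw [← hY]
      rintro v (rfl | hv)
      · exact ⟨hw, hwy⟩
      · exact hAY hv
    · rw [← hY]
      exact fun v _ b hb _ => hYA hb
    · rintro v (rfl | hv) hvy
      · exact hwy' hvy
      · rcases hA v hv y hvy with h' | h' | h' | h'
        · exact hyA h'
        · exact hwy h'.symm
        · exact h.ne h'.symm
        · exact h.u_ne_y h'.symm
  obtain ⟨a, hya, haw⟩ := h.symm.exists_adj_x_ne w
  have haT : a ∈ T := by
    rcases hyN a hya with h' | rfl | h'
    · exact absurd h' haw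
    · exact absurd hya.symm hyu
    · exact h'
  have hac : a ≠ c := by
    rintro rfl
    exact h.triangle a w y (h.x_adj haT).ne' hwx h.ne.symm hcw hwy' hya.symm
  have hxy := h.ne
  have hux := h.u_ne_x
  have huy := h.u_ne_y
  have hxa := h.x_adj haT
  have hxc := h.x_adj hcT
  have hua := h.u_adj haT
  have huc := h.u_adj hcT
  have h3 := path3 hxc hcw hwy' hxy hwx.symm (by rintro rfl; exact hyZ hcZ)
  refine h.false_of_three ((((((PathIn.nil (G := G) (S := {y}) rfl).cons hwy' hwy).cons hcw
    ?_).cons huc ?_).cons hua.symm ?_).cons hxa ?_) h3 (path2 hxa hya.symm hxy) (by omega)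
  · rintro (h' | h')
    · exact hcw.ne h'
    · exact h.y_notMem_T (h' ▸ hcT)
  · rintro (h' | h' | h')
    · exact huc.ne h'
    · exact hwu h'.symm
    · exact huy h'
  · rintro (h' | h' | h' | h')
    · exact hua.ne h'.symm
    · exact hac h'
    · exact haw h'
    · exact hya.ne h'.symm
  · rintro (h' | h' | h' | h' | h')
    · exact hxa.ne h'
    · exact hux h'.symm
    · exact hxc.ne h'
    · exact hwx h'.symm
    · exact hxy h'

lemma Hub.comp_subset_singleton (h : Hub G I x y z u T) :
    comp G ((I ∪ {y}) \ insert u T) y ⊆ {y} := by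
  obtain ⟨A, hAY, w, hw, hwA, hA, h'⟩ := h.exists_cover rfl
  set Y := comp G ((I ∪ {y}) \ insert u T) y with hY
  have hYU : Y ⊆ (I ∪ {y}) \ insert u T := comp_subset
  have hYI : Y \ {y} ⊆ I := fun v hv => (hYU hv.1).1.resolve_right hv.2
  rcases h' with ⟨rfl, h'⟩ | ⟨hne, h'⟩
  · intro v hv
    by_contra hvy
    have hvz : v = z := h' ⟨hv, hvy⟩
    subst hvz
    exact h.false_of_cover hY hAY hv hvy (Set.notMem_empty _) (fun a ha => absurd ha (by simp))
      (Or.inl rfl) (by simpa using h')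
  · exfalso
    have huA : u ∉ A := fun h' => (hYU (hAY h').1).2 (Or.inl rfl)
    have hwu : w ≠ u := fun h' => (hYU hw).2 (Or.inl h')
    have hwx : w ≠ x := by
      rintro rfl
      exact h.x_notMem (hYI ⟨hw, h.ne⟩)
    have hzA : z ∈ A := by
      by_contra hz
      refine h.not_nbrSub_triple (hAY.trans hYI) hne hz huA hwA h.u_mem hwx hwu
        (h.insert_ne fun t ht h' => (hYU (hAY h').1).2 (Or.inr ht)) fun a ha b hab => ?_
      have := hA a ha b hab
      simp only [Set.mem_insert_iff, Set.mem_singleton_iff] at this ⊢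
      tauto
    by_cases hwy : w = y
    · subst hwy
      refine h.not_nbrSub_triple (A := I \ insert u A) (q := w) Set.sdiff_subset ?_
        (fun h' => h'.2 (Or.inr hzA)) (fun h' => h'.2 (Or.inl rfl)) (fun h' => h.y_notMem h'.1)
        h.u_mem hwx hwu ?_ ?_
      · obtain ⟨a, ha, -⟩ := h.two
        refine ⟨a, h.subset ha, ?_⟩
        rintro (rfl | h')
        · exact h.u_notMem_T ha
        · exact (hYU (hAY h').1).2 (Or.inr ha)
      · intro h'
        have := hYI (hAY hzA)
        rw [← h'] at this
        rcases this with rfl | h'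
        · exact huA hzA
        · exact h'.2 (Or.inr hzA)
      · intro v hv b hb
        simp only [Set.mem_insert_iff, Set.mem_singleton_iff]
        rcases h.mem_of_adj hb with h' | h' | h'
        · by_cases hbA : b ∈ A
          · rcases hA b hbA v hb.symm with h3 | rfl | rfl | rfl
            · exact absurd (Or.inr h3) hv.2
            · exact absurd hv.1 h.y_notMem
            · exact absurd hv.1 h.x_notMem
            · exact absurd (Or.inl rfl) hv.2
          · by_cases hbu : b = u
            · tauto
            · exact Or.inl ⟨h', fun h' => h'.elim hbu hbA⟩
        · tauto
        · tauto
    · exact h.false_of_cover hY hAY hw hwy hwA hA (Or.inr hzA) h'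

end HubComponent

section HubNeighbors

variable [Finite V] {G : SimpleGraph V} {I A C T Y : Set V}
  {a b c d t u v w x y z p q r : V} {k m n N : ℕ}

lemma Hub.mem_of_adj_y (h : Hub G I x y z u T) (hb : G.Adj y b) : b ∈ T := by
  have key : ∀ b, G.Adj y b → b = u ∨ b ∈ T := by
    intro b hb
    rcases h.mem_of_comp_adj h.mem_comp_y hb with h' | rfl | h'
    · exact absurd (h.comp_subset_singleton h') hb.ne'
    · exact absurd hb.symm h.not_adj
    · exact h'
  obtain ⟨c, hc, hcu⟩ := h.symm.exists_adj_x_ne u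
  rcases key b hb with rfl | hb'
  · exact absurd hc (h.not_adj_of_adj_u hb.symm h.ne.symm ((key c hc).resolve_left hcu))
  · exact hb'

lemma Hub.not_adj_u_y (h : Hub G I x y z u T) : ¬ G.Adj y u := fun h' =>
  h.u_notMem_T (h.mem_of_adj_y h')

lemma Hub.adj_y_of_adj_x (h : Hub G I x y z u T) (hxb : G.Adj x b) : b = u ∨ G.Adj y b := by
  by_contra! hbu
  obtain ⟨hbu, hby⟩ := hbu
  set X := comp G ((I ∪ {x}) \ insert u (G.neighborSet y)) x with hX
  have hXU : X ⊆ (I ∪ {x}) \ insert u (G.neighborSet y) := comp_subset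
  set C := X \ {x} with hC
  have hCI : C ⊆ I := fun v hv => (hXU hv.1).1.resolve_right hv.2
  have huC : u ∉ C := fun h' => (hXU h'.1).2 (Or.inl rfl)
  have hyC : ∀ v ∈ C, ¬ G.Adj y v := fun v h' hv => (hXU h'.1).2 (Or.inr hv)
  have hxC : x ∉ C := fun h' => h'.2 rfl
  have hy : y ∉ C := fun h' => h.y_notMem (hCI h')
  have hCne : ∀ A ⊆ C, A ≠ I := by
    rintro A hA rfl
    exact huC (hA h.u_mem)
  have hXN : ∀ v ∈ X, ∀ b, G.Adj v b → b ∈ X ∨ b = u ∨ G.Adj y b ∨ b = x ∨ b = y := by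
    intro v hv b hb
    by_cases hbu : b ∈ insert u (G.neighborSet y)
    · rcases hbu with h' | h'
      · tauto
      · exact Or.inr (Or.inr (Or.inl h'))
    rcases h.mem_of_adj hb with h' | h' | h'
    · exact Or.inl (mem_comp_of_adj hv hb ⟨Or.inl h', hbu⟩)
    · tauto
    · tauto
  have hCN : ∀ v ∈ C, ∀ b, G.Adj v b → b ∈ C ∨ b = x ∨ b = u ∨ G.Adj y b := by
    intro v hv b hb
    by_cases hbx : b = x
    · exact Or.inr (Or.inl hbx)
    rcases hXN v hv.1 b hb with h' | h' | h' | h' | rfl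
    · exact Or.inl ⟨h', hbx⟩
    · tauto
    · tauto
    · tauto
    · exact absurd hb.symm (hyC _ hv)
  have hu : ∀ v ∈ C, ∀ q, G.Adj y q → G.Adj v q → ¬ G.Adj u v := fun v hv q hq hvq huv =>
    h.not_adj_of_adj_u huv hv.2 (h.mem_of_adj_y hq) hvq
  have hbX : b ∈ C := by
    refine ⟨mem_comp_of_adj (mem_comp_self ⟨Or.inr rfl, ?_⟩) hxb ⟨Or.inl (h.mem_of_adj_x hxb), ?_⟩,
      hxb.ne'⟩
    · rintro (h' | h')
      · exact h.u_ne_x h'.symm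
      · exact h.not_adj (h' : G.Adj y x).symm
    · rintro (h' | h')
      · exact hbu h'
      · exact hby h'
  by_cases hCz : C ⊆ {z}
  · obtain rfl : b = z := hCz hbX
    have hN : ∀ c, G.Adj b c → c = x ∨ c = u ∨ G.Adj y c := by
      intro c hc
      rcases hCN b hbX c hc with h' | h'
      · exact absurd (hCz h') hc.ne'
      · exact h'
    have key : ∃ p, NbrSub G {b} {x, p} := by
      by_cases hq : ∃ q, G.Adj y q ∧ G.Adj b q
      · obtain ⟨q, hyq, hbq⟩ := hq
        refine ⟨q, ?_⟩
        rintro _ rfl c hc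
        rcases hN c hc with h' | rfl | h'
        · exact Or.inr (Or.inl h')
        · exact absurd hc.symm (hu _ hbX q hyq hbq)
        · exact Or.inr (Or.inr (h.unique_of_adj_x hbu hxb (h.mem_of_adj_y h')
            (h.mem_of_adj_y hyq) hc hbq))
      · refine ⟨u, ?_⟩
        rintro _ rfl c hc
        rcases hN c hc with h' | h' | h'
        · exact Or.inr (Or.inl h')
        · exact Or.inr (Or.inr h')
        · exact absurd ⟨c, h', hc⟩ hq
    obtain ⟨p, hp⟩ := key
    exact h.not_nbrSub (Set.singleton_subset_iff.2 (hCI hbX)) ⟨b, rfl⟩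
      (hCne _ (Set.singleton_subset_iff.2 hbX)) p hp
  have hr : Rooted 2 {z} (glue G C {x} (G.neighborSet y) x y) C x y z := by
    refine rooted_glue h.ne hxC hy ?_ ?_ ?_ ?_ hCz (by omega)
    · intro v hv hvz
      by_cases hvT : v ∈ T
      · refine ⟨{u}, le_ncard_sdiff_singleton (h.deg v (hCI hv) hvz), fun b hb hbu => ?_, ?_,
          fun p hp p' hp' h1 h2 _ _ =>
            absurd h1 (h.not_adj_of_adj_u (h.u_adj hvT) hv.2 (h.mem_of_adj_y hp))⟩
        · rcases hCN v hv b hb with h' | h' | h' | h'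
          · exact Or.inl h'
          · exact Or.inr (Or.inl h')
          · exact absurd h' hbu
          · exact Or.inr (Or.inr h')
        · rintro _ rfl _ rfl - - - -
          rfl
      · obtain ⟨L, hL, hLN, hLT⟩ := h.exists_deleted (hCI hv) hvz (fun h' => huC (h' ▸ hv)) hvT
        refine ⟨L, hL, fun b hb hbL => ?_, ?_, fun p hp p' hp' =>
          hLT p (h.mem_of_adj_y hp) p' (h.mem_of_adj_y hp')⟩
        · rcases hCN v hv b hb with h' | h' | h' | h'
          · exact Or.inl h'
          · exact Or.inr (Or.inl h')
          · exact absurd h' (hLN b hb hbL).2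
          · exact Or.inr (Or.inr h')
        · rintro _ rfl _ rfl - - - -
          rfl
    · intro A hA hne r hcl hP hQ
      refine h.not_nbrSub_of_not_subset (p := r) (q := u) (hA.trans hCI) hne (hCne A hA) ?_
      intro a ha b hab
      rcases hCN a (hA ha) b hab with h' | rfl | h' | h'
      · rcases hcl a ha b h' hab with h' | h'
        · exact Or.inl h'
        · exact Or.inr (Or.inl h')
      · exact absurd hab (hP a ha b rfl)
      · exact Or.inr (Or.inr h')
      · exact absurd hab (hQ a ha b h')
    · intro A hA hne hcl hP
      refine comp_diff_closed (G := G) (U := (I ∪ {x}) \ insert u (G.neighborSet y)) (v := x)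
        (A := A) hA ?_ hcl fun a ha => hP a ha x rfl
      by_contra hA0
      rw [Set.not_nonempty_iff_eq_empty] at hA0
      exact hne (hA0 ▸ Set.empty_subset _)
    · intro A hA hne hcl hQ
      refine h.not_nbrSub_of_not_subset (p := x) (q := u) (hA.trans hCI) hne (hCne A hA) ?_
      intro a ha b hab
      rcases hCN a (hA ha) b hab with h' | h' | h' | h'
      · exact Or.inl (hcl a ha b h' hab)
      · exact Or.inr (Or.inl h')
      · exact Or.inr (Or.inr h')
      · exact absurd hab (hQ a ha b h')
  have hgood := (solved_two (V := V) _).conn_dangling (Or.inl rfl) hr (Nat.lt_succ_self _) (by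
    rintro - hzC v hv hvz hCv hvz' ⟨p, hp, hvx⟩ ⟨q, hq, hvq⟩
    replace hvx : G.Adj v x := hp ▸ hvx
    obtain ⟨d, hvd, hd⟩ := exists_nbr_notMem (S := {z, x, q})
      (ncard_triple_le.trans_lt (h.deg v (hCI hv) hvz))
    rcases hCN v hv d hvd with h' | h' | rfl | h'
    · rcases hCv h' with h' | h'
      · exact hd (Or.inl h')
      · exact hvd.ne h'.symm
    · exact hd (Or.inr (Or.inl h'))
    · exact hu v hv q hq hvq hvd.symm
    · exact hd (Or.inr (Or.inr (h.unique_of_adj_x (by rintro rfl; exact huC hv) hvx.symm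
        (h.mem_of_adj_y h') (h.mem_of_adj_y hq) hvd hvq))))
  refine h.bad (hgood.two_to_three (c := 2 + 1) fun m hm => ?_)
  obtain ⟨p, rfl, q, hq, hpq⟩ := hm.path (fun p hp => hp ▸ hxC) (fun q hq hqC => hyC q hqC hq)
    (by rintro p rfl hp; exact h.not_adj (hp : G.Adj y p).symm)
  obtain ⟨b, hb, hbq⟩ := h.symm.exists_adj_x_ne q
  rw [Set.insert_comm] at hpq
  have := hpq.symm.fan hq (h.u_adj (h.mem_of_adj_y hq)) (h.u_adj (h.mem_of_adj_y hb)) hb hbq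
    h.ne.symm h.u_ne_x (by rintro rfl; exact h.not_adj hb.symm) h.u_ne_y hy huC
    (fun hbC => hyC b hbC hb)
  exact ⟨this.1.symm, this.2.symm⟩

lemma Hub.adj_y (h : Hub G I x y z u T) (ht : t ∈ T) : G.Adj y t :=
  (h.adj_y_of_adj_x (h.x_adj ht)).resolve_left (by rintro rfl; exact h.u_notMem_T ht)

lemma Hub.eq_of_adj (h : Hub G I x y z u T) (hw : w ∈ I) (hwu : w ≠ u) (ha : a ∈ T) (hb : b ∈ T)
    (hc : c ∈ T) (hac : a ≠ c) (hbc : b ≠ c) (hwa : G.Adj w a) (hwb : G.Adj w b) : a = b := by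
  by_contra hab
  have hwx := h.ne_x hw
  have hwT : ∀ t ∈ T, w ≠ t := by
    rintro _ ht rfl
    exact h.not_adj_of_adj_u (h.u_adj ht) hwx ha hwa
  have hxy := h.ne
  have hux := h.u_ne_x
  have huy := h.u_ne_y
  have hwy := h.ne_y hw
  have hwc := hwT c hc
  have hxa := h.x_adj ha
  have hxb := h.x_adj hb
  have hxc := h.x_adj hc
  have hua := h.u_adj ha
  have hub := h.u_adj hb
  have huc := h.u_adj hc
  have hay := (h.adj_y ha).symm
  have hby := (h.adj_y hb).ne
  have hcy := (h.adj_y hc).ne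
  have h1 := (PathIn.nil (G := G) (S := {y}) rfl).cons hay hay.ne
  have h2 := ((h1.cons hua (by grind [SimpleGraph.Adj.ne])).cons hub.symm
    (by grind [SimpleGraph.Adj.ne])).cons hxb (by grind [SimpleGraph.Adj.ne])
  have h3 := ((((h1.cons hwa (by grind [SimpleGraph.Adj.ne])).cons hwb.symm
    (by grind [SimpleGraph.Adj.ne])).cons hub (by grind [SimpleGraph.Adj.ne])).cons huc.symm
    (by grind [SimpleGraph.Adj.ne])).cons hxc (by
    simp only [Set.mem_insert_iff, Set.mem_singleton_iff, not_or]
    exact ⟨hxc.ne, hux.symm, hxb.ne, hwx.symm, hxa.ne, hxy⟩)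
  exact h.false_of_three h3 h2 (h1.cons hxa (by grind [SimpleGraph.Adj.ne])) (by omega)

end HubNeighbors

section HubPair

variable [Finite V] {G : SimpleGraph V} {I A C T Y : Set V}
  {a b c d e t u v w x y z p q r : V} {k m n N : ℕ}

lemma Hub.mem_of_adj_of_notMem (h : Hub G I x y z u T) (hvu : v ≠ u) (hvT : v ∉ T)
    (hb : G.Adj v b) : b ∈ I := by
  rcases h.mem_of_adj hb with h' | rfl | rfl
  · exact h'
  · exact absurd ((h.adj_y_of_adj_x hb.symm).resolve_left hvu) fun h' => hvT (h.mem_of_adj_y h')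
  · exact absurd (h.mem_of_adj_y hb.symm) hvT

lemma Hub.exists_nbr (h : Hub G I x y z u T) (ha : a ∈ T) (haz : a ≠ z) :
    ∃ d ∈ I, G.Adj a d ∧ d ≠ u ∧ d ∉ T := by
  obtain ⟨d, had, hd⟩ := exists_nbr_notMem (S := {x, y, u})
    (ncard_triple_le.trans_lt (h.deg a (h.subset ha) haz))
  simp only [Set.mem_insert_iff, Set.mem_singleton_iff, not_or] at hd
  refine ⟨d, ?_, had, hd.2.2, fun hdT =>
    h.not_adj_of_adj_u (h.u_adj hdT) hd.1 ha had.symm⟩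
  rcases h.mem_of_adj had with h' | h' | h'
  · exact h'
  · exact absurd h' hd.1
  · exact absurd h' hd.2.1

lemma Hub.exists_eq_pair (h : Hub G I x y z u T) : ∃ a b, a ≠ b ∧ T = {a, b} := by
  by_contra! hT
  have hT3 : ∀ a ∈ T, ∀ b ∈ T, a ≠ b → ∃ c ∈ T, a ≠ c ∧ b ≠ c := by
    intro a ha b hb hab
    by_contra! hc
    refine hT a b hab (Set.Subset.antisymm (fun c hcT => ?_) ?_)
    · by_cases hac : a = c
      · exact Or.inl hac.symm
      · exact Or.inr (hc c hcT hac).symm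
    · rintro c (rfl | rfl)
      · exact ha
      · exact hb
  have huniq : ∀ w ∈ I, w ≠ u → ∀ a ∈ T, ∀ b ∈ T, G.Adj w a → G.Adj w b → a = b := by
    intro w hw hwu a ha b hb hwa hwb
    by_contra hab
    obtain ⟨c, hc, hac, hbc⟩ := hT3 a ha b hb hab
    exact hab (h.eq_of_adj hw hwu ha hb hc hac hbc hwa hwb)
  obtain ⟨a, haT, haz⟩ := h.exists_ne_mem z
  obtain ⟨d, hdI, had, hdu, hdT⟩ := h.exists_nbr haT haz
  set C := comp G (I \ insert u T) d with hC
  have hCI : C ⊆ I \ insert u T := comp_subset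
  have hdC : d ∈ C := mem_comp_self ⟨hdI, fun h' => h'.elim hdu hdT⟩
  have hxC : x ∉ C := fun h' => h.x_notMem (hCI h').1
  have hyC : y ∉ C := fun h' => h.y_notMem (hCI h').1
  have huC : u ∉ C := fun h' => (hCI h').2 (Or.inl rfl)
  have hTC : ∀ t ∈ T, t ∉ C := fun t ht h' => (hCI h').2 (Or.inr ht)
  have hCu : ∀ v ∈ C, v ≠ u := fun v hv h' => huC (h' ▸ hv)
  have hCne : ∀ A ⊆ C, A ≠ I := by
    rintro A hA rfl
    exact huC (hA h.u_mem)
  have hCN : ∀ v ∈ C, ∀ b, G.Adj v b → b ∈ C ∨ b = u ∨ b ∈ T := by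
    intro v hv b hb
    by_cases hbu : b ∈ insert u T
    · exact Or.inr hbu
    · exact Or.inl (mem_comp_of_adj hv hb ⟨h.mem_of_adj_of_notMem (hCu v hv)
        (fun h' => hTC v h' hv) hb, hbu⟩)
  have hCz : ¬ C ⊆ {z} := by
    intro hCz
    obtain rfl : d = z := hCz hdC
    refine h.cut' (Set.singleton_subset_iff.2 hdI) ⟨d, rfl⟩ a ?_
    rintro _ rfl b hb
    rcases hCN _ hdC b hb with h' | rfl | h'
    · exact Or.inl (hCz h')
    · exact absurd had.symm (h.not_adj_of_adj_u hb.symm (h.ne_x hdI) haT)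
    · exact Or.inr (huniq _ hdI hdu b h' a haT hb had.symm)
  have hr : Rooted 2 {z} (glue G C {a} (T \ {a}) x y) C x y z := by
    refine rooted_glue h.ne hxC hyC ?_ ?_ ?_ ?_ hCz (by omega)
    · intro v hv hvz
      refine ⟨{u}, le_ncard_sdiff_singleton (h.deg v (hCI hv).1 hvz), fun b hb hbu => ?_, ?_,
        fun p hp p' hp' h1 h2 _ _ => huniq v (hCI hv).1 (hCu v hv) p hp.1 p' hp'.1 h1 h2⟩
      · rcases hCN v hv b hb with h' | h' | h'
        · exact Or.inl h'
        · exact absurd h' hbu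
        · by_cases hba : b = a
          · exact Or.inr (Or.inl hba)
          · exact Or.inr (Or.inr ⟨h', hba⟩)
      · rintro _ rfl _ rfl - - - -
        rfl
    · intro A hA hne r hcl hP hQ
      refine h.not_nbrSub_of_not_subset (p := r) (q := u) (hA.trans fun v hv => (hCI hv).1) hne
        (hCne A hA) ?_
      intro v hv b hvb
      rcases hCN v (hA hv) b hvb with h' | h' | h'
      · rcases hcl v hv b h' hvb with h' | h'
        · exact Or.inl h'
        · exact Or.inr (Or.inl h')
      · exact Or.inr (Or.inr h')
      · by_cases hba : b = a
        · exact absurd hvb (hP v hv b hba)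
        · exact absurd hvb (hQ v hv b ⟨h', hba⟩)
    · intro A hA hne hcl hP
      have hA0 : A.Nonempty := by
        by_contra hA0
        rw [Set.not_nonempty_iff_eq_empty] at hA0
        exact hne (hA0 ▸ Set.empty_subset _)
      exact hP d (comp_subset_of_closed hA hA0 hcl hdC) a rfl had.symm
    · intro A hA hne hcl hQ
      refine h.not_nbrSub_of_not_subset (p := a) (q := u) (hA.trans fun v hv => (hCI hv).1) hne
        (hCne A hA) ?_
      intro v hv b hvb
      rcases hCN v (hA hv) b hvb with h' | h' | h'
      · exact Or.inl (hcl v hv b h' hvb)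
      · exact Or.inr (Or.inr h')
      · by_cases hba : b = a
        · exact Or.inr (Or.inl hba)
        · exact absurd hvb (hQ v hv b ⟨h', hba⟩)
  have hgood := (solved_two (V := V) _).conn_dangling (Or.inl rfl) hr (Nat.lt_succ_self _) (by
    rintro - - v hv - - - ⟨p, hp, hvp⟩ ⟨q, hq, hvq⟩
    rw [Set.mem_singleton_iff] at hp
    subst hp
    exact hq.2 (huniq v (hCI hv).1 (hCu v hv) q hq.1 p haT hvq hvp))
  refine h.bad (hgood.two_to_three (c := 2 + 1 + 1) fun m hm => ?_)
  obtain ⟨p, hp, q, ⟨hqT, hqa⟩, hpq⟩ := hm.path (fun p hp => hp ▸ hTC a haT)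
    (fun q hq => hTC q hq.1) fun p hp hp' => hp'.2 hp
  rw [Set.mem_singleton_iff] at hp
  subst hp
  obtain ⟨c, hcT, hac, hqc⟩ := hT3 p haT q hqT (Ne.symm hqa)
  have hq := h.adj_y hqT
  have hpqy := (hpq.symm.cons hq (by
    rintro (rfl | rfl | h')
    · exact h.y_notMem_T haT
    · exact h.y_notMem_T hqT
    · exact hyC h')).symm
  rw [Set.insert_comm] at hpqy
  refine hpqy.fan (h.x_adj haT) (h.u_adj haT) (h.u_adj hcT) (h.x_adj hcT) hac.symm h.ne h.u_ne_y
    (by rintro rfl; exact h.y_notMem_T hcT) h.u_ne_x ?_ ?_ ?_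
  · rintro (rfl | h')
    · exact h.x_notMem_T hqT
    · exact hxC h'
  · rintro (rfl | h')
    · exact h.u_notMem_T hqT
    · exact huC h'
  · rintro (rfl | h')
    · exact hqc rfl
    · exact hTC c hcT h'

lemma Hub.false_of_pair (h : Hub G I x y z u T) (hab : a ≠ b) (hT : T = {a, b})
    (he : ∀ v ∈ I \ T, v ≠ e → ¬ G.Adj x v ∧ v ≠ z) : False := by
  have haT : a ∈ T := hT ▸ Or.inl rfl
  have hbT : b ∈ T := hT ▸ Or.inr rfl
  have hCN : ∀ v ∈ I \ T, ∀ c, G.Adj v c → c ∈ I \ T ∨ c = x ∨ c = a ∨ c = b := by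
    intro v hv c hc
    by_cases hcT : c ∈ T
    · subst hT
      exact Or.inr (Or.inr hcT)
    rcases h.mem_of_adj hc with h' | h' | rfl
    · exact Or.inl ⟨h', hcT⟩
    · exact Or.inr (Or.inl h')
    · exact absurd (h.mem_of_adj_y hc.symm) hv.2
  have huC : u ∈ I \ T := ⟨h.u_mem, h.u_notMem_T⟩
  have hr : Rooted 3 ∅ (glue G (I \ T) {a} {b} x y) (I \ T) x y e := by
    refine h.glue_pair Set.sdiff_subset (fun h' => h'.2 haT) (fun h' => h'.2 hbT) hab ?_ ?_ ?_
    · intro v hv hve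
      obtain ⟨hxv, hvz⟩ := he v hv hve
      refine ⟨∅, by simpa using h.deg v hv.1 hvz, fun c hc _ => ?_⟩
      rcases hCN v hv c hc with h' | rfl | h'
      · exact Or.inl h'
      · exact absurd hc.symm hxv
      · exact Or.inr h'
    · intro A hA hne r hcl
      refine h.not_nbrSub (D := A) (hA.trans Set.sdiff_subset) (nonempty_of_not_subset_empty hne) ?_
        r ?_
      · rintro rfl
        exact (hA (h.subset haT)).2 haT
      · intro v hv c hvc
        have := hcl v hv c
        rcases hCN v (hA hv) c hvc with h' | h' | h'
        · exact (this (Or.inl h') hvc).imp_right Or.inr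
        · exact Or.inr (Or.inl h')
        · exact (this (Or.inr h') hvc).imp_right Or.inr
    · intro hC
      obtain ⟨c, hcT, hcz⟩ := h.exists_ne_mem z
      obtain ⟨d, hdI, hcd, hdu, hdT⟩ := h.exists_nbr hcT hcz
      exact hdu ((hC ⟨hdI, hdT⟩).trans (hC huC).symm)
  have hlt : (I \ T).ncard < I.ncard :=
    Set.ncard_lt_ncard ⟨Set.sdiff_subset, fun h' => (h' (h.subset haT)).2 haT⟩
  refine h.bad ((h.ih.conn hr hlt).shift (c := 4) fun m hm => ?_)
  have hp := hm.path_pair (fun h' => h'.2 haT) (fun h' => h'.2 hbT) hab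
  have hpy := (hp.symm.cons (h.adj_y hbT) (by
    rintro (rfl | rfl | h')
    · exact h.y_notMem_T haT
    · exact h.y_notMem_T hbT
    · exact h.y_notMem h'.1)).symm
  refine (hpy.cons (h.x_adj haT) ?_).mono (Set.subset_univ _)
  rintro (rfl | rfl | rfl | h')
  · exact h.ne rfl
  · exact h.x_notMem_T haT
  · exact h.x_notMem_T hbT
  · exact h.x_notMem h'.1

lemma Hub.false_of_pair_of_adj (h : Hub G I x y z u T) (hab : a ≠ b) (hT : T = {a, b})
    (hxu : G.Adj x u) (hzu : z ≠ u) (hzT : z ∉ T) : False := by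
  have haT : a ∈ T := hT ▸ Or.inl rfl
  have hbT : b ∈ T := hT ▸ Or.inr rfl
  set C := I \ insert u T with hC
  have hxC : x ∉ C := fun h' => h.x_notMem h'.1
  have hyC : y ∉ C := fun h' => h.y_notMem h'.1
  have huC : u ∉ C := fun h' => h'.2 (Or.inl rfl)
  have hTC : ∀ t ∈ T, t ∉ C := fun t ht h' => h'.2 (Or.inr ht)
  have hCne : ∀ A ⊆ C, A ≠ I := by
    rintro A hA rfl
    exact huC (hA h.u_mem)
  have hCN : ∀ v ∈ C, ∀ c, G.Adj v c → c ∈ C ∨ c = u ∨ c = a ∨ c = b := by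
    intro v hv c hc
    by_cases hcT : c ∈ insert u T
    · subst hT
      exact Or.inr hcT
    · exact Or.inl ⟨h.mem_of_adj_of_notMem (fun h' => huC (h' ▸ hv)) (fun h' => hTC v h' hv) hc, hcT⟩
  have hr : Rooted 3 ∅ (glue G C {a, u} {b} x y) C x y z := by
    refine rooted_glue h.ne hxC hyC ?_ ?_ ?_ ?_ ?_ ?_
    · intro v hv hvz
      have hau : G.Adj v a → ¬ G.Adj v u := fun hva hvu =>
        h.not_adj_of_adj_u hvu.symm (fun h' => hxC (h' ▸ hv)) haT hva
      refine ⟨∅, by simpa using h.deg v hv.1 hvz, fun c hc _ => ?_, ?_, ?_⟩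
      · rcases hCN v hv c hc with h' | h' | h' | h'
        · exact Or.inl h'
        · exact Or.inr (Or.inl (Or.inr h'))
        · exact Or.inr (Or.inl (Or.inl h'))
        · exact Or.inr (Or.inr h')
      · rintro p (rfl | rfl) p' (rfl | rfl) h1 h2 - -
        · rfl
        · exact absurd h2 (hau h1)
        · exact absurd h1 (hau h2)
        · rfl
      · rintro _ rfl _ rfl - - - -
        rfl
    · intro A hA hne r hcl hP hQ
      refine h.cut' (p := r) (hA.trans Set.sdiff_subset) (nonempty_of_not_subset_empty hne) ?_
      intro v hv c hvc
      rcases hCN v (hA hv) c hvc with h' | h' | h' | h'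
      · exact hcl v hv c h' hvc
      · exact absurd hvc (hP v hv c (Or.inr h'))
      · exact absurd hvc (hP v hv c (Or.inl h'))
      · exact absurd hvc (hQ v hv c h')
    · intro A hA hne hcl hP
      refine h.cut' (p := b) (hA.trans Set.sdiff_subset) (nonempty_of_not_subset_empty hne) ?_
      intro v hv c hvc
      rcases hCN v (hA hv) c hvc with h' | h' | h' | h'
      · exact Or.inl (hcl v hv c h' hvc)
      · exact absurd hvc (hP v hv c (Or.inr h'))
      · exact absurd hvc (hP v hv c (Or.inl h'))
      · exact Or.inr h'
    · intro A hA hne hcl hQ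
      have hAN : NbrSub G A {a, u} := by
        intro v hv c hvc
        rcases hCN v (hA hv) c hvc with h' | h' | h' | h'
        · exact Or.inl (hcl v hv c h' hvc)
        · exact Or.inr (Or.inr h')
        · exact Or.inr (Or.inl h')
        · exact absurd hvc (hQ v hv c h')
      by_cases hAz : A ⊆ {z}
      · obtain ⟨v, hv⟩ := nonempty_of_not_subset_empty hne
        have key : ∃ p, NbrSub G A {p} := by
          by_cases huv : G.Adj u v
          · refine ⟨u, fun v' hv' c hc => ?_⟩
            obtain rfl : v' = v := (hAz hv').trans (hAz hv).symm
            rcases hAN v' hv' c hc with h' | rfl | h'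
            · exact Or.inl h'
            · exact absurd hc (h.not_adj_of_adj_u huv (fun h' => hxC (h' ▸ hA hv)) haT)
            · exact Or.inr h'
          · refine ⟨a, fun v' hv' c hc => ?_⟩
            obtain rfl : v' = v := (hAz hv').trans (hAz hv).symm
            rcases hAN v' hv' c hc with h' | h' | rfl
            · exact Or.inl h'
            · exact Or.inr h'
            · exact absurd hc.symm huv
        obtain ⟨p, hp⟩ := key
        exact h.cut' (hA.trans Set.sdiff_subset) ⟨v, hv⟩ p hp
      · exact h.not_nbrSub_of_not_subset (hA.trans Set.sdiff_subset) hAz (hCne A hA) hAN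
    · intro hCz
      obtain ⟨d, hdI, had, hdu, hdT⟩ := h.exists_nbr haT (fun h' => hzT (h' ▸ haT))
      obtain ⟨c, huc, hc⟩ := exists_nbr_notMem (S := {x, a, b})
        (ncard_triple_le.trans_lt (h.deg u h.u_mem hzu.symm))
      simp only [Set.mem_insert_iff, Set.mem_singleton_iff, not_or] at hc
      have hcC : c ∈ C := by
        refine ⟨?_, ?_⟩
        · rcases h.mem_of_adj huc with h' | h' | rfl
          · exact h'
          · exact absurd h' hc.1
          · exact absurd huc.symm h.not_adj_u_y
        · subst hT
          rintro (h' | h' | h')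
          · exact huc.ne h'.symm
          · exact hc.2.1 h'
          · exact hc.2.2 h'
      obtain rfl : d = c := (hCz ⟨hdI, fun h' => h'.elim hdu hdT⟩).trans (hCz hcC).symm
      exact h.not_adj_of_adj_u huc hc.1 haT had.symm
    · refine fun _ => Or.inl ⟨b, rfl, fun v hv v' hv' v'' hv'' h1 h2 h3 => ?_⟩
      have hx : ∀ v ∈ insert b C, v ≠ x := by
        rintro v (rfl | hv) rfl
        · exact h.x_notMem_T hbT
        · exact hxC hv
      exact h.triangle v v' v'' (hx v hv) (hx v' hv') (hx v'' hv'') h1 h2 h3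
  have hlt : C.ncard < I.ncard :=
    Set.ncard_lt_ncard ⟨Set.sdiff_subset, fun h' => (h' (h.subset haT)).2 (Or.inr haT)⟩
  refine h.bad ((h.ih.conn hr hlt).shift (c := 4) fun m hm => ?_)
  obtain ⟨p, hp, q, hq, hpq⟩ := hm.path (by
    rintro p (rfl | rfl)
    · exact hTC _ haT
    · exact huC) (fun q hq => hq ▸ hTC b hbT) (by
    rintro p (rfl | rfl) h'
    · exact hab h'
    · exact h.u_notMem_T (h' ▸ hbT))
  rw [Set.mem_singleton_iff] at hq
  subst hq
  have hpI : p ∈ I ∧ G.Adj x p := by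
    rcases hp with rfl | rfl
    · exact ⟨h.subset haT, h.x_adj haT⟩
    · exact ⟨h.u_mem, hxu⟩
  have hpy := (hpq.symm.cons (h.adj_y hbT) (by
    rintro (rfl | rfl | h')
    · exact h.y_notMem hpI.1
    · exact h.y_notMem_T hbT
    · exact hyC h')).symm
  refine (hpy.cons hpI.2 ?_).mono (Set.subset_univ _)
  rintro (rfl | rfl | rfl | h')
  · exact h.ne rfl
  · exact h.x_notMem hpI.1
  · exact h.x_notMem_T hbT
  · exact hxC h'

lemma Hub.false (h : Hub G I x y z u T) : False := by
  obtain ⟨a, b, hab, hT⟩ := h.exists_eq_pair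
  have hxN : ∀ v ∈ I \ T, G.Adj x v → v = u := fun v hv hxv =>
    (h.adj_y_of_adj_x hxv).resolve_right fun h' => hv.2 (h.mem_of_adj_y h')
  by_cases hz : z = u ∨ z ∈ T
  · refine h.false_of_pair (e := u) hab hT (fun v hv hvu => ⟨fun h' => hvu (hxN v hv h'), ?_⟩)
    rintro rfl
    exact hz.elim hvu hv.2
  rw [not_or] at hz
  by_cases hxu : G.Adj x u
  · exact h.false_of_pair_of_adj hab hT hxu hz.1 hz.2
  · refine h.false_of_pair (e := z) hab hT (fun v hv hvz => ⟨fun h' => ?_, hvz⟩)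
    exact hxu (hxN v hv h' ▸ h')

end HubPair

section ThreePathsExist

variable [Finite V] {G : SimpleGraph V} {I : Set V} {x y z : V}

lemma Crit.exists_hub (h : Crit 3 G I x y z) (htf : TF G x) : ∃ u T, Hub G I x y z u T := by
  obtain ⟨u, hu, a, b, hab, hxa, hxb, hua, hub⟩ :
      ∃ u ∈ I, ∃ a b, a ≠ b ∧ G.Adj x a ∧ G.Adj x b ∧ G.Adj u a ∧ G.Adj u b := by
    by_cases hd : ∀ a ∈ I, a ≠ z → G.Adj x a → G.Adj a y → ∃ d ∈ I, ¬ G.Adj x d ∧ G.Adj a d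
    · exact h.exists_two_common_nbrs (fun _ => htf) hd
    push Not at hd
    obtain ⟨a, ha, haz, -, -, hN⟩ := hd
    have hxN : ∀ d, G.Adj a d → d ≠ x → d ≠ y → G.Adj x d := by
      intro d had hdx hdy
      by_contra hxd
      exact hN d ((h.mem_of_adj had).resolve_right (by tauto)) hxd had
    have hdeg := h.deg a ha haz
    obtain ⟨b, hab, hb⟩ := exists_nbr_notMem (G := G) (v := a) (S := {x, y})
      (ncard_pair_le.trans_lt (by omega))
    obtain ⟨c, hac, hc⟩ := exists_nbr_notMem (S := {x, y, b}) (ncard_triple_le.trans_lt hdeg)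
    simp only [Set.mem_insert_iff, Set.mem_singleton_iff, not_or] at hb hc
    exact ⟨a, ha, b, c, Ne.symm hc.2.2, hxN b hab hb.1 hb.2, hxN c hac hc.1 hc.2.1, hab, hac⟩
  exact ⟨u, {t | G.Adj x t ∧ G.Adj u t}, h, htf, hu, fun _ => Iff.rfl, a, ⟨hxa, hua⟩, b,
    ⟨hxb, hub⟩, hab⟩

theorem solved_three (N : ℕ) : Solved V 3 N := by
  induction N with
  | zero => exact fun G I x y z _ h => absurd h (Nat.not_lt_zero _)
  | succ N ih =>
    intro G I x y z hr hN
    by_contra hbad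
    have h : Crit 3 G I x y z :=
      ⟨hr, Or.inr rfl, fun G' I' x' y' z' hr' hN' => ih G' I' x' y' z' hr' (by omega), hbad⟩
    rcases h.tf rfl with htf | htf
    · obtain ⟨u, T, hT⟩ := h.exists_hub htf
      exact hT.false
    · obtain ⟨u, T, hT⟩ := h.symm.exists_hub htf
      exact hT.false

end ThreePathsExist
end GoodPaths

/-- Lemma 5: if `G + xy` is 2-connected, every vertex other than `x, y` has degree at
least 4, and `G - x` is triangle-free, then `G` contains three good `(x,y)`-paths. -/
theorem three_good_paths {V : Type*} [Fintype V] (G : SimpleGraph V) (x y : V) (hxy : x ≠ y)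
    (h2 : KConnected (AddEdge G x y) 2)
    (hdeg : ∀ v, v ≠ x → v ≠ y → 4 ≤ (G.neighborSet v).ncard)
    (htf : (G.induce {v | v ≠ x}).CliqueFree 3) :
    ∃ (P1 P2 P3 : G.Walk x y), P1.IsPath ∧ P2.IsPath ∧ P3.IsPath ∧
      GoodTriple P1.length P2.length P3.length := by
  classical
  set H := G.deleteEdges {s(x, y)} with hH
  have hle : ∀ u v, H.Adj u v → G.Adj u v := fun u v h => (SimpleGraph.deleteEdges_adj.1 h).1
  have hadj : ∀ u v, u ≠ x → u ≠ y → G.Adj u v → H.Adj u v := by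
    intro u v hux huy huv
    rw [hH, SimpleGraph.deleteEdges_adj, Set.mem_singleton_iff, Sym2.eq_iff]
    tauto
  have hHxy : ¬ H.Adj x y := by simp [hH]
  have hdegH : ∀ v, v ≠ x → v ≠ y → 4 ≤ (H.neighborSet v).ncard := by
    intro v hvx hvy
    convert hdeg v hvx hvy using 2
    ext w
    exact ⟨hle v w, hadj v w hvx hvy⟩
  have hr : GoodPaths.Rooted 3 ∅ H {v | v ≠ x ∧ v ≠ y} x y x := by
    refine ⟨hxy, fun h => h.1 rfl, fun h => h.2 rfl, fun {a b} _ => ?_, hHxy, ?_,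
      fun v hv _ => hdegH v hv.1 hv.2, ?_, fun _ => Or.inl ?_⟩
    · by_cases hax : a = x
      · exact Or.inr (Or.inl hax)
      by_cases hay : a = y
      · exact Or.inr (Or.inr hay)
      · exact Or.inl ⟨hax, hay⟩
    · intro A hA hne p hN
      obtain ⟨a, haA⟩ := GoodPaths.nonempty_of_not_subset_empty hne
      obtain ⟨b, hbA, hbp⟩ : ∃ b ∈ A, b ≠ p := by
        by_cases hap : a = p
        · obtain ⟨b, hb, hba⟩ := GoodPaths.exists_nbr_notMem (S := {p})
            ((Set.ncard_singleton p).trans_lt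
              (lt_of_lt_of_le (by omega) (hdegH a (hA haA).1 (hA haA).2)))
          exact ⟨b, (hN a haA b hb).resolve_right hba, hba⟩
        · exact ⟨a, haA, hap⟩
      obtain ⟨t, htA, htp⟩ : ∃ t, t ∉ A ∧ t ≠ p := by
        by_cases hxp : x = p
        · exact ⟨y, fun h => (hA h).2 rfl, fun h => hxy (hxp.trans h.symm)⟩
        · exact ⟨x, fun h => (hA h).1 rfl, hxp⟩
      have hconn := h2.2 {p} (Set.finite_singleton p) (by simp)
      obtain ⟨W⟩ := hconn.preconnected ⟨b, hbp⟩ ⟨t, htp⟩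
      obtain ⟨d, -, hd1, hd2⟩ := W.exists_boundary_dart {v | (v : V) ∈ A} hbA htA
      have hd1A := hA hd1
      have hd : (AddEdge G x y).Adj d.fst d.snd := d.adj
      have hdG : G.Adj d.fst d.snd := by
        rcases hd with h' | h'
        · exact h'
        · rw [SimpleGraph.fromEdgeSet_adj, Set.mem_singleton_iff, Sym2.eq_iff] at h'
          rcases h'.1 with h' | h'
          · exact absurd h'.1 hd1A.1
          · exact absurd h'.1 hd1A.2
      rcases hN _ hd1 _ (hadj _ _ hd1A.1 hd1A.2 hdG) with h' | h'
      · exact hd2 h'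
      · exact d.snd.2 h'
    · intro h
      have huniv : (Set.univ : Set V) ⊆ {x, y} := by
        intro v _
        by_cases hvx : v = x
        · exact Or.inl hvx
        · exact Or.inr (by_contra fun hvy => hvx (h ⟨hvx, hvy⟩))
      have := Set.ncard_le_ncard huniv
      rw [Set.ncard_univ] at this
      exact absurd h2.1 (not_lt.2 (this.trans GoodPaths.ncard_pair_le))
    · intro a b c ha hb hc hab hbc hac
      refine htf {⟨a, ha⟩, ⟨b, hb⟩, ⟨c, hc⟩} (SimpleGraph.is3Clique_triple_iff.2 ⟨?_, ?_, ?_⟩)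
      · exact hle _ _ hab
      · exact hle _ _ hac
      · exact hle _ _ hbc
  obtain ⟨l1, l2, l3, h1, h2, h3, hl⟩ :=
    (GoodPaths.solved_three _ H _ x y x hr (Nat.lt_succ_self _)).2 rfl
  have hl3 : 2 ≤ l3 := by
    obtain ⟨P, -, rfl, -⟩ := h3
    by_contra hP
    have hcases : P.length = 0 ∨ P.length = 1 := by omega
    rcases hcases with hP | hP
    · exact hxy (SimpleGraph.Walk.eq_of_length_eq_zero hP)
    · exact hHxy (SimpleGraph.Walk.adj_of_length_eq_one hP)
  obtain ⟨P1, hP1, rfl, -⟩ := h1.mono_graph hle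
  obtain ⟨P2, hP2, rfl, -⟩ := h2.mono_graph hle
  obtain ⟨P3, hP3, rfl, -⟩ := h3.mono_graph hle
  exact ⟨P1, P2, P3, hP1, hP2, hP3, hl3, by omega, by omega, hl⟩
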